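/- Let n ≥ 1 be an integer, α ∈ (0,n), β > 0, A > 0 and m > 0. Then there exists a measurable set E ⊆ ℝⁿ with Lebesgue measure |E| = m such that E_{α,β,A}(E) ≤ E_{α,β,A}(F) for every measurable set F ⊆ ℝⁿ with |F| = m; i.e. the variational problem inf{E_{α,β,A}(E) : |E| = m} admits a minimizer for every mass m > 0. -/

import Mathlib

open MeasureTheory Metric Filter ENNReal

noncomputable section

/-- The Lebesgue density of `E` at `x` equals `d`. -/
def HasDensity {n : ℕ} (E : Set (EuclideanSpace ℝ (Fin n)))
    (x : EuclideanSpace ℝ (Fin n)) (d : ℝ) : Prop :=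
  Filter.Tendsto
    (fun r : ℝ => (volume (E ∩ Metric.ball x r)).toReal / (volume (Metric.ball x r)).toReal)
    (nhdsWithin 0 (Set.Ioi 0)) (nhds d)

/-- The essential boundary of `E`: points where `E` has neither density 0 nor density 1. -/
def essBoundary {n : ℕ} (E : Set (EuclideanSpace ℝ (Fin n))) :
    Set (EuclideanSpace ℝ (Fin n)) :=
  {x | ¬ HasDensity E x 0 ∧ ¬ HasDensity E x 1}

/-- The perimeter of `E`: the `(n-1)`-dimensional Hausdorff measure of the essential
boundary of `E`. -/
def perimeter {n : ℕ} (E : Set (EuclideanSpace ℝ (Fin n))) : ℝ≥0∞ :=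
  μH[(n : ℝ) - 1] (essBoundary E)

/-- The Riesz energy `V_α(E) = ∫_{E×E} |x-y|^(α-n) dx dy`. -/
def rieszEnergy {n : ℕ} (α : ℝ) (E : Set (EuclideanSpace ℝ (Fin n))) : ℝ≥0∞ :=
  ∫⁻ x in E, ∫⁻ y in E, ENNReal.ofReal (‖x - y‖ ^ (α - (n : ℝ)))

/-- The potential energy `U_{β,A}(E) = A ∫_E |x|^β dx`. -/
def potEnergy {n : ℕ} (β A : ℝ) (E : Set (EuclideanSpace ℝ (Fin n))) : ℝ≥0∞ :=
  ∫⁻ x in E, ENNReal.ofReal (A * ‖x‖ ^ β)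

/-- The total energy `E_{α,β,A} = P + V_α + U_{β,A}`. -/
def totalEnergy {n : ℕ} (α β A : ℝ) (E : Set (EuclideanSpace ℝ (Fin n))) : ℝ≥0∞ :=
  perimeter E + rieszEnergy α E + potEnergy β A E

/-- `E` is a minimizer of `E_{α,β,A}` at mass `m`. -/
def IsMinimizer {n : ℕ} (α β A m : ℝ) (E : Set (EuclideanSpace ℝ (Fin n))) : Prop :=
  MeasurableSet E ∧ volume E = ENNReal.ofReal m ∧
    ∀ F : Set (EuclideanSpace ℝ (Fin n)), MeasurableSet F → volume F = ENNReal.ofReal m →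
      totalEnergy α β A E ≤ totalEnergy α β A F

/-!
The minimizer is found by the direct method: the perimeter bound gives `L¹_loc` compactness, the
kernel and potential terms pass to the limit by Fatou's lemma, and the coercive potential prevents
mass from escaping to infinity. The real issue is that the perimeter is the Hausdorff measure of the
essential boundary `∂*E`, whose lower semicontinuity has to be obtained without De Giorgi's and
Federer's theorems. The substitute for a BV bound is a family of increment estimates.

*Slicing.* Almost every segment `[x, x + h]` with exactly one endpoint in `E` meets `∂*E`: by Baire,
a line missing `∂*E` would otherwise contain a jump of `E` from density one, uniformly at small
scales, to density zero, and such lines form a null set. Covering `∂*E` by small sets and bounding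
the shadow of each in direction `h` by `κ diam^(n-1)`, one finds
`|K ∩ (E ∆ (E - h))| ≤ κ ‖h‖ μ (K + [0, h])` for `μ = H^(n-1)` restricted to `∂*E`. Such a `μ` is
said to *dominate the increments* of `E`. By Fubini these bounds give compactness, and they survive
vague limits of the boundary measures.

*Lower semicontinuity.* It remains to show `H^(n-1)(∂*F) ≤ μ(ℝⁿ)` for every finite measure `μ`
dominating the increments of `F` with the optimal constant `κ`. Difference quotients give a
Gauss–Green formula for `F` with boundary measure `g μ`. At `H^(n-1)`-almost every point of `∂*F`,
blow-ups of `F` subconverge to a half-space; testing the domination on a box whose face almost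
attains the maximal shadow `κ` shows that arbitrarily small boxes `B` around the point have
`μ(B) ≥ (1 - ε) diam(B)^(n-1)`, and a Vitali covering by such boxes concludes.
-/

open scoped Topology Pointwise symmDiff

/-- Euclidean `n`-space. -/
abbrev Eu (n : ℕ) := EuclideanSpace ℝ (Fin n)

/-! ### Lebesgue density -/

lemma isClosed_setOf_measure_ball_inter_le {X : Type*} [PseudoMetricSpace X] [MeasurableSpace X]
    (μ : Measure X) (A : Set X) (r : ℝ) (c : ℝ≥0∞) : IsClosed {x | μ (ball x r ∩ A) ≤ c} := by
  refine isClosed_of_closure_subset fun x hx => ?_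
  obtain ⟨u, hu, hur, hlim⟩ := exists_seq_strictMono_tendsto r
  have hball : ball x r ∩ A = ⋃ k, ball x (u k) ∩ A := by
    rw [← Set.iUnion_inter]
    congr 1
    ext z
    simp only [Set.mem_iUnion, mem_ball]
    exact ⟨fun hz => (hlim.eventually (lt_mem_nhds hz)).exists,
      fun ⟨k, hk⟩ => hk.trans (hur k)⟩
  have hmono : Monotone fun k => ball x (u k) ∩ A := fun i j hij =>
    Set.inter_subset_inter_left _ (ball_subset_ball (hu.monotone hij))
  rw [Set.mem_ofPred_eq, hball, hmono.measure_iUnion]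
  refine iSup_le fun k => ?_
  obtain ⟨y, hy, hxy⟩ := Metric.mem_closure_iff.1 hx (r - u k) (sub_pos.2 (hur k))
  refine (measure_mono (Set.inter_subset_inter_left _ (ball_subset_ball' ?_))).trans hy
  linarith

section Density

variable {n : ℕ} {E : Set (Eu n)} {x : Eu n}

lemma volume_ball_eq_ofReal_pow_mul (x : Eu n) {r : ℝ} (hr : 0 < r) :
    volume (ball x r) = ENNReal.ofReal (r ^ n) * volume (ball (0 : Eu n) 1) := by
  simpa using Measure.addHaar_ball_of_pos (volume : Measure (Eu n)) x hr

lemma measureReal_ball_pos (x : Eu n) {r : ℝ} (hr : 0 < r) : 0 < volume.real (ball x r) :=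
  ENNReal.toReal_pos (measure_ball_pos _ _ hr).ne' measure_ball_lt_top.ne

lemma measureReal_inter_ball_add_compl (hE : MeasurableSet E) (x : Eu n) (r : ℝ) :
    volume.real (E ∩ ball x r) + volume.real (Eᶜ ∩ ball x r) = volume.real (ball x r) := by
  rw [Set.inter_comm E, Set.inter_comm Eᶜ, ← Set.sdiff_eq]
  exact measureReal_inter_add_sdiff hE measure_ball_lt_top.ne

lemma HasDensity.compl (hE : MeasurableSet E) {d : ℝ} (h : HasDensity E x d) :
    HasDensity Eᶜ x (1 - d) := by
  refine (h.const_sub 1).congr' ?_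
  filter_upwards [self_mem_nhdsWithin] with r hr
  have hpos := measureReal_ball_pos x hr
  have hsplit := measureReal_inter_ball_add_compl hE x r
  simp only [Measure.real] at hpos hsplit
  field_simp
  linarith

lemma hasDensity_compl_iff (hE : MeasurableSet E) {d : ℝ} :
    HasDensity Eᶜ x d ↔ HasDensity E x (1 - d) :=
  ⟨fun h => by simpa using h.compl hE.compl, fun h => by simpa using h.compl hE⟩

lemma closedBall_ae_eq_ball_of_pos (x : Eu n) {r : ℝ} (hr : 0 < r) :
    (closedBall x r : Set (Eu n)) =ᵐ[volume] ball x r := by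
  have hsphere : sphere x r =ᵐ[volume] (∅ : Set (Eu n)) :=
    ae_eq_empty.2 (Measure.addHaar_sphere_of_ne_zero _ _ hr.ne')
  rw [← ball_union_sphere]
  simpa using (ae_eq_refl (ball x r)).union hsphere

lemma ae_hasDensity_indicator (hE : MeasurableSet E) :
    ∀ᵐ x, HasDensity E x (E.indicator 1 x) := by
  filter_upwards [Besicovitch.ae_tendsto_measure_inter_div_of_measurableSet volume hE] with x hx
  have hfin : E.indicator (1 : Eu n → ℝ≥0∞) x ≠ ∞ := by by_cases h : x ∈ E <;> simp [h]
  have hval : (E.indicator (1 : Eu n → ℝ≥0∞) x).toReal = E.indicator 1 x := by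
    by_cases h : x ∈ E <;> simp [h]
  rw [HasDensity, ← hval]
  refine ((ENNReal.tendsto_toReal hfin).comp hx).congr' ?_
  filter_upwards [self_mem_nhdsWithin] with r hr
  have hae := closedBall_ae_eq_ball_of_pos x hr
  rw [Function.comp_apply, ENNReal.toReal_div, measure_congr hae,
    measure_congr ((ae_eq_refl E).inter hae)]

lemma ae_notMem_of_hasDensity_zero (hE : MeasurableSet E) :
    ∀ᵐ x, HasDensity E x 0 → x ∉ E := by
  filter_upwards [ae_hasDensity_indicator hE] with x hx h0 hxE
  rw [Set.indicator_of_mem hxE] at hx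
  exact zero_ne_one (tendsto_nhds_unique h0 hx)

/-- The points around which the complement of `E` occupies at most a fraction `η` of every ball of
radius less than `δ`. -/
def nearFullSet (E : Set (Eu n)) (η δ : ℝ) : Set (Eu n) :=
  {x | ∀ r, 0 < r → r < δ → volume (ball x r ∩ Eᶜ) ≤ ENNReal.ofReal η * volume (ball x r)}

lemma isClosed_nearFullSet (E : Set (Eu n)) (η δ : ℝ) : IsClosed (nearFullSet E η δ) := by
  have hInter : nearFullSet E η δ = ⋂ (r : ℝ) (_ : 0 < r) (_ : r < δ),
      {x | volume (ball x r ∩ Eᶜ) ≤ ENNReal.ofReal η * volume (ball (0 : Eu n) r)} := by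
    ext x
    simp [nearFullSet, Measure.addHaar_ball_center volume x]
  rw [hInter]
  exact isClosed_iInter fun r => isClosed_iInter fun _ => isClosed_iInter fun _ =>
    isClosed_setOf_measure_ball_inter_le _ _ _ _

lemma nearFullSet_anti (E : Set (Eu n)) (η : ℝ) {δ δ' : ℝ} (h : δ' ≤ δ) :
    nearFullSet E η δ ⊆ nearFullSet E η δ' :=
  fun _ hx r h0 h1 => hx r h0 (h1.trans_le h)

lemma HasDensity.exists_mem_nearFullSet (hE : MeasurableSet E) (h : HasDensity E x 1) {η : ℝ}
    (hη : 0 < η) : ∃ k : ℕ, x ∈ nearFullSet E η (1 / ((k : ℝ) + 1)) := by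
  have hcompl : HasDensity Eᶜ x 0 := by simpa using h.compl hE
  have hsmall := hcompl.eventually (gt_mem_nhds hη)
  rw [eventually_nhdsWithin_iff, Metric.eventually_nhds_iff] at hsmall
  obtain ⟨δ, hδ, hsmall⟩ := hsmall
  obtain ⟨k, hk⟩ := exists_nat_one_div_lt hδ
  refine ⟨k, fun r hr0 hr => ?_⟩
  have hratio := hsmall (y := r)
    (by rw [Real.dist_eq, sub_zero, abs_of_pos hr0]; exact hr.trans hk) hr0
  replace hratio := (div_lt_iff₀ (measureReal_ball_pos x hr0)).1 hratio
  have hfin : volume (Eᶜ ∩ ball x r) ≠ ∞ :=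
    measure_ne_top_of_subset Set.inter_subset_right measure_ball_lt_top.ne
  rw [Set.inter_comm, ← ENNReal.ofReal_toReal hfin,
    ← ENNReal.ofReal_toReal (measure_ball_lt_top (μ := volume) (x := x) (r := r)).ne,
    ← ENNReal.ofReal_mul hη.le]
  exact ENNReal.ofReal_le_ofReal hratio.le

lemma not_hasDensity_zero_of_mem_nearFullSet (hE : MeasurableSet E) {η δ : ℝ} (hη : 0 ≤ η)
    (hη1 : η < 1) (hδ : 0 < δ) (h : x ∈ nearFullSet E η δ) : ¬ HasDensity E x 0 := by
  intro h0
  obtain ⟨r, ⟨hratio, hrδ⟩, hr : 0 < r⟩ :=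
    (((h0.eventually (gt_mem_nhds (sub_pos.2 hη1))).and
      (mem_nhdsWithin_of_mem_nhds (gt_mem_nhds hδ))).and self_mem_nhdsWithin).exists
  have hthin : volume.real (Eᶜ ∩ ball x r) ≤ η * volume.real (ball x r) := by
    have := ENNReal.toReal_mono (ENNReal.mul_ne_top ofReal_ne_top measure_ball_lt_top.ne)
      (h r hr hrδ)
    rwa [ENNReal.toReal_mul, ENNReal.toReal_ofReal hη, Set.inter_comm] at this
  have hpos := measureReal_ball_pos x hr
  have hE0 : volume.real (E ∩ ball x r) < (1 - η) * volume.real (ball x r) :=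
    (div_lt_iff₀ hpos).1 hratio
  linarith [measureReal_inter_ball_add_compl hE x r]

end Density

/-! ### Lines through a set -/

section Lines

variable {V : Type*} [NormedAddCommGroup V] [InnerProductSpace ℝ V]

/-- The component of `v` orthogonal to the unit vector `e`. -/
def orthPart (e v : V) : V := v - inner ℝ v e • e

/-- The union of the lines in direction `e` through the points of `A`. -/
def lineHull (e : V) (A : Set V) : Set V := {w | ∃ x ∈ A, ∃ s : ℝ, w = x + s • e}

variable {e : V}

lemma abs_inner_le_norm_of_unit (he : ‖e‖ = 1) (v : V) : |inner ℝ v e| ≤ ‖v‖ := by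
  simpa [he] using abs_real_inner_le_norm v e

lemma inner_add_smul_unit (he : ‖e‖ = 1) (x : V) (s : ℝ) :
    (inner ℝ (x + s • e) e : ℝ) = inner ℝ x e + s := by
  rw [inner_add_left, real_inner_smul_left, real_inner_self_eq_norm_sq, he]
  ring

lemma orthPart_add_smul (he : ‖e‖ = 1) (v : V) (s : ℝ) : orthPart e (v + s • e) = orthPart e v := by
  rw [orthPart, orthPart, inner_add_smul_unit he]
  module

lemma norm_orthPart_le (he : ‖e‖ = 1) (v : V) : ‖orthPart e v‖ ≤ ‖v‖ := by
  have hsq : ‖orthPart e v‖ ^ 2 = ‖v‖ ^ 2 - (inner ℝ v e) ^ 2 := by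
    rw [orthPart, norm_sub_sq_real, inner_smul_right, norm_smul, he, mul_one, Real.norm_eq_abs,
      sq_abs]
    ring
  exact (abs_le_of_sq_le_sq' (by nlinarith [sq_nonneg (inner ℝ v e : ℝ)]) (norm_nonneg v)).2

lemma norm_le_norm_orthPart_add (he : ‖e‖ = 1) (v : V) :
    ‖v‖ ≤ ‖orthPart e v‖ + |inner ℝ v e| := by
  calc ‖v‖ = ‖orthPart e v + (inner ℝ v e : ℝ) • e‖ := by rw [orthPart, sub_add_cancel]
    _ ≤ ‖orthPart e v‖ + ‖(inner ℝ v e : ℝ) • e‖ := norm_add_le _ _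
    _ = ‖orthPart e v‖ + |inner ℝ v e| := by rw [norm_smul, he, mul_one, Real.norm_eq_abs]

lemma add_smul_mem_lineHull_iff {A : Set V} {w : V} (s : ℝ) :
    w + s • e ∈ lineHull e A ↔ w ∈ lineHull e A := by
  constructor
  · rintro ⟨x, hx, t, ht⟩
    exact ⟨x, hx, t - s, by rw [sub_smul, ← add_sub_assoc, ← ht, add_sub_cancel_right]⟩
  · rintro ⟨x, hx, t, rfl⟩
    exact ⟨x, hx, t + s, by rw [add_smul, add_assoc]⟩

/-- Slide a small ball centred on `lineHull e A` along `e` until it sits just above the highest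
point `x` of `A` under it: it then stays close to `x`, and its points on `lineHull e A` lie strictly
above the points of `A` on their lines. -/
lemma exists_closedBall_add_smul_above (he : ‖e‖ = 1) {A : Set V} {a δ ρ : ℝ}
    (hA : ∀ x ∈ A, inner ℝ x e ∈ Set.Ico a (a + δ / 4)) {z : V} (hz : z ∈ lineHull e A)
    (hρ : 0 < ρ) (hρδ : ρ < δ / 8) :
    ∃ x ∈ A, ∃ τ : ℝ, closedBall (z + τ • e) ρ ⊆ ball x (6 * ρ) ∧
      ∀ w ∈ lineHull e A ∩ closedBall (z + τ • e) ρ,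
        ∃ x' ∈ A, ∃ s ∈ Set.Ioo 0 δ, w = x' + s • e := by
  set B := {x ∈ A | ‖orthPart e (x - z)‖ ≤ ρ}
  set S := (fun x => (inner ℝ x e : ℝ)) '' B
  have hSub : ∀ y ∈ S, y ≤ a + δ / 4 := by
    rintro _ ⟨x, hx, rfl⟩
    exact (hA x hx.1).2.le
  have hSne : S.Nonempty := by
    obtain ⟨x, hx, s, rfl⟩ := hz
    have h0 : x - (x + s • e) = 0 + (-s) • e := by module
    refine Set.Nonempty.image _ ⟨x, hx, ?_⟩
    rw [h0, orthPart_add_smul he]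
    simpa [orthPart] using hρ.le
  have hS_le : ∀ x ∈ B, inner ℝ x e ≤ sSup S := fun x hx => le_csSup ⟨_, hSub⟩ ⟨x, hx, rfl⟩
  obtain ⟨_, ⟨x, hx, rfl⟩, hxS⟩ := exists_lt_of_lt_csSup hSne (sub_lt_self (sSup S) hρ)
  set τ := sSup S + 2 * ρ - inner ℝ z e
  have hheight : inner ℝ (z + τ • e) e = sSup S + 2 * ρ := by rw [inner_add_smul_unit he]; ring
  refine ⟨x, hx.1, τ, closedBall_subset_ball' ?_, ?_⟩
  · have hnorm := norm_le_norm_orthPart_add he (x - (z + τ • e))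
    have hsub : x - (z + τ • e) = (x - z) + (-τ) • e := by module
    rw [inner_sub_left, hheight, hsub, orthPart_add_smul he, ← hsub] at hnorm
    have habs : |inner ℝ x e - (sSup S + 2 * ρ)| ≤ 3 * ρ := by
      rw [abs_le]
      constructor <;> linarith [hS_le x hx]
    rw [dist_comm, dist_eq_norm]
    linarith [hx.2]
  · rintro _ ⟨⟨x', hx', s, rfl⟩, hw⟩
    rw [mem_closedBall, dist_eq_norm] at hw
    have hsub : x' + s • e - (z + τ • e) = (x' - z) + (s - τ) • e := by module
    have hx'B : x' ∈ B := by
      have := norm_orthPart_le he (x' + s • e - (z + τ • e))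
      rw [hsub, orthPart_add_smul he, ← hsub] at this
      exact ⟨hx', this.trans hw⟩
    have hdiff := abs_le.1 ((abs_inner_le_norm_of_unit he _).trans hw)
    rw [inner_sub_left, hheight, inner_add_smul_unit he] at hdiff
    have hlow := (hA x' hx').1
    have hsup : sSup S ≤ a + δ / 4 := csSup_le hSne hSub
    exact ⟨x', hx', s, ⟨by linarith [hS_le x' hx'B], by linarith⟩, rfl⟩

end Lines

lemma exists_half_lt_measure_inter_closedBall {X : Type*} [MetricSpace X]
    [SecondCountableTopology X] [HasBesicovitchCovering X] [MeasurableSpace X] [BorelSpace X]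
    [ProperSpace X] {μ : Measure X} [μ.IsOpenPosMeasure] [IsLocallyFiniteMeasure μ] {T : Set X}
    (hT : μ T ≠ 0) {δ : ℝ} (hδ : 0 < δ) :
    ∃ z ∈ T, ∃ ρ ∈ Set.Ioo 0 δ, μ (closedBall z ρ) / 2 < μ (T ∩ closedBall z ρ) := by
  obtain ⟨z, hzT, hz⟩ : ∃ z ∈ T,
      Tendsto (fun r => μ (T ∩ closedBall z r) / μ (closedBall z r)) (𝓝[>] 0) (𝓝 1) := by
    by_contra! hcon
    refine hT (nonpos_iff_eq_zero.1 ?_)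
    rw [← Measure.restrict_apply_self]
    exact (measure_mono fun z hz => hcon z hz).trans_eq
      (ae_iff.1 (Besicovitch.ae_tendsto_measure_inter_div μ T))
  obtain ⟨ρ, ⟨hhalf, hρδ⟩, hρ⟩ := (((hz.eventually (lt_mem_nhds ENNReal.one_half_lt_one)).and
    (mem_nhdsWithin_of_mem_nhds (gt_mem_nhds hδ))).and self_mem_nhdsWithin).exists
  refine ⟨z, hzT, ρ, ⟨hρ, hρδ⟩, ?_⟩
  rwa [ENNReal.lt_div_iff_mul_lt (Or.inl (measure_closedBall_pos _ _ hρ).ne')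
    (Or.inl measure_closedBall_lt_top.ne), ← ENNReal.div_eq_inv_mul] at hhalf

section NullHull

variable {n : ℕ} {E : Set (Eu n)} {e : Eu n}

/-- At a density point of the hull, translating along `e` produces two contradictory facts about
one ball: half of it has density zero in `E`, while `E` nearly fills it. -/
lemma volume_lineHull_eq_zero_of_height_mem_Ico (hE : MeasurableSet E) (he : ‖e‖ = 1) {δ a : ℝ}
    (hδ : 0 < δ) {A : Set (Eu n)} (hfull : A ⊆ nearFullSet E (1 / (2 * 6 ^ n)) δ)
    (habove : ∀ x ∈ A, ∀ s ∈ Set.Ioo 0 δ, HasDensity E (x + s • e) 0)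
    (hheight : ∀ x ∈ A, inner ℝ x e ∈ Set.Ico a (a + δ / 4)) : volume (lineHull e A) = 0 := by
  by_contra hne
  set T := lineHull e A with hT
  obtain ⟨z, hzT, ρ, ⟨hρ, hρδ⟩, hhalf⟩ :=
    exists_half_lt_measure_inter_closedBall hne (show 0 < δ / 8 by positivity)
  obtain ⟨x, hxA, τ, hball, hTabove⟩ :=
    exists_closedBall_add_smul_above he hheight hzT hρ hρδ
  have htranslate : volume (T ∩ closedBall (z + τ • e) ρ) = volume (T ∩ closedBall z ρ) := by
    rw [← measure_preimage_add_right volume (τ • e) (T ∩ closedBall (z + τ • e) ρ)]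
    congr 1
    ext w
    simp only [Set.mem_preimage, Set.mem_inter_iff, hT, add_smul_mem_lineHull_iff, mem_closedBall,
      dist_add_right]
  have houtside : volume (T ∩ closedBall (z + τ • e) ρ) ≤ volume (ball x (6 * ρ) ∩ Eᶜ) := by
    refine measure_mono_ae ?_
    filter_upwards [ae_notMem_of_hasDensity_zero hE] with w hw hwT
    obtain ⟨x', hx', s, hs, rfl⟩ := hTabove w hwT
    exact ⟨hball hwT.2, hw (habove x' hx' s hs)⟩
  have hfull_x := hfull hxA (6 * ρ) (by positivity) (by linarith)
  have hlt := hhalf.trans_le ((htranslate.symm.trans_le houtside).trans hfull_x)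
  have hconst : ENNReal.ofReal (1 / (2 * 6 ^ n) * (6 * ρ) ^ n) = ENNReal.ofReal (ρ ^ n) / 2 := by
    rw [← ENNReal.ofReal_ofNat 2, ← ENNReal.ofReal_div_of_pos (by norm_num), mul_pow]
    congr 1
    field_simp
  rw [measure_congr (closedBall_ae_eq_ball_of_pos z hρ), volume_ball_eq_ofReal_pow_mul z hρ,
    volume_ball_eq_ofReal_pow_mul x (by positivity), ← mul_assoc,
    ← ENNReal.ofReal_mul (by positivity), hconst, ENNReal.mul_div_right_comm] at hlt
  exact lt_irrefl _ hlt

lemma volume_lineHull_eq_zero (hE : MeasurableSet E) (he : ‖e‖ = 1) {δ : ℝ} (hδ : 0 < δ)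
    {A : Set (Eu n)} (hfull : A ⊆ nearFullSet E (1 / (2 * 6 ^ n)) δ)
    (habove : ∀ x ∈ A, ∀ s ∈ Set.Ioo 0 δ, HasDensity E (x + s • e) 0) :
    volume (lineHull e A) = 0 := by
  let strip (j : ℤ) : Set (Eu n) :=
    {x ∈ A | inner ℝ x e ∈ Set.Ico (j * (δ / 4)) (j * (δ / 4) + δ / 4)}
  have hcover : lineHull e A ⊆ ⋃ j, lineHull e (strip j) := by
    rintro w ⟨x, hx, s, rfl⟩
    have hfloor := Int.floor_le (inner ℝ x e / (δ / 4))
    have hlt := Int.lt_floor_add_one (inner ℝ x e / (δ / 4))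
    rw [le_div_iff₀ (by positivity)] at hfloor
    rw [div_lt_iff₀ (by positivity), add_one_mul] at hlt
    exact Set.mem_iUnion.2 ⟨⌊inner ℝ x e / (δ / 4)⌋, x, ⟨hx, hfloor, hlt⟩, s, rfl⟩
  exact measure_mono_null hcover (measure_iUnion_null fun j =>
    volume_lineHull_eq_zero_of_height_mem_Ico hE he hδ (fun x hx => hfull hx.1)
      (fun x hx => habove x hx.1) fun x hx => hx.2)

end NullHull

section Interface

/-- The points of `J` at which both `J ∩ I` and `J ∩ O` accumulate. -/
def interface {X : Type*} [TopologicalSpace X] (J I O : Set X) : Set X :=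
  J ∩ (closure (J ∩ I) ∩ closure (J ∩ O))

lemma interface_comm {X : Type*} [TopologicalSpace X] (J I O : Set X) :
    interface J I O = interface J O I := by
  rw [interface, interface, Set.inter_comm (closure (J ∩ I))]

lemma isClosed_interface {X : Type*} [TopologicalSpace X] {J : Set X} (hJ : IsClosed J)
    (I O : Set X) : IsClosed (interface J I O) :=
  hJ.inter (isClosed_closure.inter isClosed_closure)

lemma inter_interface_nonempty {X : Type*} [TopologicalSpace X] {C J I O : Set X}
    (hC : IsPreconnected C) (hCJ : C ⊆ J) (hcov : J ⊆ I ∪ O) (hCI : (C ∩ I).Nonempty)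
    (hCO : (C ∩ O).Nonempty) : (C ∩ interface J I O).Nonempty := by
  have hsub : ∀ S, C ∩ S ⊆ C ∩ closure (J ∩ S) := fun S y hy =>
    ⟨hy.1, subset_closure ⟨hCJ hy.1, hy.2⟩⟩
  obtain ⟨y, hyC, hy⟩ := isPreconnected_closed_iff.1 hC _ _ isClosed_closure isClosed_closure
    (fun y hy => (hcov (hCJ hy)).imp (fun h => (hsub I ⟨hy, h⟩).2) fun h => (hsub O ⟨hy, h⟩).2)
    (hCI.mono (hsub I)) (hCO.mono (hsub O))
  exact ⟨y, hyC, hCJ hyC, hy⟩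

section Order

variable {α : Type*} [ConditionallyCompleteLinearOrder α] [DenselyOrdered α] [TopologicalSpace α]
  [OrderTopology α] {J I O : Set α} {p q : α}

lemma exists_interface_mem_nhdsGT (hJ : IsClosed J) (hcov : J ⊆ I ∪ O) (hJpq : Set.Icc p q ⊆ J)
    (hpq : p ≤ q) (hp : p ∈ interface J I O) (hq : q ∈ O)
    (hI : ∀ y ∈ interface J I O ∩ Set.Icc p q, y ∉ O) :
    ∃ p' ∈ interface J I O ∩ Set.Icc p q, O ∈ 𝓝[>] p' := by
  obtain ⟨p', hp', hmax⟩ := (isCompact_Icc.inter_left (isClosed_interface hJ I O)).exists_isGreatest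
    ⟨p, hp, le_rfl, hpq⟩
  have hlt : p' < q := lt_of_le_of_ne hp'.2.2 fun h => hI p' hp' (h ▸ hq)
  have hsub : Set.Ioc p' q ⊆ J := fun y hy => hJpq ⟨hp'.2.1.trans hy.1.le, hy.2⟩
  refine ⟨p', hp', mem_of_superset (Ioc_mem_nhdsGT hlt) fun y hy => ?_⟩
  by_contra hyO
  obtain ⟨w, hw, hwint⟩ := inter_interface_nonempty isPreconnected_Ioc hsub hcov
    ⟨y, hy, (hcov (hsub hy)).resolve_right hyO⟩ ⟨q, ⟨hlt, le_rfl⟩, hq⟩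
  exact hw.1.not_ge (hmax ⟨hwint, hp'.2.1.trans hw.1.le, hw.2⟩)

lemma exists_interface_mem_nhdsLT (hJ : IsClosed J) (hcov : J ⊆ I ∪ O) (hJpq : Set.Icc q p ⊆ J)
    (hqp : q ≤ p) (hp : p ∈ interface J I O) (hq : q ∈ O)
    (hI : ∀ y ∈ interface J I O ∩ Set.Icc q p, y ∉ O) :
    ∃ p' ∈ interface J I O ∩ Set.Icc q p, O ∈ 𝓝[<] p' := by
  obtain ⟨p', ⟨hp', h1, h2⟩, hO⟩ := exists_interface_mem_nhdsGT (α := αᵒᵈ) (p := p) (q := q) hJ hcov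
    (fun y hy => hJpq ⟨hy.2, hy.1⟩) hqp hp hq fun y hy => hI y ⟨hy.1, hy.2.2, hy.2.1⟩
  exact ⟨p', ⟨hp', h2, h1⟩, hO⟩

end Order

lemma exists_interface_mem_nhds_side {J I O U : Set ℝ} (hJ : IsClosed J) (hJc : J.OrdConnected)
    (hcov : J ⊆ I ∪ O) (hU : IsOpen U) (hne : (interface J I O ∩ U).Nonempty)
    (hI : ∀ y ∈ interface J I O ∩ U, y ∉ O) :
    ∃ p ∈ interface J I O ∩ U, O ∈ 𝓝[>] p ∨ O ∈ 𝓝[<] p := by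
  obtain ⟨p, hp, hpU⟩ := hne
  obtain ⟨ε, hε, hball⟩ := Metric.isOpen_iff.1 hU p hpU
  obtain ⟨q, ⟨hqJ, hqO⟩, hpq⟩ := Metric.mem_closure_iff.1 hp.2.2 ε hε
  have hUpq : Set.uIcc p q ⊆ U :=
    ((convex_ball p ε).ordConnected.uIcc_subset (mem_ball_self hε) (mem_ball'.2 hpq)).trans hball
  rcases le_total p q with hle | hle
  · rw [Set.uIcc_of_le hle] at hUpq
    obtain ⟨p', hp', hside⟩ := exists_interface_mem_nhdsGT hJ hcov (hJc.out hp.1 hqJ) hle hp hqO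
      fun y hy => hI y ⟨hy.1, hUpq hy.2⟩
    exact ⟨p', ⟨hp'.1, hUpq hp'.2⟩, Or.inl hside⟩
  · rw [Set.uIcc_of_ge hle] at hUpq
    obtain ⟨p', hp', hside⟩ := exists_interface_mem_nhdsLT hJ hcov (hJc.out hqJ hp.1) hle hp hqO
      fun y hy => hI y ⟨hy.1, hUpq hy.2⟩
    exact ⟨p', ⟨hp'.1, hUpq hp'.2⟩, Or.inr hside⟩

/-- By Baire, one closed piece contains a relatively open part of the interface, and an endpoint of
a gap of the interface in that part has the other set on one side. -/
lemma exists_mem_piece_mem_nhds_side {ι : Type*} [Countable ι] {J I O : Set ℝ} {P Q : ι → Set ℝ}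
    (hJ : IsClosed J) (hJc : J.OrdConnected) (hcov : J ⊆ I ∪ O)
    (hP : ∀ i, IsClosed (P i)) (hQ : ∀ i, IsClosed (Q i)) (hIP : I ⊆ ⋃ i, P i) (hOQ : O ⊆ ⋃ i, Q i)
    (hPO : ∀ i, Disjoint (P i) O) (hQI : ∀ i, Disjoint (Q i) I)
    (hI : (J ∩ I).Nonempty) (hO : (J ∩ O).Nonempty) :
    ∃ i p, (p ∈ P i ∧ (O ∈ 𝓝[>] p ∨ O ∈ 𝓝[<] p)) ∨ (p ∈ Q i ∧ (I ∈ 𝓝[>] p ∨ I ∈ 𝓝[<] p)) := by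
  set K := interface J I O with hK
  have hKclosed : IsClosed K := isClosed_interface hJ I O
  obtain ⟨y, -, hy⟩ := inter_interface_nonempty hJc.isPreconnected le_rfl hcov hI hO
  have : CompleteSpace K := hKclosed.completeSpace_coe
  have : Nonempty K := ⟨y, hy⟩
  let piece : ι ⊕ ι → Set K := fun i => Subtype.val ⁻¹' Sum.elim P Q i
  have hclosed : ∀ i, IsClosed (piece i) := by
    rintro (i | i)
    exacts [(hP i).preimage continuous_subtype_val, (hQ i).preimage continuous_subtype_val]
  have hcover : ⋃ i, piece i = Set.univ := by
    refine Set.eq_univ_of_forall fun y => Set.mem_iUnion.2 ?_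
    rcases hcov y.2.1 with h | h
    · exact (Set.mem_iUnion.1 (hIP h)).imp' Sum.inl fun _ => id
    · exact (Set.mem_iUnion.1 (hOQ h)).imp' Sum.inr fun _ => id
  obtain ⟨i, y, hy⟩ := nonempty_interior_of_iUnion_of_closed hclosed hcover
  obtain ⟨V, hV, hVo, hyV⟩ := mem_interior.1 hy
  obtain ⟨U, hU, rfl⟩ := isOpen_induced_iff.1 hVo
  have hpiece : ∀ x ∈ K ∩ U, x ∈ Sum.elim P Q i := fun x hx => @hV ⟨x, hx.1⟩ hx.2
  rcases i with i | i
  · obtain ⟨p, hp, hside⟩ := exists_interface_mem_nhds_side hJ hJc hcov hU ⟨y, y.2, hyV⟩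
      fun x hx => Set.disjoint_left.1 (hPO i) (hpiece x hx)
    exact ⟨i, p, Or.inl ⟨hpiece p hp, hside⟩⟩
  · rw [hK, interface_comm] at hpiece
    obtain ⟨p, hp, hside⟩ := exists_interface_mem_nhds_side (I := O) (O := I) hJ hJc
      (by rwa [Set.union_comm]) hU (by rw [interface_comm]; exact ⟨y, y.2, hyV⟩)
      fun x hx => Set.disjoint_left.1 (hQI i) (hpiece x hx)
    exact ⟨i, p, Or.inr ⟨hpiece p hp, hside⟩⟩

end Interface

/-! ### Slicing: segments that leave `E` meet its essential boundary -/

section Shift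

variable {V : Type*} [NormedAddCommGroup V]

/-- The points whose membership in `E` changes under translation by `h`. -/
def shiftDiff (E : Set V) (h : V) : Set V := E ∆ ((· + h) ⁻¹' E)

/-- The union of the segments from `x` to `x + h` with `x ∈ K`. -/
def sweep [NormedSpace ℝ V] (K : Set V) (h : V) : Set V :=
  {y | ∃ x ∈ K, ∃ s ∈ Set.Icc (0 : ℝ) 1, y = x + s • h}

lemma measurableSet_shiftDiff [MeasurableSpace V] [BorelSpace V] {E : Set V}
    (hE : MeasurableSet E) (h : V) : MeasurableSet (shiftDiff E h) :=
  hE.symmDiff (hE.preimage (measurable_add_const h))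

lemma isCompact_sweep [NormedSpace ℝ V] {K : Set V} (hK : IsCompact K) (h : V) :
    IsCompact (sweep K h) := by
  have himage : sweep K h = (fun p : V × ℝ => p.1 + p.2 • h) '' (K ×ˢ Set.Icc (0 : ℝ) 1) := by
    ext y
    simp [sweep, and_assoc, eq_comm]
  rw [himage]
  exact (hK.prod isCompact_Icc).image (by fun_prop)

lemma exists_unit_eq_norm_smul [NormedSpace ℝ V] {h : V} (hh : h ≠ 0) :
    ∃ e : V, ‖e‖ = 1 ∧ h = ‖h‖ • e :=
  ⟨‖h‖⁻¹ • h, by simp [norm_smul, hh], by simp [smul_smul, hh]⟩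

end Shift

section Slice

variable {n : ℕ} {E : Set (Eu n)} {e : Eu n}

lemma ae_notMem_nhdsGT (hE : MeasurableSet E) (he : ‖e‖ = 1) :
    ∀ᵐ x, ∀ (k : ℕ) (s : ℝ), x + s • e ∈ nearFullSet E (1 / (2 * 6 ^ n)) (1 / ((k : ℝ) + 1)) →
      {s' : ℝ | HasDensity E (x + s' • e) 0} ∉ 𝓝[>] s := by
  let bad (k : ℕ) : Set (Eu n) := {y ∈ nearFullSet E (1 / (2 * 6 ^ n)) (1 / ((k : ℝ) + 1)) |
    ∀ s ∈ Set.Ioo 0 (1 / ((k : ℝ) + 1)), HasDensity E (y + s • e) 0}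
  have hnull : ∀ᵐ x, ∀ k, x ∉ lineHull e (bad k) := ae_all_iff.2 fun k =>
    measure_eq_zero_iff_ae_notMem.1 (volume_lineHull_eq_zero hE he (by positivity)
      (fun y hy => hy.1) fun y hy => hy.2)
  filter_upwards [hnull] with x hx k s hfull hside
  obtain ⟨b, hb, hside⟩ := mem_nhdsGT_iff_exists_Ioo_subset.1 hside
  obtain ⟨k', hk'⟩ := exists_nat_one_div_lt (sub_pos.2 (Set.mem_Ioi.1 hb))
  have hk : 1 / (((max k k' : ℕ) : ℝ) + 1) ≤ 1 / ((k : ℝ) + 1) :=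
    Nat.one_div_le_one_div (le_max_left k k')
  have hδ : 1 / (((max k k' : ℕ) : ℝ) + 1) < b - s :=
    (Nat.one_div_le_one_div (le_max_right k k')).trans_lt hk'
  refine hx (max k k') ⟨x + s • e, ⟨nearFullSet_anti _ _ hk hfull, fun r hr => ?_⟩, -s, by module⟩
  have hmem := hside (show s + r ∈ Set.Ioo s b from ⟨by linarith [hr.1], by linarith [hr.2]⟩)
  simpa only [Set.mem_ofPred_eq, add_smul, add_assoc] using hmem

lemma ae_notMem_nhdsLT (hE : MeasurableSet E) (he : ‖e‖ = 1) :
    ∀ᵐ x, ∀ (k : ℕ) (s : ℝ), x + s • e ∈ nearFullSet E (1 / (2 * 6 ^ n)) (1 / ((k : ℝ) + 1)) →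
      {s' : ℝ | HasDensity E (x + s' • e) 0} ∉ 𝓝[<] s := by
  filter_upwards [ae_notMem_nhdsGT hE (e := -e) (by rwa [norm_neg])] with x hx k s hfull hside
  have hneg : Tendsto Neg.neg (𝓝[>] (-s)) (𝓝[<] s) := by
    simpa using tendsto_neg_nhdsGT (a := -s)
  have hside' : ∀ᶠ s' in 𝓝[>] (-s), HasDensity E (x + -s' • e) 0 := hneg.eventually hside
  refine hx k (-s) (by rwa [neg_smul_neg]) ?_
  filter_upwards [hside'] with s' hs'
  rwa [smul_neg, ← neg_smul]

lemma ae_hasDensity_of_mem_shiftDiff (hE : MeasurableSet E) (h : Eu n) :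
    ∀ᵐ x, x ∈ shiftDiff E h → (HasDensity E x 1 ∧ HasDensity E (x + h) 0) ∨
      (HasDensity E x 0 ∧ HasDensity E (x + h) 1) := by
  have hdens := ae_hasDensity_indicator hE
  have hshift : ∀ᵐ x, HasDensity E (x + h) (E.indicator 1 (x + h)) :=
    (measurePreserving_add_right volume h).quasiMeasurePreserving.ae hdens
  filter_upwards [hdens, hshift] with x h0 h1 hx
  rcases hx with ⟨hxE, hxh⟩ | ⟨hxh, hxE⟩ <;> rw [Set.mem_preimage] at hxh
  · rw [Set.indicator_of_mem hxE] at h0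
    rw [Set.indicator_of_notMem hxh] at h1
    exact Or.inl ⟨h0, h1⟩
  · rw [Set.indicator_of_notMem hxE] at h0
    rw [Set.indicator_of_mem hxh] at h1
    exact Or.inr ⟨h0, h1⟩

lemma ae_exists_mem_essBoundary_of_unit (hE : MeasurableSet E) (he : ‖e‖ = 1) {t : ℝ}
    (ht : 0 ≤ t) :
    ∀ᵐ x, x ∈ shiftDiff E (t • e) → ∃ s ∈ Set.Icc 0 t, x + s • e ∈ essBoundary E := by
  filter_upwards [ae_notMem_nhdsGT hE he, ae_notMem_nhdsLT hE he, ae_notMem_nhdsGT hE.compl he,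
    ae_notMem_nhdsLT hE.compl he, ae_hasDensity_of_mem_shiftDiff hE (t • e)] with x hR hL hRc hLc
    hdens hx
  by_contra! hess
  set I := {s : ℝ | HasDensity Eᶜ (x + s • e) 0} with hI
  set O := {s : ℝ | HasDensity E (x + s • e) 0}
  have hI1 : ∀ s, s ∈ I ↔ HasDensity E (x + s • e) 1 := fun s => by
    simp [hI, hasDensity_compl_iff hE]
  have hη : (1 : ℝ) / (2 * 6 ^ n) < 1 := by
    rw [div_lt_one (by positivity)]
    linarith [one_le_pow₀ (n := n) (by norm_num : (1 : ℝ) ≤ 6)]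
  have hcov : Set.Icc 0 t ⊆ I ∪ O := fun s hs => by
    have := hess s hs
    rw [essBoundary, Set.mem_ofPred_eq, not_and_or, not_not, not_not] at this
    exact this.symm.imp_left (hI1 s).2
  have hmeet : (Set.Icc 0 t ∩ I).Nonempty ∧ (Set.Icc 0 t ∩ O).Nonempty := by
    rcases hdens hx with ⟨h0, ht1⟩ | ⟨h0, ht1⟩
    · exact ⟨⟨0, ⟨le_rfl, ht⟩, (hI1 0).2 (by simpa using h0)⟩, t, ⟨ht, le_rfl⟩, ht1⟩
    · exact ⟨⟨t, ⟨ht, le_rfl⟩, (hI1 t).2 ht1⟩, 0, ⟨le_rfl, ht⟩, by simpa [O] using h0⟩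
  let line (s : ℝ) : Eu n := x + s • e
  have hline : Continuous line := by fun_prop
  let full (F : Set (Eu n)) (k : ℕ) : Set (Eu n) :=
    nearFullSet F (1 / (2 * 6 ^ n)) (1 / ((k : ℝ) + 1))
  obtain ⟨k, s, ⟨hs, h | h⟩ | ⟨hs, h | h⟩⟩ := exists_mem_piece_mem_nhds_side isClosed_Icc
    Set.ordConnected_Icc hcov (P := fun k => line ⁻¹' full E k) (Q := fun k => line ⁻¹' full Eᶜ k)
    (fun k => (isClosed_nearFullSet _ _ _).preimage hline)
    (fun k => (isClosed_nearFullSet _ _ _).preimage hline)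
    (fun s hs => Set.mem_iUnion.2 (((hI1 s).1 hs).exists_mem_nearFullSet hE (by positivity)))
    (fun s hs => Set.mem_iUnion.2 (HasDensity.exists_mem_nearFullSet hE.compl
      (by simpa using HasDensity.compl hE hs) (by positivity)))
    (fun k => Set.disjoint_left.2 fun s hs =>
      not_hasDensity_zero_of_mem_nearFullSet hE (by positivity) hη (by positivity) hs)
    (fun k => Set.disjoint_left.2 fun s hs =>
      not_hasDensity_zero_of_mem_nearFullSet hE.compl (by positivity) hη (by positivity) hs)
    hmeet.1 hmeet.2
  exacts [hR k s hs h, hL k s hs h, hRc k s hs h, hLc k s hs h]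

lemma ae_exists_mem_essBoundary (hE : MeasurableSet E) (h : Eu n) :
    ∀ᵐ x, x ∈ shiftDiff E h → ∃ s ∈ Set.Icc (0 : ℝ) 1, x + s • h ∈ essBoundary E := by
  rcases eq_or_ne h 0 with rfl | hh
  · exact .of_forall fun x hx => by simp [shiftDiff] at hx
  · obtain ⟨e, he, heq⟩ := exists_unit_eq_norm_smul hh
    have hpos := norm_pos_iff.2 hh
    rw [heq]
    filter_upwards [ae_exists_mem_essBoundary_of_unit hE he hpos.le] with x hx hxE
    obtain ⟨s, hs, hmem⟩ := hx hxE
    refine ⟨s / ‖h‖, ⟨div_nonneg hs.1 hpos.le, (div_le_one hpos).2 hs.2⟩, ?_⟩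
    rwa [← heq, show (s / ‖h‖) • h = s • e by
      rw [heq, norm_smul, he, mul_one, norm_norm, smul_smul, div_mul_cancel₀ _ hpos.ne']]

end Slice

/-! ### Shadows: the measure of a projection along a direction -/

lemma subset_closedBall_of_ediam_le {X : Type*} [PseudoMetricSpace X] {s : Set X} {d : ℝ}
    (hd : 0 ≤ d) (hs : ediam s ≤ ENNReal.ofReal d) {x : X} (hx : x ∈ s) : s ⊆ closedBall x d :=
  fun _ hy => (edist_le_ofReal hd).1 ((edist_le_ediam_of_mem hy hx).trans hs)

section Shadow

variable {n : ℕ} {e : Eu n} {C : Set (Eu n)}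

/-- The part of `lineHull e C` whose heights along `e` lie in `J`. -/
def slab (e : Eu n) (C : Set (Eu n)) (J : Set ℝ) : Set (Eu n) :=
  {w | inner ℝ w e ∈ J} ∩ lineHull e C

/-- The `(n - 1)`-dimensional measure of the projection of `C` onto the hyperplane orthogonal to the
unit vector `e`, encoded as the volume of the slab of unit height above `C`. -/
def shadow (e : Eu n) (C : Set (Eu n)) : ℝ≥0∞ := volume (slab e C (Set.Ico 0 1))

/-- The largest shadow of a set of diameter at most one. -/
def shadowConst (n : ℕ) : ℝ≥0∞ :=
  ⨆ (e : Eu n) (_ : ‖e‖ = 1) (C : Set (Eu n)) (_ : ediam C ≤ 1), shadow e C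

lemma slab_subset_closedBall (he : ‖e‖ = 1) {J : Set ℝ} {R M : ℝ} {x₀ : Eu n}
    (hC : C ⊆ closedBall x₀ R) (hJ : ∀ s ∈ J, |s| ≤ M) :
    slab e C J ⊆ closedBall (orthPart e x₀) (R + M) := by
  rintro w ⟨hwJ, x, hx, s, rfl⟩
  have hsplit : x + s • e - orthPart e x₀ =
      orthPart e (x - x₀) + (inner ℝ (x + s • e) e : ℝ) • e := by
    rw [inner_add_smul_unit he, orthPart, orthPart, inner_sub_left]
    module
  rw [mem_closedBall, dist_eq_norm, hsplit]
  refine (norm_add_le _ _).trans (add_le_add ((norm_orthPart_le he _).trans ?_) ?_)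
  · simpa [dist_eq_norm] using hC hx
  · simpa [norm_smul, he] using hJ _ hwJ

lemma volume_slab_Ico (he : ‖e‖ = 1) (hC : Bornology.IsBounded C) (a b : ℝ) :
    volume (slab e C (Set.Ico a b)) = ENNReal.ofReal (b - a) * shadow e C := by
  obtain ⟨R, hR⟩ := hC.subset_closedBall 0
  have hmeas : Measurable fun w : Eu n => (inner ℝ w e : ℝ) := by fun_prop
  let ν : Measure ℝ := (volume.restrict (lineHull e C)).map fun w : Eu n => (inner ℝ w e : ℝ)
  have hν : ∀ J, MeasurableSet J → ν J = volume (slab e C J) := fun J hJ => by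
    rw [Measure.map_apply hmeas hJ, Measure.restrict_apply (hmeas hJ)]
    rfl
  have : ν.IsAddLeftInvariant := ⟨fun s => by
    ext J hJ
    rw [Measure.map_apply (by fun_prop) hJ, hν _ (hJ.preimage (by fun_prop)), hν _ hJ,
      ← measure_preimage_add_right volume (s • e) (slab e C J)]
    congr 1
    ext w
    simp only [slab, Set.mem_inter_iff, Set.mem_ofPred_eq, Set.mem_preimage,
      add_smul_mem_lineHull_iff, inner_add_smul_unit he, add_comm]⟩
  have : IsFiniteMeasureOnCompacts ν := ⟨fun K hK => by
    obtain ⟨M, hM⟩ := hK.isBounded.subset_closedBall 0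
    rw [hν K hK.measurableSet]
    exact (measure_mono (slab_subset_closedBall he hR fun s hs => by simpa using hM hs)).trans_lt
      measure_closedBall_lt_top⟩
  have hIco : ∀ u v : ℝ, volume (slab e C (Set.Ico u v)) =
      (ν.addHaarScalarFactor volume : ℝ≥0∞) * ENNReal.ofReal (v - u) := fun u v => by
    rw [← hν _ measurableSet_Ico, ← Real.volume_Ico]
    exact congrArg (· (Set.Ico u v)) (Measure.isAddLeftInvariant_eq_smul ν volume)
  rw [shadow, hIco, hIco]
  simp [mul_comm]

lemma smul_slab_Ico {r : ℝ} (hr : 0 < r) :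
    r • slab e C (Set.Ico 0 1) = slab e (r • C) (Set.Ico 0 r) := by
  ext w
  rw [Set.mem_smul_set_iff_inv_smul_mem₀ hr.ne']
  refine and_congr ?_ ⟨?_, ?_⟩
  · simp [real_inner_smul_left, inv_mul_lt_one₀ hr, mul_nonneg_iff_of_pos_left (inv_pos.2 hr)]
  · rintro ⟨x, hx, s, hs⟩
    exact ⟨r • x, Set.smul_mem_smul_set hx, r * s, by
      rw [← smul_inv_smul₀ hr.ne' w, hs, smul_add, smul_smul]⟩
  · rintro ⟨_, ⟨x, hx, rfl⟩, s, rfl⟩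
    exact ⟨x, hx, r⁻¹ * s, by simp [smul_smul, hr.ne']⟩

lemma ofReal_mul_shadow_smul (he : ‖e‖ = 1) (hC : Bornology.IsBounded C) {r : ℝ} (hr : 0 < r) :
    ENNReal.ofReal r * shadow e (r • C) = ENNReal.ofReal (r ^ n) * shadow e C := by
  have hslab := volume_slab_Ico he (hC.smul₀ r) 0 r
  rw [sub_zero] at hslab
  rw [← hslab, ← smul_slab_Ico hr, Measure.addHaar_smul]
  simp [shadow, abs_of_pos hr]

lemma shadow_le_shadowConst (he : ‖e‖ = 1) (hC : ediam C ≤ 1) : shadow e C ≤ shadowConst n :=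
  le_iSup₂_of_le e he (le_iSup₂_of_le C hC le_rfl)

lemma shadowConst_lt_top (n : ℕ) : shadowConst n < ∞ := by
  suffices h : shadowConst n ≤ volume (closedBall (0 : Eu n) (1 + 1)) from
    h.trans_lt measure_closedBall_lt_top
  refine iSup₂_le fun e he => iSup₂_le fun C hC => ?_
  rcases C.eq_empty_or_nonempty with rfl | ⟨x, hx⟩
  · simp [shadow, slab, lineHull]
  · have hCx := subset_closedBall_of_ediam_le zero_le_one (by simpa using hC) hx
    rw [← Measure.addHaar_closedBall_center volume (orthPart e x)]
    exact measure_mono (slab_subset_closedBall he hCx fun s hs =>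
      abs_le.2 ⟨by linarith [hs.1], hs.2.le⟩)

lemma shadowConst_pos (he : ‖e‖ = 1) : 0 < shadowConst n := by
  have hdiam : ediam (ball (0 : Eu n) (1 / 2)) ≤ 1 := by
    refine ediam_le fun x hx y hy => ?_
    rw [edist_dist]
    have htri := dist_triangle_right x y 0
    rw [mem_ball] at hx hy
    exact ENNReal.ofReal_le_one.2 (by linarith)
  have hsub : ball ((1 / 2 : ℝ) • e) (1 / 2) ⊆ slab e (ball (0 : Eu n) (1 / 2)) (Set.Ico 0 1) := by
    intro w hw
    rw [mem_ball, dist_eq_norm] at hw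
    refine ⟨?_, w - (1 / 2 : ℝ) • e, by simpa using hw, 1 / 2, by module⟩
    have habs := abs_lt.1 ((abs_inner_le_norm_of_unit he _).trans_lt hw)
    rw [sub_eq_add_neg, ← neg_smul, inner_add_smul_unit he] at habs
    exact ⟨by linarith, by linarith⟩
  exact ((measure_ball_pos volume ((1 / 2 : ℝ) • e) one_half_pos).trans_le
    (measure_mono hsub)).trans_le (shadow_le_shadowConst he hdiam)

lemma shadow_le_of_ediam_le (he : ‖e‖ = 1) {d : ℝ} (hd : 0 < d) (hC : ediam C ≤ ENNReal.ofReal d) :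
    shadow e C ≤ shadowConst n * ENNReal.ofReal d ^ ((n : ℝ) - 1) := by
  have hd0 : ENNReal.ofReal d ≠ 0 := by simpa using hd
  have hdiam : ediam (d⁻¹ • C) ≤ 1 := by
    rw [ediam_smul₀, ENNReal.smul_def, smul_eq_mul]
    refine (mul_le_mul_right hC _).trans_eq ?_
    rw [← ENNReal.ofReal_coe_nnreal, ← ENNReal.ofReal_mul (by positivity)]
    simp [abs_of_pos hd, hd.ne']
  have hbdd : Bornology.IsBounded (d⁻¹ • C) :=
    Metric.isBounded_iff_ediam_ne_top.2 (hdiam.trans_lt one_lt_top).ne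
  have hscale := ofReal_mul_shadow_smul he hbdd hd
  rw [smul_inv_smul₀ hd.ne'] at hscale
  refine (ENNReal.mul_le_mul_iff_right hd0 ofReal_ne_top).1 ?_
  calc ENNReal.ofReal d * shadow e C = ENNReal.ofReal (d ^ n) * shadow e (d⁻¹ • C) := hscale
    _ ≤ ENNReal.ofReal (d ^ n) * shadowConst n := by
      gcongr
      exact shadow_le_shadowConst he hdiam
    _ = ENNReal.ofReal d * (shadowConst n * ENNReal.ofReal d ^ ((n : ℝ) - 1)) := by
      rw [ENNReal.rpow_sub _ _ hd0 ofReal_ne_top, ENNReal.rpow_one, ENNReal.rpow_natCast,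
        ENNReal.ofReal_pow hd.le, mul_left_comm, ENNReal.mul_div_cancel hd0 ofReal_ne_top, mul_comm]

lemma shadow_le_ediam_rpow (he : ‖e‖ = 1) (hC : ediam C ≠ ∞) :
    shadow e C ≤ shadowConst n * ediam C ^ ((n : ℝ) - 1) := by
  have hlim : Tendsto (fun η : ℝ => shadowConst n *
      ENNReal.ofReal ((ediam C).toReal + η) ^ ((n : ℝ) - 1)) (𝓝[>] 0)
      (𝓝 (shadowConst n * ENNReal.ofReal ((ediam C).toReal + 0) ^ ((n : ℝ) - 1))) := by
    refine ENNReal.Tendsto.const_mul ?_ (Or.inr (shadowConst_lt_top n).ne)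
    have hcont : Continuous fun η : ℝ =>
        ENNReal.ofReal ((ediam C).toReal + η) ^ ((n : ℝ) - 1) :=
      ENNReal.continuous_rpow_const.comp (ENNReal.continuous_ofReal.comp (by fun_prop))
    exact (hcont.tendsto 0).mono_left nhdsWithin_le_nhds
  rw [add_zero, ENNReal.ofReal_toReal hC] at hlim
  refine ge_of_tendsto hlim ?_
  filter_upwards [self_mem_nhdsWithin] with η (hη : 0 < η)
  refine shadow_le_of_ediam_le he (by positivity) ?_
  rw [ENNReal.ofReal_add toReal_nonneg hη.le, ENNReal.ofReal_toReal hC]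
  exact le_self_add

end Shadow

section Domination

variable {n : ℕ} {e : Eu n}

lemma sweep_subset_slab (he : ‖e‖ = 1) {C : Set (Eu n)} {d t : ℝ} (hd : 0 < d) (ht : 0 ≤ t)
    {x₀ : Eu n} (hC : C ⊆ closedBall x₀ d) :
    sweep C (t • e) ⊆ slab e C (Set.Ico (inner ℝ x₀ e - d) (inner ℝ x₀ e + t + 2 * d)) := by
  rintro y ⟨x, hx, s, ⟨hs0, hs1⟩, rfl⟩
  refine ⟨?_, x, hx, s * t, by module⟩
  have hdist : ‖x - x₀‖ ≤ d := by simpa [dist_eq_norm] using hC hx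
  have habs := abs_le.1 ((abs_inner_le_norm_of_unit he (x - x₀)).trans hdist)
  rw [inner_sub_left] at habs
  rw [Set.mem_ofPred_eq, smul_smul, inner_add_smul_unit he]
  have hst : s * t ≤ t := mul_le_of_le_one_left ht hs1
  have hst0 : 0 ≤ s * t := mul_nonneg hs0 ht
  exact ⟨by linarith [habs.1], by linarith [habs.2]⟩

lemma volume_sweep_le_of_ediam_le (he : ‖e‖ = 1) {C : Set (Eu n)} {d t : ℝ} (hd : 0 < d)
    (ht : 0 ≤ t) (hC : ediam C ≤ ENNReal.ofReal d) :
    volume (sweep C (t • e)) ≤ shadowConst n * ENNReal.ofReal (t + 3 * d) *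
      ⨆ _ : C.Nonempty, ediam C ^ ((n : ℝ) - 1) := by
  rcases C.eq_empty_or_nonempty with rfl | hne
  · simp [sweep]
  · obtain ⟨x₀, hx₀⟩ := hne
    have hCtop : ediam C ≠ ∞ := (hC.trans_lt ofReal_lt_top).ne
    calc volume (sweep C (t • e))
        ≤ volume (slab e C (Set.Ico (inner ℝ x₀ e - d) (inner ℝ x₀ e + t + 2 * d))) :=
          measure_mono (sweep_subset_slab he hd ht (subset_closedBall_of_ediam_le hd.le hC hx₀))
      _ = ENNReal.ofReal (t + 3 * d) * shadow e C := by
          rw [volume_slab_Ico he (Metric.isBounded_iff_ediam_ne_top.2 hCtop)]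
          congr 2
          ring
      _ ≤ ENNReal.ofReal (t + 3 * d) * (shadowConst n * ediam C ^ ((n : ℝ) - 1)) := by
          gcongr
          exact shadow_le_ediam_rpow he hCtop
      _ = _ := by rw [ciSup_pos ⟨x₀, hx₀⟩, mul_left_comm, mul_assoc]

lemma sweep_subset_iUnion_sweep {V ι : Type*} [NormedAddCommGroup V] [NormedSpace ℝ V] {A : Set V}
    {T : ι → Set V} (h : A ⊆ ⋃ i, T i) (v : V) : sweep A v ⊆ ⋃ i, sweep (T i) v := by
  rintro y ⟨x, hx, s, hs, rfl⟩
  obtain ⟨i, hi⟩ := Set.mem_iUnion.1 (h hx)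
  exact Set.mem_iUnion.2 ⟨i, x, hi, s, hs, rfl⟩

lemma volume_sweep_le_add_mul_hausdorffMeasure (he : ‖e‖ = 1) {d t : ℝ} (hd : 0 < d) (ht : 0 ≤ t)
    (A : Set (Eu n)) : volume (sweep A (t • e)) ≤
      shadowConst n * ENNReal.ofReal (t + 3 * d) * μH[(n : ℝ) - 1] A := by
  have hcover : (⨅ (T : ℕ → Set (Eu n)) (_ : A ⊆ ⋃ i, T i)
      (_ : ∀ i, ediam (T i) ≤ ENNReal.ofReal d),
      ∑' i, ⨆ _ : (T i).Nonempty, ediam (T i) ^ ((n : ℝ) - 1)) ≤ μH[(n : ℝ) - 1] A := by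
    rw [Measure.hausdorffMeasure_apply]
    exact le_iSup₂ (f := fun (r : ℝ≥0∞) (_ : 0 < r) => ⨅ (T : ℕ → Set (Eu n)) (_ : A ⊆ ⋃ i, T i)
      (_ : ∀ i, ediam (T i) ≤ r), ∑' i, ⨆ _ : (T i).Nonempty, ediam (T i) ^ ((n : ℝ) - 1))
      (ENNReal.ofReal d) (by simpa using hd)
  have hc0 : shadowConst n * ENNReal.ofReal (t + 3 * d) ≠ 0 :=
    mul_ne_zero (shadowConst_pos he).ne' (by rw [ne_eq, ENNReal.ofReal_eq_zero]; linarith)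
  have hctop : shadowConst n * ENNReal.ofReal (t + 3 * d) ≠ ∞ :=
    mul_ne_top (shadowConst_lt_top n).ne ofReal_ne_top
  refine le_trans ?_ (mul_le_mul_right hcover _)
  simp only [ENNReal.mul_iInf_of_ne hc0 hctop]
  refine le_iInf fun T => le_iInf fun hT => le_iInf fun hTd => ?_
  calc volume (sweep A (t • e))
      ≤ ∑' i, volume (sweep (T i) (t • e)) :=
        (measure_mono (sweep_subset_iUnion_sweep hT _)).trans (measure_iUnion_le _)
    _ ≤ _ := by
        rw [← ENNReal.tsum_mul_left]
        exact ENNReal.tsum_le_tsum fun i => volume_sweep_le_of_ediam_le he hd ht (hTd i)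

lemma volume_sweep_le_hausdorffMeasure (he : ‖e‖ = 1) {t : ℝ} (ht : 0 < t) (A : Set (Eu n)) :
    volume (sweep A (t • e)) ≤ shadowConst n * ENNReal.ofReal t * μH[(n : ℝ) - 1] A := by
  rcases eq_or_ne (μH[(n : ℝ) - 1] A) ∞ with htop | htop
  · rw [htop, ENNReal.mul_top (mul_ne_zero (shadowConst_pos he).ne' (by simpa using ht))]
    exact le_top
  · have hlim : Tendsto (fun d : ℝ => shadowConst n * ENNReal.ofReal (t + 3 * d) *
        μH[(n : ℝ) - 1] A) (𝓝[>] 0)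
        (𝓝 (shadowConst n * ENNReal.ofReal (t + 3 * 0) * μH[(n : ℝ) - 1] A)) := by
      refine ENNReal.Tendsto.mul_const
        (ENNReal.Tendsto.const_mul ?_ (Or.inr (shadowConst_lt_top n).ne)) (Or.inr htop)
      have hcont : Continuous fun d : ℝ => ENNReal.ofReal (t + 3 * d) :=
        ENNReal.continuous_ofReal.comp (by fun_prop)
      exact (hcont.tendsto 0).mono_left nhdsWithin_le_nhds
    rw [mul_zero, add_zero] at hlim
    refine ge_of_tendsto hlim ?_
    filter_upwards [self_mem_nhdsWithin] with d hd using
      volume_sweep_le_add_mul_hausdorffMeasure he hd ht.le A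

/-- The measure `μ` controls the translation increments of `E`: on a compact set `K`, translation
by `h` changes `E` by at most `κ * ‖h‖` times the `μ`-mass of the segments `[x, x + h]`, `x ∈ K`.
For `κ = shadowConst n` this singles out the measures dominating the perimeter of `E`. -/
def DominatesIncrements (κ : ℝ≥0∞) (E : Set (Eu n)) (μ : Measure (Eu n)) : Prop :=
  ∀ K : Set (Eu n), IsCompact K → ∀ h : Eu n,
    volume (K ∩ shiftDiff E h) ≤ κ * ENNReal.ofReal ‖h‖ * μ (sweep K h)

lemma dominatesIncrements_hausdorffMeasure {E : Set (Eu n)} (hE : MeasurableSet E) :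
    DominatesIncrements (shadowConst n) E ((μH[(n : ℝ) - 1]).restrict (essBoundary E)) := by
  intro K hK h
  rcases eq_or_ne h 0 with rfl | hh
  · simp [shiftDiff]
  obtain ⟨e, he, heq⟩ := exists_unit_eq_norm_smul hh
  rw [Measure.restrict_apply (isCompact_sweep hK h).measurableSet]
  refine le_trans ?_
    (volume_sweep_le_hausdorffMeasure (e := -e) (by rwa [norm_neg]) (norm_pos_iff.2 hh) _)
  rw [smul_neg, ← heq]
  refine measure_mono_ae ?_
  filter_upwards [ae_exists_mem_essBoundary hE h] with x hx hxK
  obtain ⟨s, hs, hb⟩ := hx hxK.2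
  exact ⟨x + s • h, ⟨⟨x, hxK.1, s, hs, rfl⟩, hb⟩, s, hs, by module⟩

end Domination

section Box

variable {n : ℕ} {e : Eu n} {C D : Set (Eu n)}

lemma shadow_image_linearIsometryEquiv (U : Eu n ≃ₗᵢ[ℝ] Eu n) (e : Eu n) (C : Set (Eu n)) :
    shadow (U e) (U '' C) = shadow e C := by
  have hpre : U ⁻¹' slab (U e) (U '' C) (Set.Ico 0 1) = slab e C (Set.Ico 0 1) := by
    ext w
    refine and_congr (by simp) ⟨?_, ?_⟩
    · rintro ⟨_, ⟨x, hx, rfl⟩, s, h⟩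
      exact ⟨x, hx, s, U.injective (by simpa using h)⟩
    · rintro ⟨x, hx, s, rfl⟩
      exact ⟨U x, ⟨x, hx, rfl⟩, s, by simp⟩
  rw [shadow, shadow, ← hpre]
  exact (U.measurePreserving.measure_preimage_emb U.toHomeomorph.measurableEmbedding _).symm

lemma exists_linearIsometryEquiv_apply_eq {V : Type*} [NormedAddCommGroup V]
    [InnerProductSpace ℝ V] {e f : V} (h : ‖e‖ = ‖f‖) : ∃ U : V ≃ₗᵢ[ℝ] V, U e = f :=
  ⟨(ℝ ∙ (e - f))ᗮ.reflection, Submodule.reflection_sub h⟩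

lemma shadow_mono (h : C ⊆ D) : shadow e C ≤ shadow e D := by
  refine measure_mono ?_
  rintro w ⟨hw, x, hx, s, rfl⟩
  exact ⟨hw, x, h hx, s, rfl⟩

lemma exists_isCompact_le_shadow {ε : ℝ} (hε : 0 < ε) (he : ‖e‖ = 1) :
    ∃ (f : Eu n) (C : Set (Eu n)), ‖f‖ = 1 ∧ IsCompact C ∧ (interior C).Nonempty ∧
      ediam C ≤ ENNReal.ofReal (1 + ε) ∧ ENNReal.ofReal (1 - ε) * shadowConst n ≤ shadow f C := by
  have hlt : ENNReal.ofReal (1 - ε) * shadowConst n < shadowConst n := by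
    nth_rewrite 2 [← one_mul (shadowConst n)]
    exact ENNReal.mul_lt_mul_left (shadowConst_pos he).ne' (shadowConst_lt_top n).ne
      (ENNReal.ofReal_lt_one.2 (by linarith))
  nth_rewrite 2 [shadowConst] at hlt
  simp only [lt_iSup_iff] at hlt
  obtain ⟨f, hf, C, hC, hq⟩ := hlt
  obtain ⟨x, hx⟩ : C.Nonempty := Set.nonempty_iff_ne_empty.2 fun h => by
    simp [h, shadow, slab, lineHull] at hq
  have hdiam : ediam (cthickening (ε / 2) C) ≤ ENNReal.ofReal (1 + ε) := by
    have hthick := ediam_cthickening_le (s := C) (ε / 2).toNNReal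
    rw [Real.coe_toNNReal _ (by positivity)] at hthick
    refine hthick.trans ?_
    rw [ENNReal.ofReal_add zero_le_one hε.le, ENNReal.ofReal_one]
    refine add_le_add hC (le_of_eq ?_)
    rw [← ENNReal.ofReal_coe_nnreal, Real.coe_toNNReal _ (by positivity), ← ENNReal.ofReal_ofNat 2,
      ← ENNReal.ofReal_mul (by norm_num)]
    congr 1
    ring
  have hbdd : Bornology.IsBounded (cthickening (ε / 2) C) :=
    Metric.isBounded_iff_ediam_ne_top.2 (hdiam.trans_lt ofReal_lt_top).ne
  refine ⟨f, cthickening (ε / 2) C, hf, Metric.isCompact_of_isClosed_isBounded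
    isClosed_cthickening hbdd, ⟨x, ?_⟩, hdiam,
    hq.le.trans (shadow_mono (self_subset_cthickening C))⟩
  exact interior_maximal (thickening_subset_cthickening _ _) isOpen_thickening
    (self_subset_thickening (half_pos hε) C hx)

lemma exists_forall_isCompact_le_shadow {ε : ℝ} (hε : 0 < ε) :
    ∃ R : ℝ, 0 < R ∧ ∀ ν : Eu n, ‖ν‖ = 1 → ∃ C : Set (Eu n), IsCompact C ∧ C ⊆ closedBall 0 R ∧
      (interior C).Nonempty ∧ ediam C ≤ ENNReal.ofReal (1 + ε) ∧
      ENNReal.ofReal (1 - ε) * shadowConst n ≤ shadow ν C := by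
  by_cases hunit : ∃ e : Eu n, ‖e‖ = 1
  · obtain ⟨e, he⟩ := hunit
    obtain ⟨f, C, hf, hC, hint, hdiam, hshadow⟩ := exists_isCompact_le_shadow hε he
    obtain ⟨R, hRpos, hR⟩ := hC.isBounded.subset_closedBall_lt 0 0
    refine ⟨R, hRpos, fun ν hν => ?_⟩
    obtain ⟨U, rfl⟩ := exists_linearIsometryEquiv_apply_eq (hf.trans hν.symm)
    refine ⟨U '' C, hC.image U.continuous, ?_, ?_, ?_, ?_⟩
    · rw [Set.image_subset_iff, U.preimage_closedBall, map_zero]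
      exact hR
    · rw [← U.coe_toHomeomorph, ← U.toHomeomorph.image_interior]
      exact hint.image _
    · rwa [U.isometry.ediam_image]
    · rwa [shadow_image_linearIsometryEquiv]
  · exact ⟨1, one_pos, fun ν hν => absurd ⟨ν, hν⟩ hunit⟩

lemma isCompact_slab_Icc (he : ‖e‖ = 1) (hC : IsCompact C) (a b : ℝ) :
    IsCompact (slab e C (Set.Icc a b)) := by
  have himage : slab e C (Set.Icc a b) =
      (fun p : Eu n × ℝ => orthPart e p.1 + p.2 • e) '' (C ×ˢ Set.Icc a b) := by
    ext w
    constructor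
    · rintro ⟨hw, x, hx, s, rfl⟩
      refine ⟨(x, inner ℝ (x + s • e) e), ⟨hx, hw⟩, ?_⟩
      simp only [inner_add_smul_unit he, orthPart]
      module
    · rintro ⟨⟨x, s⟩, ⟨hx, hs⟩, rfl⟩
      refine ⟨?_, x, hx, s - inner ℝ x e, by simp only [orthPart]; module⟩
      simpa [inner_add_smul_unit he, orthPart, inner_sub_left, real_inner_smul_left, he] using hs
  rw [himage]
  refine (hC.prod isCompact_Icc).image ?_
  unfold orthPart
  fun_prop

lemma sweep_slab_Icc (he : ‖e‖ = 1) {τ : ℝ} (hτ : 0 ≤ τ) :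
    sweep (slab e C (Set.Icc (-τ) 0)) (τ • e) = slab e C (Set.Icc (-τ) τ) := by
  apply Set.Subset.antisymm
  · rintro _ ⟨w, ⟨⟨hw₁, hw₂⟩, hwC⟩, s, ⟨hs₀, hs₁⟩, rfl⟩
    rw [smul_smul]
    refine ⟨?_, (add_smul_mem_lineHull_iff _).2 hwC⟩
    have hsτ : 0 ≤ s * τ := mul_nonneg hs₀ hτ
    have hsτ' : s * τ ≤ τ := mul_le_of_le_one_left hτ hs₁
    rw [Set.mem_ofPred_eq, inner_add_smul_unit he]
    exact ⟨by linarith, by linarith⟩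
  · rintro w ⟨⟨hw₁, hw₂⟩, hwC⟩
    rcases le_total (inner ℝ w e : ℝ) 0 with h | h
    · exact ⟨w, ⟨⟨hw₁, h⟩, hwC⟩, 0, by simp, by simp⟩
    · refine ⟨w + (-τ) • e, ⟨?_, (add_smul_mem_lineHull_iff _).2 hwC⟩, 1, by simp, by module⟩
      rw [Set.mem_ofPred_eq, inner_add_smul_unit he]
      exact ⟨by linarith, by linarith⟩

lemma ediam_slab_Icc_le (he : ‖e‖ = 1) (a b : ℝ) :
    ediam (slab e C (Set.Icc a b)) ≤ ediam C + ENNReal.ofReal (b - a) := by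
  refine ediam_le ?_
  rintro w ⟨hw, x, hx, s, rfl⟩ w' ⟨hw', x', hx', s', rfl⟩
  have hsplit : x + s • e - (x' + s' • e) = orthPart e (x - x') +
      ((inner ℝ (x + s • e) e : ℝ) - inner ℝ (x' + s' • e) e) • e := by
    rw [inner_add_smul_unit he, inner_add_smul_unit he, orthPart, inner_sub_left]
    module
  rw [edist_dist, dist_eq_norm, hsplit]
  refine (ENNReal.ofReal_le_ofReal (norm_add_le _ _)).trans
    (ofReal_add_le.trans (add_le_add ?_ (ENNReal.ofReal_le_ofReal ?_)))
  · refine le_trans ?_ (edist_le_ediam_of_mem hx hx')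
    rw [edist_dist, dist_eq_norm]
    exact ENNReal.ofReal_le_ofReal (norm_orthPart_le he _)
  · rw [norm_smul, he, mul_one, Real.norm_eq_abs]
    exact abs_le.2 ⟨by linarith [hw.1, hw'.2], by linarith [hw.2, hw'.1]⟩

lemma isOpen_lineHull (hC : IsOpen C) : IsOpen (lineHull e C) := by
  have hunion : lineHull e C = C + Set.range fun s : ℝ => s • e := by
    ext w
    simp [lineHull, Set.mem_add, eq_comm]
  rw [hunion]
  exact hC.add_right

lemma nonempty_interior_slab_Icc (he : ‖e‖ = 1) (hC : (interior C).Nonempty) {τ : ℝ}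
    (hτ : 0 < τ) : (interior (slab e C (Set.Icc (-τ) τ))).Nonempty := by
  obtain ⟨x, hx⟩ := hC
  have hopen : IsOpen (slab e (interior C) (Set.Ioo (-τ) τ)) :=
    (isOpen_Ioo.preimage (by fun_prop : Continuous fun w : Eu n => (inner ℝ w e : ℝ))).inter
      (isOpen_lineHull isOpen_interior)
  have hsub : slab e (interior C) (Set.Ioo (-τ) τ) ⊆ slab e C (Set.Icc (-τ) τ) := by
    rintro _ ⟨hw, y, hy, s, rfl⟩
    exact ⟨Set.Ioo_subset_Icc_self hw, y, interior_subset hy, s, rfl⟩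
  refine ⟨x + (-(inner ℝ x e : ℝ)) • e, interior_maximal hsub hopen ⟨?_, x, hx, _, rfl⟩⟩
  rw [Set.mem_ofPred_eq, inner_add_smul_unit he]
  simpa using hτ

lemma exists_box {ε τ : ℝ} (hε : 0 < ε) (hτ : 0 < τ) : ∃ R : ℝ, 0 < R ∧ ∀ ν : Eu n, ‖ν‖ = 1 →
    ∃ K : Set (Eu n), IsCompact K ∧ (∀ w ∈ K, (inner ℝ w ν : ℝ) ∈ Set.Icc (-τ) 0) ∧
      ENNReal.ofReal τ * (ENNReal.ofReal (1 - ε) * shadowConst n) ≤ volume K ∧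
      sweep K (τ • ν) ⊆ closedBall 0 R ∧
      ediam (sweep K (τ • ν)) ≤ ENNReal.ofReal (1 + ε + 2 * τ) ∧
      (interior (sweep K (τ • ν))).Nonempty := by
  obtain ⟨R, hR, hbase⟩ := exists_forall_isCompact_le_shadow (n := n) hε
  refine ⟨R + τ, by positivity, fun ν hν => ?_⟩
  obtain ⟨C, hC, hCR, hint, hdiam, hshadow⟩ := hbase ν hν
  refine ⟨slab ν C (Set.Icc (-τ) 0), isCompact_slab_Icc hν hC _ _, fun w hw => hw.1, ?_, ?_⟩
  · calc ENNReal.ofReal τ * (ENNReal.ofReal (1 - ε) * shadowConst n)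
        ≤ ENNReal.ofReal (0 - -τ) * shadow ν C := by
          rw [zero_sub, neg_neg]
          gcongr
      _ = volume (slab ν C (Set.Ico (-τ) 0)) := (volume_slab_Ico hν hC.isBounded _ _).symm
      _ ≤ volume (slab ν C (Set.Icc (-τ) 0)) :=
          measure_mono fun w hw => ⟨Set.Ico_subset_Icc_self hw.1, hw.2⟩
  · rw [sweep_slab_Icc hν hτ.le]
    refine ⟨?_, ?_, nonempty_interior_slab_Icc hν hint hτ⟩
    · have hsub := slab_subset_closedBall hν hCR (J := Set.Icc (-τ) τ) fun s hs => abs_le.2 hs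
      rwa [orthPart, inner_zero_left, zero_smul, sub_zero] at hsub
    · refine (ediam_slab_Icc_le hν _ _).trans ?_
      rw [ENNReal.ofReal_add (by positivity) (by positivity)]
      exact add_le_add hdiam (ENNReal.ofReal_le_ofReal (by linarith))

end Box

section Vague

open scoped CompactlySupported

variable {X ι : Type*} [TopologicalSpace X]

lemma exists_compactlySupported_eq_one [T2Space X] [LocallyCompactSpace X] {K U : Set X}
    (hK : IsCompact K) (hU : IsOpen U) (hKU : K ⊆ U) :
    ∃ φ : C_c(X, ℝ), (∀ x, φ x ∈ Set.Icc 0 1) ∧ (∀ x ∈ K, φ x = 1) ∧ ∀ x, x ∉ U → φ x = 0 := by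
  obtain ⟨f, h1, h2, h3, h4⟩ := exists_continuousMap_one_of_isCompact_subset_isOpen hK hU hKU
  exact ⟨⟨f, h2⟩, h4, fun x hx => h1 hx, fun x hx =>
    image_eq_zero_of_notMem_tsupport fun h => hx (h3 h)⟩

variable [MeasurableSpace X]

/-- The measures `ν i` converge vaguely to `μ` along the filter `l`. -/
def TendstoVaguely (l : Filter ι) (ν : ι → Measure X) (μ : Measure X) : Prop :=
  ∀ φ : C_c(X, ℝ), Tendsto (fun i => ∫ x, φ x ∂(ν i)) l (𝓝 (∫ x, φ x ∂μ))

lemma exists_tendsto_integral (l : Ultrafilter ι) {ν : ι → Measure X} {M : ℝ≥0∞} (hM : M ≠ ∞)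
    (hν : ∀ i, ν i Set.univ ≤ M) (φ : C_c(X, ℝ)) :
    ∃ c : ℝ, Tendsto (fun i => ∫ x, φ x ∂(ν i)) l (𝓝 c) := by
  obtain ⟨C, hC⟩ := φ.hasCompactSupport.exists_bound_of_continuous φ.continuous
  have hbound : ∀ i, (∫ x, φ x ∂(ν i)) ∈ closedBall (0 : ℝ) (max C 0 * M.toReal) := fun i => by
    have : IsFiniteMeasure (ν i) := ⟨(hν i).trans_lt hM.lt_top⟩
    rw [mem_closedBall, dist_zero_right]
    refine (norm_integral_le_of_norm_le_const (.of_forall fun x =>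
      (hC x).trans (le_max_left C 0))).trans ?_
    exact mul_le_mul_of_nonneg_left (ENNReal.toReal_mono hM (hν i)) (le_max_right C 0)
  obtain ⟨c, -, hc⟩ := (isCompact_closedBall (0 : ℝ) (max C 0 * M.toReal)).ultrafilter_le_nhds
    (l.map fun i => ∫ x, φ x ∂(ν i))
      (tendsto_principal.2 (Eventually.of_forall hbound))
  exact ⟨c, hc⟩

variable [BorelSpace X] {μ : Measure X} [IsFiniteMeasure μ]

lemma integrable_of_compactlySupported (φ : C_c(X, ℝ)) : Integrable φ μ :=
  φ.continuous.integrable_of_hasCompactSupport φ.hasCompactSupport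

lemma measureReal_le_integral {K : Set X} (hK : MeasurableSet K) {φ : C_c(X, ℝ)}
    (hφ : ∀ x, 0 ≤ φ x) (hφK : ∀ x ∈ K, φ x = 1) : μ.real K ≤ ∫ x, φ x ∂μ := by
  rw [← integral_indicator_one hK]
  refine integral_mono ((integrable_const (1 : ℝ)).indicator hK)
    (integrable_of_compactlySupported φ) fun x => ?_
  by_cases hx : x ∈ K
  · simp [hx, hφK x hx]
  · simp [hx, hφ x]

lemma integral_le_measureReal {U : Set X} (hU : MeasurableSet U) {φ : C_c(X, ℝ)}
    (hφ : ∀ x, φ x ≤ 1) (hφU : ∀ x, x ∉ U → φ x = 0) : ∫ x, φ x ∂μ ≤ μ.real U := by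
  rw [← integral_indicator_one hU]
  refine integral_mono (integrable_of_compactlySupported φ)
    ((integrable_const (1 : ℝ)).indicator hU) fun x => ?_
  by_cases hx : x ∈ U
  · simp [hx, hφ x]
  · simp [hx, hφU x hx]

lemma exists_positiveLinearMap_tendsto_integral (l : Ultrafilter ι) {ν : ι → Measure X}
    {M : ℝ≥0∞} (hM : M ≠ ∞) (hν : ∀ i, ν i Set.univ ≤ M) :
    ∃ Λ : C_c(X, ℝ) →ₚ[ℝ] ℝ, ∀ φ, Tendsto (fun i => ∫ x, φ x ∂(ν i)) l (𝓝 (Λ φ)) := by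
  have : ∀ i, IsFiniteMeasure (ν i) := fun i => ⟨(hν i).trans_lt hM.lt_top⟩
  choose Λ hΛ using exists_tendsto_integral l hM hν
  let L : C_c(X, ℝ) →ₗ[ℝ] ℝ :=
    { toFun := Λ
      map_add' := fun φ ψ => tendsto_nhds_unique (hΛ (φ + ψ)) <|
        ((hΛ φ).add (hΛ ψ)).congr fun i => (integral_add (integrable_of_compactlySupported φ)
          (integrable_of_compactlySupported ψ)).symm
      map_smul' := fun c φ => tendsto_nhds_unique (hΛ (c • φ)) <|
        ((hΛ φ).const_mul c).congr fun i => (integral_const_mul c φ).symm }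
  exact ⟨PositiveLinearMap.mk₀ L fun φ hφ =>
    ge_of_tendsto (hΛ φ) (.of_forall fun i => integral_nonneg hφ), hΛ⟩

variable [T2Space X] [LocallyCompactSpace X]

lemma exists_tendstoVaguely (l : Ultrafilter ι) {ν : ι → Measure X} {M : ℝ≥0∞} (hM : M ≠ ∞)
    (hν : ∀ i, ν i Set.univ ≤ M) :
    ∃ μ : Measure X, μ Set.univ ≤ M ∧ TendstoVaguely (l : Filter ι) ν μ := by
  obtain ⟨Λ, hΛ⟩ := exists_positiveLinearMap_tendsto_integral l hM hν
  refine ⟨RealRMK.rieszMeasure Λ, ?_, fun φ => by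
    rw [RealRMK.integral_rieszMeasure]
    exact hΛ φ⟩
  rw [isOpen_univ.measure_eq_iSup_isCompact]
  refine iSup₂_le fun K _ => iSup_le fun hK => ?_
  obtain ⟨φ, hφ, hφK, -⟩ := exists_compactlySupported_eq_one hK isOpen_univ (Set.subset_univ K)
  refine (RealRMK.rieszMeasure_le_of_eq_one Λ (fun x => (hφ x).1) hK hφK).trans
    (ENNReal.ofReal_le_of_le_toReal (le_of_tendsto (hΛ φ) (.of_forall fun i => ?_)))
  have : IsFiniteMeasure (ν i) := ⟨(hν i).trans_lt hM.lt_top⟩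
  exact (integral_le_measureReal MeasurableSet.univ (fun x => (hφ x).2) (by simp)).trans
    (ENNReal.toReal_mono hM (hν i))

variable {l : Filter ι} {ν : ι → Measure X} [∀ i, IsFiniteMeasure (ν i)]

lemma TendstoVaguely.measure_le_of_frequently_le (h : TendstoVaguely l ν μ) {K U : Set X}
    (hK : IsCompact K) (hU : IsOpen U) (hKU : K ⊆ U) {c : ℝ≥0∞} (hc : ∃ᶠ i in l, ν i U ≤ c) :
    μ K ≤ c := by
  rcases eq_or_ne c ∞ with rfl | hctop
  · exact le_top
  obtain ⟨φ, hφ, hφK, hφU⟩ := exists_compactlySupported_eq_one hK hU hKU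
  rw [← ENNReal.toReal_le_toReal (measure_ne_top μ K) hctop]
  refine (measureReal_le_integral hK.measurableSet (fun x => (hφ x).1) hφK).trans
    (le_of_tendsto_of_frequently (h φ) (hc.mono fun i hi => ?_))
  exact (integral_le_measureReal hU.measurableSet (fun x => (hφ x).2) hφU).trans
    (ENNReal.toReal_mono hctop hi)

lemma TendstoVaguely.le_measure_of_frequently_le [μ.OuterRegular] (h : TendstoVaguely l ν μ)
    {K : Set X} (hK : IsCompact K) {c : ℝ≥0∞} (hc : ∃ᶠ i in l, c ≤ ν i K) : c ≤ μ K := by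
  obtain ⟨i₀, hi₀⟩ := hc.exists
  have hctop : c ≠ ∞ := (hi₀.trans_lt (measure_lt_top _ _)).ne
  rw [Set.measure_eq_iInf_isOpen]
  refine le_iInf₂ fun U hKU => le_iInf fun hU => ?_
  obtain ⟨φ, hφ, hφK, hφU⟩ := exists_compactlySupported_eq_one hK hU hKU
  rw [← ENNReal.toReal_le_toReal hctop (measure_ne_top μ U)]
  refine (ge_of_tendsto_of_frequently (h φ) (hc.mono fun i hi => ?_)).trans
    (integral_le_measureReal hU.measurableSet (fun x => (hφ x).2) hφU)
  exact (ENNReal.toReal_mono (measure_ne_top _ _) hi).trans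
    (measureReal_le_integral hK.measurableSet (fun x => (hφ x).1) hφK)

end Vague

section Increments

variable {V : Type*} [NormedAddCommGroup V] [MeasurableSpace V] [BorelSpace V]
  {μ : Measure V} {E F W B : Set V}

lemma measure_ball_zero_inter_preimage_add [μ.IsAddHaarMeasure] (x : V) (δ : ℝ) (A : Set V) :
    μ (ball 0 δ ∩ {h | x + h ∈ A}) = μ (ball x δ ∩ A) := by
  rw [← measure_preimage_add μ x (ball x δ ∩ A)]
  congr 1
  ext h
  simp [mem_ball, dist_eq_norm]

variable [ProperSpace V]

lemma measurableSet_prod_mem_shiftDiff (hE : MeasurableSet E) :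
    MeasurableSet {p : V × V | p.1 ∈ shiftDiff E p.2} :=
  (measurable_fst hE).symmDiff ((measurable_fst.add measurable_snd) hE)

lemma restrict_apply_setOf_mem_shiftDiff (hE : MeasurableSet E) (x : V) :
    μ.restrict B {h | x ∈ shiftDiff E h} = μ (B ∩ {h | x ∈ shiftDiff E h}) := by
  have hmeas : MeasurableSet {h | x ∈ shiftDiff E h} :=
    measurable_prodMk_left (measurableSet_prod_mem_shiftDiff hE)
  rw [Measure.restrict_apply hmeas, Set.inter_comm]

variable [μ.IsAddHaarMeasure]

lemma measurable_measure_inter_setOf_mem_shiftDiff (hE : MeasurableSet E) :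
    Measurable fun x => μ (B ∩ {h | x ∈ shiftDiff E h}) := by
  simp only [← restrict_apply_setOf_mem_shiftDiff hE]
  exact measurable_measure_prodMk_left (measurableSet_prod_mem_shiftDiff hE)

lemma setLIntegral_measure_shiftDiff (hE : MeasurableSet E) :
    ∫⁻ x in W, μ (B ∩ {h | x ∈ shiftDiff E h}) ∂μ = ∫⁻ h in B, μ (W ∩ shiftDiff E h) ∂μ := by
  have hS := measurableSet_prod_mem_shiftDiff hE
  have hswap : ∀ h, μ.restrict W (shiftDiff E h) = μ (W ∩ shiftDiff E h) := fun h => by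
    rw [Measure.restrict_apply (measurableSet_shiftDiff hE h), Set.inter_comm]
  simp only [← restrict_apply_setOf_mem_shiftDiff hE, ← hswap]
  exact (Measure.prod_apply (μ := μ.restrict W) (ν := μ.restrict B) hS).symm.trans
    (Measure.prod_apply_symm hS)

lemma measureReal_ball_add_eq (hE : MeasurableSet E) {x : V} {δ : ℝ} (hxE : x ∈ E) (hxF : x ∉ F) :
    μ.real (ball x δ) + μ.real (ball x δ ∩ F) = μ.real (ball 0 δ ∩ {h | x ∈ shiftDiff E h}) +
      μ.real (ball 0 δ ∩ {h | x ∈ shiftDiff F h}) + μ.real (ball x δ ∩ E) := by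
  have hshiftE : {h | x ∈ shiftDiff E h} = {h | x + h ∈ Eᶜ} := by
    ext h
    simp [shiftDiff, Set.mem_symmDiff, hxE]
  have hshiftF : {h | x ∈ shiftDiff F h} = {h | x + h ∈ F} := by
    ext h
    simp [shiftDiff, Set.mem_symmDiff, hxF]
  simp only [measureReal_def, hshiftE, hshiftF, measure_ball_zero_inter_preimage_add]
  simp only [← measureReal_def, ← Set.sdiff_eq]
  linarith [measureReal_inter_add_sdiff (μ := μ) hE (s := ball x δ) measure_ball_lt_top.ne]

lemma half_measure_ball_le_add {x : V} {δ : ℝ} (hE : MeasurableSet E) (hF : MeasurableSet F)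
    (hx : x ∈ E ∆ F) (hclose : |μ.real (ball x δ ∩ E) - μ.real (ball x δ ∩ F)| ≤
      μ.real (ball x δ) / 2) :
    μ (ball 0 δ) / 2 ≤ μ (ball 0 δ ∩ {h | x ∈ shiftDiff E h}) +
      μ (ball 0 δ ∩ {h | x ∈ shiftDiff F h}) := by
  have hball : μ.real (ball 0 δ) = μ.real (ball x δ) := by
    have hshift := measure_ball_zero_inter_preimage_add (μ := μ) x δ Set.univ
    simp only [Set.mem_univ, Set.ofPred_true, Set.inter_univ] at hshift
    simp only [measureReal_def, hshift]
  have hfin : ∀ A : Set V, μ (ball 0 δ ∩ A) ≠ ∞ := fun A =>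
    measure_inter_ne_top_of_left_ne_top measure_ball_lt_top.ne
  rw [← ENNReal.toReal_le_toReal (ENNReal.div_ne_top measure_ball_lt_top.ne two_ne_zero)
    (add_ne_top.2 ⟨hfin _, hfin _⟩), toReal_add (hfin _) (hfin _), toReal_div, toReal_ofNat]
  simp only [← measureReal_def]
  have habs := abs_le.1 hclose
  rcases hx with ⟨hxE, hxF⟩ | ⟨hxF, hxE⟩
  · linarith [measureReal_ball_add_eq (μ := μ) (δ := δ) hE hxE hxF]
  · linarith [measureReal_ball_add_eq (μ := μ) (δ := δ) hF hxF hxE]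

lemma setLIntegral_measure_shiftDiff_le (hE : MeasurableSet E) {δ : ℝ} {C : ℝ≥0∞}
    (hC : ∀ h, ‖h‖ < δ → μ (W ∩ shiftDiff E h) ≤ C * ENNReal.ofReal ‖h‖) :
    ∫⁻ x in W, μ (ball 0 δ ∩ {h | x ∈ shiftDiff E h}) ∂μ ≤
      C * ENNReal.ofReal δ * μ (ball (0 : V) δ) := by
  rw [setLIntegral_measure_shiftDiff hE, ← setLIntegral_const]
  refine setLIntegral_mono' measurableSet_ball fun h hh => ?_
  rw [mem_ball_zero_iff] at hh
  exact (hC h hh).trans (by gcongr)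

/-- Kolmogorov-type estimate: a point of `E ∆ F` at which the averages of `E` and `F` at scale `δ`
are close sees many increments of `E` or of `F`, and these are few by Fubini. -/
lemma measure_inter_symmDiff_le (hE : MeasurableSet E) (hF : MeasurableSet F)
    (hW : MeasurableSet W) {δ : ℝ} (hδ : 0 < δ) {C : ℝ≥0∞}
    (hCE : ∀ h, ‖h‖ < δ → μ (W ∩ shiftDiff E h) ≤ C * ENNReal.ofReal ‖h‖)
    (hCF : ∀ h, ‖h‖ < δ → μ (W ∩ shiftDiff F h) ≤ C * ENNReal.ofReal ‖h‖)
    (hclose : ∀ x ∈ W, |μ.real (ball x δ ∩ E) - μ.real (ball x δ ∩ F)| ≤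
      μ.real (ball x δ) / 2) :
    μ (W ∩ E ∆ F) ≤ 4 * C * ENNReal.ofReal δ := by
  set v := μ (ball (0 : V) δ)
  have hv0 : v / 2 ≠ 0 := (ENNReal.half_pos (measure_ball_pos μ _ hδ).ne').ne'
  have hvtop : v / 2 ≠ ∞ := ENNReal.div_ne_top measure_ball_lt_top.ne two_ne_zero
  refine (ENNReal.mul_le_mul_iff_left hv0 hvtop).1 ?_
  calc μ (W ∩ E ∆ F) * (v / 2)
      = ∫⁻ x in W ∩ E ∆ F, v / 2 ∂μ := by rw [setLIntegral_const, mul_comm]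
    _ ≤ ∫⁻ x in W ∩ E ∆ F, (μ (ball 0 δ ∩ {h | x ∈ shiftDiff E h}) +
          μ (ball 0 δ ∩ {h | x ∈ shiftDiff F h})) ∂μ :=
        setLIntegral_mono' (hW.inter (hE.symmDiff hF)) fun x hx =>
          half_measure_ball_le_add hE hF hx.2 (hclose x hx.1)
    _ ≤ ∫⁻ x in W, (μ (ball 0 δ ∩ {h | x ∈ shiftDiff E h}) +
          μ (ball 0 δ ∩ {h | x ∈ shiftDiff F h})) ∂μ := lintegral_mono_set Set.inter_subset_left
    _ = (∫⁻ x in W, μ (ball 0 δ ∩ {h | x ∈ shiftDiff E h}) ∂μ) +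
          ∫⁻ x in W, μ (ball 0 δ ∩ {h | x ∈ shiftDiff F h}) ∂μ :=
        lintegral_add_left (measurable_measure_inter_setOf_mem_shiftDiff hE) _
    _ ≤ C * ENNReal.ofReal δ * v + C * ENNReal.ofReal δ * v :=
        add_le_add (setLIntegral_measure_shiftDiff_le hE hCE)
          (setLIntegral_measure_shiftDiff_le hF hCF)
    _ = 2 * C * ENNReal.ofReal δ * (2 * (v / 2)) := by
        rw [ENNReal.mul_div_cancel two_ne_zero ofNat_ne_top]
        ring
    _ = 4 * C * ENNReal.ofReal δ * (v / 2) := by ring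

end Increments

/-! ### Compactness -/

section UltrafilterCauchy

lemma exists_mem_ultrafilter_forall_dist_lt {X Y ι : Type*} [PseudoMetricSpace X]
    [PseudoMetricSpace Y] (𝒰 : Ultrafilter ι) {f : ι → X → Y} (hf : UniformEquicontinuous f)
    (hcpt : ∀ x, ∃ S : Set Y, IsCompact S ∧ ∀ i, f i x ∈ S) {W : Set X} (hW : TotallyBounded W)
    {ε : ℝ} (hε : 0 < ε) : ∃ A ∈ 𝒰, ∀ i ∈ A, ∀ j ∈ A, ∀ x ∈ W, dist (f i x) (f j x) < ε := by
  obtain ⟨ρ, hρ, hclose⟩ := Metric.uniformEquicontinuous_iff.1 hf (ε / 4) (by positivity)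
  obtain ⟨T, -, hT, hWT⟩ := Metric.finite_approx_of_totallyBounded hW ρ hρ
  have hlim : ∀ x, ∃ y, Tendsto (fun i => f i x) 𝒰 (𝓝 y) := fun x => by
    obtain ⟨S, hS, hfS⟩ := hcpt x
    obtain ⟨y, -, hy⟩ := hS.ultrafilter_le_nhds (𝒰.map fun i => f i x)
      (tendsto_principal.2 (Eventually.of_forall hfS))
    exact ⟨y, hy⟩
  choose g hg using hlim
  have hnear : ∀ᶠ i in (𝒰 : Filter ι), ∀ y ∈ T, dist (f i y) (g y) < ε / 4 :=
    hT.eventually_all.2 fun y _ => (hg y).eventually (Metric.ball_mem_nhds _ (by positivity))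
  refine ⟨_, hnear, fun i hi j hj x hx => ?_⟩
  obtain ⟨y, hy, hxy⟩ := Set.mem_iUnion₂.1 (hWT hx)
  have hxyi := hclose x y hxy i
  have hxyj := hclose x y hxy j
  rw [dist_comm] at hxyj
  have hij : dist (f i y) (f j y) < ε / 4 + ε / 4 :=
    (dist_triangle_right _ _ (g y)).trans_lt (add_lt_add (hi y hy) (hj y hy))
  linarith [dist_triangle4 (f i x) (f i y) (f j y) (f j x)]

end UltrafilterCauchy

section BallAverages

variable {V : Type*} [NormedAddCommGroup V] [MeasurableSpace V] [BorelSpace V] [NormedSpace ℝ V]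
  [FiniteDimensional ℝ V] (μ : Measure V) [μ.IsAddHaarMeasure]

lemma measureReal_ball_inter_le_add (A : Set V) (x y : V) (r : ℝ) :
    μ.real (ball x r ∩ A) ≤
      μ.real (ball y r ∩ A) + (μ.real (ball 0 (r + dist x y)) - μ.real (ball 0 r)) := by
  have hfin : ∀ (z : V) (s : ℝ), μ (ball z s) ≠ ∞ := fun z s => measure_ball_lt_top.ne
  have hsub : ball x r ∩ A ⊆ (ball y r ∩ A) ∪ (ball y (r + dist x y) \ ball y r) := fun z hz =>
    (em (z ∈ ball y r)).imp (⟨·, hz.2⟩) (⟨ball_subset_ball' le_rfl hz.1, ·⟩)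
  have hdiff : μ.real (ball y (r + dist x y) \ ball y r) =
      μ.real (ball 0 (r + dist x y)) - μ.real (ball 0 r) := by
    rw [measureReal_sdiff (ball_subset_ball (by linarith [dist_nonneg (x := x) (y := y)]))
      measurableSet_ball, Measure.addHaar_real_ball_center μ y,
      Measure.addHaar_real_ball_center μ y]
  rw [← hdiff]
  exact (measureReal_mono hsub (measure_union_ne_top
    (measure_inter_ne_top_of_left_ne_top (hfin y r))
    (measure_ne_top_of_subset Set.sdiff_subset (hfin _ _)))).trans (measureReal_union_le _ _)

lemma measureReal_ball_eq_pow_finrank_mul {r : ℝ} (hr : 0 < r) :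
    μ.real (ball (0 : V) r) = r ^ Module.finrank ℝ V * μ.real (ball (0 : V) 1) := by
  rw [measureReal_def, Measure.addHaar_ball_of_pos μ 0 hr, toReal_mul,
    toReal_ofReal (by positivity), measureReal_def]

lemma uniformEquicontinuous_measureReal_ball_inter {ι : Type*} (E : ι → Set V) {r : ℝ}
    (hr : 0 < r) : UniformEquicontinuous fun i x => μ.real (ball x r ∩ E i) := by
  have hcont : Tendsto (fun ρ : ℝ => μ.real (ball (0 : V) (r + ρ)) - μ.real (ball (0 : V) r))
      (𝓝[≥] 0) (𝓝 0) := by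
    have hpow : Tendsto (fun ρ : ℝ => (r + ρ) ^ Module.finrank ℝ V * μ.real (ball (0 : V) 1) -
        μ.real (ball (0 : V) r)) (𝓝[≥] 0) (𝓝 ((r + 0) ^ Module.finrank ℝ V *
        μ.real (ball (0 : V) 1) - μ.real (ball (0 : V) r))) :=
      (Continuous.tendsto (by fun_prop) 0).mono_left nhdsWithin_le_nhds
    rw [add_zero, ← measureReal_ball_eq_pow_finrank_mul μ hr, sub_self] at hpow
    refine hpow.congr' ?_
    filter_upwards [self_mem_nhdsWithin] with ρ hρ
    rw [measureReal_ball_eq_pow_finrank_mul μ (add_pos_of_pos_of_nonneg hr hρ)]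
  refine Metric.uniformEquicontinuous_iff.2 fun ε hε => ?_
  obtain ⟨ρ, hρ, hsmall⟩ := mem_nhdsGE_iff_exists_Ico_subset.1 (hcont.eventually (gt_mem_nhds hε))
  refine ⟨ρ, hρ, fun x y hxy i => ?_⟩
  have hd := hsmall ⟨dist_nonneg, hxy⟩
  have hxy' := measureReal_ball_inter_le_add μ (E i) x y r
  have hyx := measureReal_ball_inter_le_add μ (E i) y x r
  rw [dist_comm y x] at hyx
  simp only [Set.mem_ofPred_eq] at hd
  exact abs_lt.2 ⟨by linarith, by linarith⟩

variable {μ}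

lemma exists_mem_ultrafilter_measure_symmDiff_le {ι : Type*} (𝒰 : Ultrafilter ι) {E : ι → Set V}
    (hE : ∀ i, MeasurableSet (E i)) {R : ℝ} {C : ℝ≥0∞} (hC : C ≠ ∞)
    (hEC : ∀ᶠ i in (𝒰 : Filter ι), ∀ h : V, ‖h‖ ≤ 1 →
      μ (closedBall 0 R ∩ shiftDiff (E i) h) ≤ C * ENNReal.ofReal ‖h‖) {ε : ℝ≥0∞} (hε : 0 < ε) :
    ∃ A ∈ 𝒰, ∀ i ∈ A, ∀ j ∈ A, μ (closedBall 0 R ∩ E i ∆ E j) ≤ ε := by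
  have hlim : Tendsto (fun δ : ℝ => 4 * C * ENNReal.ofReal δ) (𝓝[>] 0) (𝓝 0) := by
    simpa using ENNReal.Tendsto.const_mul
      ((ENNReal.continuous_ofReal.tendsto 0).mono_left nhdsWithin_le_nhds)
      (Or.inr (mul_ne_top ofNat_ne_top hC))
  obtain ⟨δ, hδε, hδ, hδ1⟩ :=
    ((hlim.eventually (ge_mem_nhds hε)).and (Ioc_mem_nhdsGT one_pos)).exists
  have hball : ∀ x, μ.real (ball x δ) = μ.real (ball (0 : V) δ) := fun x =>
    Measure.addHaar_real_ball_center μ x δ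
  have hpos : 0 < μ.real (ball (0 : V) δ) :=
    ENNReal.toReal_pos (measure_ball_pos _ _ hδ).ne' measure_ball_lt_top.ne
  obtain ⟨A, hA, hclose⟩ := exists_mem_ultrafilter_forall_dist_lt 𝒰
    (uniformEquicontinuous_measureReal_ball_inter μ E hδ)
    (fun x => ⟨Set.Icc 0 (μ.real (ball x δ)), isCompact_Icc, fun i => ⟨measureReal_nonneg,
      measureReal_mono Set.inter_subset_left measure_ball_lt_top.ne⟩⟩)
    (isCompact_closedBall (0 : V) R).totallyBounded (half_pos hpos)
  refine ⟨_, inter_mem hA hEC, fun i hi j hj => ?_⟩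
  have : ProperSpace V := FiniteDimensional.proper_real V
  refine (measure_inter_symmDiff_le (hE i) (hE j) measurableSet_closedBall hδ
    (fun h hh => hi.2 h (hh.le.trans hδ1)) (fun h hh => hj.2 h (hh.le.trans hδ1))
    fun x hx => ?_).trans hδε
  rw [hball]
  exact (hclose i hi.1 j hj.1 x hx).le

end BallAverages

section SetLimits

lemma eventually_mem_iff_mem_limsup {X : Type*} {E : ℕ → Set X} {x : X}
    (h : ∀ᶠ k in atTop, x ∉ E k ∆ E (k + 1)) : ∀ᶠ k in atTop, x ∈ E k ↔ x ∈ limsup E atTop := by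
  obtain ⟨N, hN⟩ := eventually_atTop.1 h
  have hconst : ∀ k ≥ N, (x ∈ E k ↔ x ∈ E N) := fun k hk => by
    induction k, hk using Nat.le_induction with
    | base => exact Iff.rfl
    | succ k hk ih =>
      have hstep := hN k hk
      simp only [Set.mem_symmDiff] at hstep
      tauto
  have hlimsup : x ∈ limsup E atTop ↔ x ∈ E N := by
    rw [mem_limsup_iff_frequently_mem, ← frequently_const (f := (atTop : Filter ℕ)) (p := x ∈ E N)]
    exact frequently_congr ((eventually_ge_atTop N).mono hconst)
  filter_upwards [eventually_ge_atTop N] with k hk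
  rw [hconst k hk, hlimsup]

variable {X : Type*} [MeasurableSpace X] {μ : Measure X} {E : ℕ → Set X}

lemma ae_eventually_mem_iff_mem_limsup {B : ℕ → Set X} (hB : ∀ x, ∀ᶠ k in atTop, x ∈ B k)
    (hsum : ∑' k, μ (B k ∩ E k ∆ E (k + 1)) ≠ ∞) :
    ∀ᵐ x ∂μ, ∀ᶠ k in atTop, x ∈ E k ↔ x ∈ limsup E atTop := by
  filter_upwards [ae_eventually_notMem hsum] with x hx
  refine eventually_mem_iff_mem_limsup ?_
  filter_upwards [hx, hB x] with k hk hBk using fun hmem => hk ⟨hBk, hmem⟩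

lemma tendsto_measure_inter_symmDiff_zero {W F : Set X} (hW : MeasurableSet W) (hWtop : μ W ≠ ∞)
    (hE : ∀ k, MeasurableSet (E k)) (hF : MeasurableSet F)
    (h : ∀ᵐ x ∂μ, ∀ᶠ k in atTop, x ∈ E k ↔ x ∈ F) :
    Tendsto (fun k => μ (W ∩ E k ∆ F)) atTop (𝓝 0) := by
  rw [← measure_empty (μ := μ)]
  refine tendsto_measure_of_ae_tendsto_indicator atTop MeasurableSet.empty
    (fun k => hW.inter ((hE k).symmDiff hF)) hW hWtop
    (.of_forall fun k => Set.inter_subset_left) ?_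
  filter_upwards [h] with x hx
  filter_upwards [hx] with k hk
  simp [Set.mem_symmDiff, hk]

lemma exists_subseq_tendsto_of_measure_shiftDiff_le {V : Type*} [NormedAddCommGroup V]
    [MeasurableSpace V] [BorelSpace V] [NormedSpace ℝ V] [FiniteDimensional ℝ V] {μ : Measure V}
    [μ.IsAddHaarMeasure] {E : ℕ → Set V} (hE : ∀ i, MeasurableSet (E i))
    (hC : ∀ R : ℝ, ∃ C : ℝ≥0∞, C ≠ ∞ ∧ ∀ᶠ i in atTop, ∀ h : V, ‖h‖ ≤ 1 →
      μ (closedBall 0 R ∩ shiftDiff (E i) h) ≤ C * ENNReal.ofReal ‖h‖) :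
    ∃ (F : Set V) (s : ℕ → ℕ), MeasurableSet F ∧ StrictMono s ∧
      (∀ᵐ x ∂μ, ∀ᶠ j in atTop, x ∈ E (s j) ↔ x ∈ F) ∧
      ∀ R : ℝ, Tendsto (fun j => μ (closedBall 0 R ∩ E (s j) ∆ F)) atTop (𝓝 0) := by
  have hle : (hyperfilter ℕ : Filter ℕ) ≤ atTop := Nat.hyperfilter_le_atTop
  have hCauchy : ∀ m : ℕ, ∃ A ∈ hyperfilter ℕ, ∀ i ∈ A, ∀ j ∈ A,
      μ (closedBall 0 (m : ℝ) ∩ E i ∆ E j) ≤ (1 / 2 : ℝ≥0∞) ^ m := fun m => by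
    obtain ⟨C, hCtop, hC⟩ := hC m
    exact exists_mem_ultrafilter_measure_symmDiff_le _ hE hCtop (hle hC)
      (pos_iff_ne_zero.2 (pow_ne_zero _ (by simp)))
  choose A hAU hA using hCauchy
  have hfreq : ∀ m, ∃ᶠ i in atTop, ∀ k ∈ Set.Iic m, i ∈ A k := fun m =>
    ((Set.finite_Iic m).eventually_all.2 fun k _ => hAU k).frequently.filter_mono hle
  obtain ⟨s, hs, hsA⟩ := extraction_forall_of_frequently hfreq
  have hsum : ∑' m : ℕ, μ (closedBall 0 (m : ℝ) ∩ E (s m) ∆ E (s (m + 1))) ≠ ∞ := by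
    refine ne_top_of_le_ne_top ?_ (ENNReal.tsum_le_tsum fun m =>
      hA m _ (hsA m m (Set.mem_Iic.2 le_rfl)) _ (hsA (m + 1) m m.le_succ))
    rw [ENNReal.tsum_geometric]
    simp
  have hexhaust : ∀ x : V, ∀ᶠ m : ℕ in atTop, x ∈ closedBall 0 (m : ℝ) := fun x => by
    filter_upwards [tendsto_natCast_atTop_atTop.eventually_ge_atTop ‖x‖] with m hm
    simpa using hm
  have hae := ae_eventually_mem_iff_mem_limsup (E := fun m => E (s m)) hexhaust hsum
  have hF : MeasurableSet (limsup (fun m => E (s m)) atTop) :=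
    MeasurableSet.measurableSet_limsup fun m => hE _
  exact ⟨_, s, hF, hs, hae, fun R => tendsto_measure_inter_symmDiff_zero measurableSet_closedBall
    measure_closedBall_lt_top.ne (fun m => hE _) hF hae⟩

end SetLimits

section DominationLimit

lemma inter_shiftDiff_subset {V : Type*} [NormedAddCommGroup V] (E F : Set V) {K : Set V} {R : ℝ}
    (hK : K ⊆ closedBall 0 R) (h : V) :
    K ∩ shiftDiff F h ⊆ (K ∩ shiftDiff E h) ∪ (closedBall 0 (R + ‖h‖) ∩ E ∆ F ∪
      (· + h) ⁻¹' (closedBall 0 (R + ‖h‖) ∩ E ∆ F)) := by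
  rintro x ⟨hxK, hx⟩
  have hxR : ‖x‖ ≤ R := by simpa using hK hxK
  have hxball : x ∈ closedBall 0 (R + ‖h‖) := by
    simpa using hxR.trans (le_add_of_nonneg_right (norm_nonneg h))
  have hxhball : x + h ∈ closedBall 0 (R + ‖h‖) := by
    simpa using (norm_add_le x h).trans (add_le_add_left hxR _)
  simp only [shiftDiff, Set.mem_union, Set.mem_inter_iff, Set.mem_symmDiff, Set.mem_preimage,
    hxball, hxhball, hxK, true_and] at hx ⊢
  tauto

lemma measure_inter_shiftDiff_le_add {V : Type*} [NormedAddCommGroup V] [MeasurableSpace V]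
    [MeasurableAdd V] (μ : Measure V) [μ.IsAddRightInvariant] (E F : Set V) {K : Set V} {R : ℝ}
    (hK : K ⊆ closedBall 0 R) (h : V) :
    μ (K ∩ shiftDiff F h) ≤
      μ (K ∩ shiftDiff E h) + 2 * μ (closedBall 0 (R + ‖h‖) ∩ E ∆ F) :=
  calc μ (K ∩ shiftDiff F h)
      ≤ μ (K ∩ shiftDiff E h) + (μ (closedBall 0 (R + ‖h‖) ∩ E ∆ F) + μ ((· + h) ⁻¹' _)) :=
        (measure_mono (inter_shiftDiff_subset E F hK h)).trans
          ((measure_union_le _ _).trans (by gcongr; exact measure_union_le _ _))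
    _ = _ := by rw [measure_preimage_add_right, two_mul]

lemma TendstoVaguely.const_smul {X ι : Type*} [TopologicalSpace X] [MeasurableSpace X]
    {l : Filter ι} {ν : ι → Measure X} {μ : Measure X} (h : TendstoVaguely l ν μ) (c : ℝ≥0∞) :
    TendstoVaguely l (fun i => c • ν i) (c • μ) := fun φ => by
  simpa only [integral_smul_measure] using (h φ).const_smul c.toReal

variable {n : ℕ} {ι : Type*} {l : Filter ι} [l.NeBot] {E : ι → Set (Eu n)} {F : Set (Eu n)}
  {ν : ι → Measure (Eu n)} {μ : Measure (Eu n)} [IsFiniteMeasure μ] [∀ i, IsFiniteMeasure (ν i)]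

lemma dominatesIncrements_of_tendstoVaguely {κ : ℝ≥0∞} (hκ : κ ≠ ∞) (hν : TendstoVaguely l ν μ)
    (hD : ∀ i, DominatesIncrements κ (E i) (ν i))
    (hEF : ∀ R : ℝ, Tendsto (fun i => volume (closedBall 0 R ∩ E i ∆ F)) l (𝓝 0)) :
    DominatesIncrements κ F μ := by
  intro K hK h
  have hκh : κ * ENNReal.ofReal ‖h‖ ≠ ∞ := mul_ne_top hκ ofReal_ne_top
  obtain ⟨R, hR⟩ := hK.isBounded.subset_closedBall 0
  have hbound : ∀ i, volume (K ∩ shiftDiff F h) ≤ κ * ENNReal.ofReal ‖h‖ * ν i (sweep K h) +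
      2 * volume (closedBall 0 (R + ‖h‖) ∩ E i ∆ F) := fun i =>
    (measure_inter_shiftDiff_le_add volume (E i) F hR h).trans (by gcongr; exact hD i K hK h)
  have he : Tendsto (fun i => 2 * volume (closedBall 0 (R + ‖h‖) ∩ E i ∆ F)) l (𝓝 0) := by
    simpa using ENNReal.Tendsto.const_mul (hEF (R + ‖h‖)) (Or.inr ofNat_ne_top)
  have : ∀ i, IsFiniteMeasure ((κ * ENNReal.ofReal ‖h‖) • ν i) := fun i => (ν i).smul_finite hκh
  have : IsFiniteMeasure ((κ * ENNReal.ofReal ‖h‖) • μ) := μ.smul_finite hκh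
  refine le_of_forall_lt fun c hc => ?_
  obtain ⟨d, hcd, hd⟩ := exists_between hc
  refine hcd.trans_le ((hν.const_smul (κ * ENNReal.ofReal ‖h‖)).le_measure_of_frequently_le
    (isCompact_sweep hK h) (Eventually.frequently ?_))
  filter_upwards [he.eventually (gt_mem_nhds (tsub_pos_of_lt hd))] with i hi
  by_contra! hlt
  have hsum := (hbound i).trans_lt (ENNReal.add_lt_add hlt hi)
  rw [add_tsub_cancel_of_le hd.le] at hsum
  exact lt_irrefl _ hsum

end DominationLimit

/-! ### The Gauss–Green formula -/

section ScaledIncrements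

lemma sweep_subset_cthickening {V : Type*} [NormedAddCommGroup V] [NormedSpace ℝ V] (K : Set V)
    (h : V) : sweep K h ⊆ cthickening ‖h‖ K := by
  rintro _ ⟨x, hx, s, hs, rfl⟩
  refine mem_cthickening_of_dist_le _ x _ _ hx ?_
  rw [dist_eq_norm, add_sub_cancel_left, norm_smul, Real.norm_of_nonneg hs.1]
  exact mul_le_of_le_one_left (norm_nonneg h) hs.2

lemma le_of_forall_measure_le_measure_cthickening {X : Type*} [MetricSpace X] [ProperSpace X]
    [MeasurableSpace X] [BorelSpace X] {σ μ : Measure X} [IsFiniteMeasure σ] [IsFiniteMeasure μ]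
    (h : ∀ K, IsCompact K → ∀ δ > 0, σ K ≤ μ (cthickening δ K)) : σ ≤ μ := by
  refine Measure.le_iff.2 fun s hs => ?_
  rw [hs.measure_eq_iSup_isCompact]
  refine iSup₂_le fun K hKs => iSup_le fun hK => le_trans ?_ (measure_mono hKs)
  refine ge_of_tendsto ((tendsto_measure_cthickening_of_isCompact hK).mono_left
    (nhdsWithin_le_nhds (s := Set.Ioi 0))) ?_
  filter_upwards [self_mem_nhdsWithin] with δ hδ using h K hK δ hδ

variable {n : ℕ} {κ : ℝ≥0∞} {E S : Set (Eu n)} {μ : Measure (Eu n)} {v : Eu n}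

lemma DominatesIncrements.volume_shiftDiff_le (hD : DominatesIncrements κ E μ) (h : Eu n) :
    volume (shiftDiff E h) ≤ κ * ENNReal.ofReal ‖h‖ * μ Set.univ := by
  have hunion : shiftDiff E h = ⋃ m : ℕ, closedBall 0 (m : ℝ) ∩ shiftDiff E h := by
    rw [← Set.iUnion_inter, iUnion_closedBall_nat, Set.univ_inter]
  have hmono : Monotone fun m : ℕ => closedBall 0 (m : ℝ) ∩ shiftDiff E h := fun a b hab =>
    Set.inter_subset_inter_left _ (closedBall_subset_closedBall (by exact_mod_cast hab))
  rw [hunion, hmono.measure_iUnion]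
  refine iSup_le fun m => (hD _ (isCompact_closedBall _ _) h).trans ?_
  gcongr
  exact Set.subset_univ _

lemma ofReal_inv_mul_ofReal_norm_smul_le (s : ℝ) (v : Eu n) (c : ℝ≥0∞) :
    ENNReal.ofReal s⁻¹ * (κ * ENNReal.ofReal ‖s • v‖ * c) ≤ κ * ENNReal.ofReal ‖v‖ * c := by
  rcases le_or_gt s 0 with hs | hs
  · simp [ENNReal.ofReal_of_nonpos (inv_nonpos.2 hs)]
  · rw [norm_smul, Real.norm_of_nonneg hs.le, ENNReal.ofReal_mul hs.le]
    have hcancel : ENNReal.ofReal s⁻¹ * ENNReal.ofReal s = 1 := by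
      rw [← ENNReal.ofReal_mul (inv_nonneg.2 hs.le), inv_mul_cancel₀ hs.ne', ofReal_one]
    refine le_of_eq ?_
    calc _ = (ENNReal.ofReal s⁻¹ * ENNReal.ofReal s) * (κ * ENNReal.ofReal ‖v‖ * c) := by ring
      _ = _ := by rw [hcancel, one_mul]

lemma DominatesIncrements.smul_restrict_univ_le (hD : DominatesIncrements κ E μ) {s : ℝ}
    (hS : S ⊆ shiftDiff E (s • v)) :
    (ENNReal.ofReal s⁻¹ • volume.restrict S) Set.univ ≤
      κ * ENNReal.ofReal ‖v‖ * μ Set.univ := by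
  rw [Measure.smul_apply, Measure.restrict_apply_univ, smul_eq_mul]
  refine le_trans ?_ (ofReal_inv_mul_ofReal_norm_smul_le s v (μ Set.univ))
  gcongr
  exact (measure_mono hS).trans (hD.volume_shiftDiff_le _)

lemma DominatesIncrements.smul_restrict_le (hD : DominatesIncrements κ E μ) {s : ℝ}
    (hS : S ⊆ shiftDiff E (s • v)) {K : Set (Eu n)} (hK : IsCompact K) :
    (ENNReal.ofReal s⁻¹ • volume.restrict S) K ≤
      κ * ENNReal.ofReal ‖v‖ * μ (cthickening ‖s • v‖ K) := by
  rw [Measure.smul_apply, Measure.restrict_apply hK.measurableSet, smul_eq_mul]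
  refine le_trans ?_ (ofReal_inv_mul_ofReal_norm_smul_le s v _)
  gcongr
  calc volume (K ∩ S) ≤ volume (K ∩ shiftDiff E (s • v)) := by gcongr
    _ ≤ κ * ENNReal.ofReal ‖s • v‖ * μ (sweep K (s • v)) := hD K hK _
    _ ≤ κ * ENNReal.ofReal ‖s • v‖ * μ (cthickening ‖s • v‖ K) := by
      gcongr
      exact sweep_subset_cthickening K _

lemma DominatesIncrements.exists_tendstoVaguely [IsFiniteMeasure μ]
    (hD : DominatesIncrements κ E μ) (hκ : κ ≠ ∞) {𝒰 : Ultrafilter ℝ} (h𝒰 : ↑𝒰 ≤ 𝓝[>] (0 : ℝ))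
    {S : ℝ → Set (Eu n)} (hS : ∀ s, S s ⊆ shiftDiff E (s • v)) :
    ∃ σ : Measure (Eu n), IsFiniteMeasure σ ∧ σ ≤ (κ * ENNReal.ofReal ‖v‖) • μ ∧
      TendstoVaguely (𝒰 : Filter ℝ) (fun s => ENNReal.ofReal s⁻¹ • volume.restrict (S s)) σ := by
  have hκv : κ * ENNReal.ofReal ‖v‖ ≠ ∞ := mul_ne_top hκ ofReal_ne_top
  have hmass := fun s => hD.smul_restrict_univ_le (hS s)
  have hMtop : κ * ENNReal.ofReal ‖v‖ * μ Set.univ ≠ ∞ := mul_ne_top hκv (measure_ne_top _ _)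
  obtain ⟨σ, hσM, hσ⟩ := _root_.exists_tendstoVaguely 𝒰 hMtop hmass
  have : ∀ s, IsFiniteMeasure (ENNReal.ofReal s⁻¹ • volume.restrict (S s)) := fun s =>
    ⟨(hmass s).trans_lt hMtop.lt_top⟩
  have hσfin : IsFiniteMeasure σ := ⟨hσM.trans_lt hMtop.lt_top⟩
  have : IsFiniteMeasure ((κ * ENNReal.ofReal ‖v‖) • μ) := μ.smul_finite hκv
  refine ⟨σ, hσfin, le_of_forall_measure_le_measure_cthickening fun K hK δ hδ => ?_, hσ⟩
  refine hσ.measure_le_of_frequently_le hK isOpen_thickening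
    (self_subset_thickening (half_pos hδ) K) (Eventually.frequently (h𝒰 ?_))
  have hstep : Tendsto (fun s : ℝ => ‖s • v‖) (𝓝[>] 0) (𝓝 0) := by
    have hcont : Continuous fun s : ℝ => ‖s • v‖ := by fun_prop
    simpa using (hcont.tendsto 0).mono_left nhdsWithin_le_nhds
  filter_upwards [hstep.eventually (ge_mem_nhds (half_pos hδ))] with s hs
  calc (ENNReal.ofReal s⁻¹ • volume.restrict (S s)) (thickening (δ / 2) K)
      ≤ (ENNReal.ofReal s⁻¹ • volume.restrict (S s)) (cthickening (δ / 2) K) :=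
        measure_mono (thickening_subset_cthickening _ _)
    _ ≤ κ * ENNReal.ofReal ‖v‖ * μ (cthickening ‖s • v‖ (cthickening (δ / 2) K)) :=
        hD.smul_restrict_le (hS s) hK.cthickening
    _ ≤ ((κ * ENNReal.ofReal ‖v‖) • μ) (cthickening δ K) := by
        rw [Measure.smul_apply, smul_eq_mul]
        gcongr
        refine (cthickening_cthickening_subset (norm_nonneg _) (half_pos hδ).le K).trans
          (cthickening_mono ?_ K)
        linarith

end ScaledIncrements

section DifferenceQuotient

variable {V : Type*} [NormedAddCommGroup V] [MeasurableSpace V] [BorelSpace V] {μ : Measure V}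
  [μ.IsAddHaarMeasure] {E : Set V} {φ : V → ℝ}

lemma setIntegral_shift_sdiff_sub (hE : MeasurableSet E) (hφ : Integrable φ μ) (a : V) :
    (∫ x in (· + a) ⁻¹' E \ E, φ x ∂μ) - ∫ x in E \ (· + a) ⁻¹' E, φ x ∂μ =
      ∫ x in E, (φ (x - a) - φ x) ∂μ := by
  have hshift : ∫ x in (· + a) ⁻¹' E, φ x ∂μ = ∫ x in E, φ (x - a) ∂μ := by
    simpa using (measurePreserving_add_right μ a).setIntegral_preimage_emb
      (measurableEmbedding_addRight a) (fun y => φ (y - a)) E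
  have hsplit := integral_inter_add_sdiff (μ := μ) (s := E) (f := φ)
    (hE.preimage (measurable_add_const a)) hφ.integrableOn
  have hsplit' := integral_inter_add_sdiff (μ := μ) (s := (· + a) ⁻¹' E) (f := φ) hE
    hφ.integrableOn
  rw [integral_sub (hφ.comp_sub_right a).integrableOn hφ.integrableOn, ← hshift, ← hsplit,
    ← hsplit', Set.inter_comm]
  ring

variable [NormedSpace ℝ V] [FiniteDimensional ℝ V]

lemma tendsto_setIntegral_differenceQuotient (hE : MeasurableSet E) (hφ : ContDiff ℝ 1 φ)
    (hc : HasCompactSupport φ) (v : V) :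
    Tendsto (fun s : ℝ => ∫ x in E, s⁻¹ * (φ (x + s • v) - φ x) ∂μ) (𝓝[>] 0)
      (𝓝 (∫ x in E, fderiv ℝ φ x v ∂μ)) := by
  obtain ⟨C, hC⟩ := hφ.lipschitzWith_of_hasCompactSupport hc one_ne_zero
  have : ProperSpace V := FiniteDimensional.proper_real V
  set W := cthickening ‖v‖ (tsupport φ)
  have hWc : IsCompact W := hc.cthickening
  have hEW : MeasurableSet (E ∩ W) := hE.inter hWc.measurableSet
  have hzero : ∀ x ∉ W, ∀ s ∈ Set.Icc (0 : ℝ) 1, φ (x + s • v) = 0 := fun x hx s hs => by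
    refine image_eq_zero_of_notMem_tsupport fun hmem => hx ?_
    refine mem_cthickening_of_dist_le _ _ _ _ hmem ?_
    rw [dist_self_add_right, norm_smul, Real.norm_of_nonneg hs.1]
    exact mul_le_of_le_one_left (norm_nonneg v) hs.2
  have hlocal : ∀ f : V → ℝ, (∀ x ∉ W, f x = 0) →
      ∫ x, f x * (E ∩ W).indicator 1 x ∂μ = ∫ x in E, f x ∂μ := fun f hf => by
    rw [setIntegral_eq_of_subset_of_forall_sdiff_eq_zero hE Set.inter_subset_left
      fun x hx => hf x fun hxW => hx.2 ⟨hx.1, hxW⟩, ← integral_indicator hEW]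
    refine integral_congr_ae (.of_forall fun x => ?_)
    by_cases hx : x ∈ E ∩ W <;> simp [hx]
  have hlim := hC.integral_inv_smul_sub_mul_tendsto_integral_lineDeriv_mul (μ := μ)
    (g := (E ∩ W).indicator 1) ((integrable_indicator_iff hEW).2 (integrableOn_const
      (measure_ne_top_of_subset Set.inter_subset_right hWc.measure_lt_top.ne))) v
  simp only [((hφ.differentiable one_ne_zero) _).lineDeriv_eq_fderiv] at hlim
  rw [hlocal _ fun x hx => ?_] at hlim
  · refine hlim.congr' ?_
    filter_upwards [Ioc_mem_nhdsGT one_pos] with s hs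
    refine hlocal _ fun x hx => ?_
    have hx0 := hzero x hx 0 ⟨le_rfl, zero_le_one⟩
    rw [zero_smul, add_zero] at hx0
    rw [hzero x hx s ⟨hs.1.le, hs.2⟩, hx0, sub_self, smul_zero]
  · have hx' : x ∉ tsupport φ := fun hmem => hx (self_subset_cthickening _ hmem)
    rw [image_eq_zero_of_notMem_tsupport fun hmem => hx' (tsupport_fderiv_subset ℝ hmem)]
    rfl

end DifferenceQuotient

section GaussGreen

variable {n : ℕ} {κ : ℝ≥0∞} {E : Set (Eu n)} {μ : Measure (Eu n)}

/-- The Gauss–Green formula holds for `E` with boundary measure `μ` and outer normal density `g`;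
equivalently, `-g • μ` is the distributional gradient of the indicator function of `E`. -/
def GaussGreen (E : Set (Eu n)) (μ : Measure (Eu n)) (g : Eu n → Eu n) : Prop :=
  ∀ φ : Eu n → ℝ, ContDiff ℝ 1 φ → HasCompactSupport φ → ∀ v : Eu n,
    ∫ x in E, fderiv ℝ φ x v = ∫ x, inner ℝ (g x) v * φ x ∂μ

variable [IsFiniteMeasure μ]

lemma DominatesIncrements.exists_setIntegral_fderiv_eq_sub (hD : DominatesIncrements κ E μ)
    (hκ : κ ≠ ∞) (hE : MeasurableSet E) (v : Eu n) :
    ∃ σ τ : Measure (Eu n), IsFiniteMeasure σ ∧ IsFiniteMeasure τ ∧ σ ≪ μ ∧ τ ≪ μ ∧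
      ∀ φ : Eu n → ℝ, ContDiff ℝ 1 φ → HasCompactSupport φ →
        ∫ x in E, fderiv ℝ φ x v = (∫ x, φ x ∂σ) - ∫ x, φ x ∂τ := by
  obtain ⟨𝒰, h𝒰⟩ := Ultrafilter.exists_le (𝓝[>] (0 : ℝ))
  obtain ⟨σ, hσfin, hσ, hσlim⟩ := hD.exists_tendstoVaguely (v := -v) hκ h𝒰
    (S := fun s => (· + s • -v) ⁻¹' E \ E) fun s => le_sup_right
  obtain ⟨τ, hτfin, hτ, hτlim⟩ := hD.exists_tendstoVaguely (v := -v) hκ h𝒰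
    (S := fun s => E \ (· + s • -v) ⁻¹' E) fun s => le_sup_left
  have hac : ∀ {ρ : Measure (Eu n)}, ρ ≤ (κ * ENNReal.ofReal ‖-v‖) • μ → ρ ≪ μ := fun hρ =>
    (Measure.absolutelyContinuous_of_le hρ).trans Measure.smul_absolutelyContinuous
  refine ⟨σ, τ, hσfin, hτfin, hac hσ, hac hτ, fun φ hφ hc => tendsto_nhds_unique
    ((tendsto_setIntegral_differenceQuotient hE hφ hc v).mono_left h𝒰) ?_⟩
  refine ((hσlim ⟨⟨φ, hφ.continuous⟩, hc⟩).sub (hτlim ⟨⟨φ, hφ.continuous⟩, hc⟩)).congr' ?_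
  filter_upwards [h𝒰 self_mem_nhdsWithin] with s hs
  have hshift := setIntegral_shift_sdiff_sub hE
    (hφ.continuous.integrable_of_hasCompactSupport (μ := volume) hc) (s • -v)
  simp only [smul_neg, sub_neg_eq_add] at hshift
  simp only [smul_neg, integral_smul_measure, smul_eq_mul,
    toReal_ofReal (inv_nonneg.2 (Set.mem_Ioi.1 hs).le), ← mul_sub, integral_const_mul]
  exact congrArg (s⁻¹ * ·) hshift

lemma DominatesIncrements.exists_setIntegral_fderiv_eq (hD : DominatesIncrements κ E μ)
    (hκ : κ ≠ ∞) (hE : MeasurableSet E) (v : Eu n) :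
    ∃ g : Eu n → ℝ, Integrable g μ ∧ ∀ φ : Eu n → ℝ, ContDiff ℝ 1 φ → HasCompactSupport φ →
      ∫ x in E, fderiv ℝ φ x v = ∫ x, g x * φ x ∂μ := by
  obtain ⟨σ, τ, _, _, hσ, hτ, hστ⟩ := hD.exists_setIntegral_fderiv_eq_sub hκ hE v
  have := Measure.haveLebesgueDecomposition_of_sigmaFinite σ μ
  have := Measure.haveLebesgueDecomposition_of_sigmaFinite τ μ
  refine ⟨fun x => (σ.rnDeriv μ x).toReal - (τ.rnDeriv μ x).toReal,
    Measure.integrable_toReal_rnDeriv.sub Measure.integrable_toReal_rnDeriv, fun φ hφ hc => ?_⟩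
  have hint : ∀ (ρ : Measure (Eu n)) [IsFiniteMeasure ρ], Integrable φ ρ := fun ρ _ =>
    hφ.continuous.integrable_of_hasCompactSupport hc
  rw [hστ φ hφ hc, ← integral_rnDeriv_smul hσ, ← integral_rnDeriv_smul hτ, ← integral_sub
    ((integrable_rnDeriv_smul_iff hσ).2 (hint σ)) ((integrable_rnDeriv_smul_iff hτ).2 (hint τ))]
  simp only [smul_eq_mul, sub_mul]

lemma DominatesIncrements.exists_gaussGreen (hD : DominatesIncrements κ E μ) (hκ : κ ≠ ∞)
    (hE : MeasurableSet E) : ∃ g : Eu n → Eu n, Integrable g μ ∧ GaussGreen E μ g := by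
  let b := EuclideanSpace.basisFun (Fin n) ℝ
  choose g hg hgE using fun i => hD.exists_setIntegral_fderiv_eq hκ hE (b i)
  refine ⟨fun x => ∑ i, g i x • b i, integrable_finsetSum _ fun i _ => (hg i).smul_const _,
    fun φ hφ hc v => ?_⟩
  have hfderiv : ∀ x, fderiv ℝ φ x v = ∑ i, inner ℝ (b i) v * fderiv ℝ φ x (b i) := fun x => by
    conv_lhs => rw [← b.sum_repr' v]
    simp only [map_sum, map_smul, smul_eq_mul]
  have hint : ∀ w : Eu n, Integrable fun x => fderiv ℝ φ x w := fun w =>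
    ((hφ.continuous_fderiv one_ne_zero).clm_apply
      continuous_const).integrable_of_hasCompactSupport (hc.fderiv_apply ℝ w)
  have hinner : ∀ x, inner ℝ (∑ i, g i x • b i) v * φ x =
      ∑ i, inner ℝ (b i) v * (g i x * φ x) := fun x => by
    simp only [sum_inner, real_inner_smul_left, Finset.sum_mul]
    exact Finset.sum_congr rfl fun i _ => by ring
  have hgφ : ∀ i, Integrable (fun x => g i x * φ x) μ := fun i => by
    obtain ⟨C, hC⟩ := hc.exists_bound_of_continuous hφ.continuous
    exact (hg i).mul_bdd (c := C) hφ.continuous.aestronglyMeasurable (.of_forall hC)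
  simp only [hfderiv, hinner]
  rw [integral_finsetSum _ fun i _ => ((hint _).const_mul _).integrableOn,
    integral_finsetSum _ fun i _ => (hgφ i).const_mul _]
  simp only [integral_const_mul, hgE _ φ hφ hc]

end GaussGreen

lemma ediam_closedBall_le_ofReal {X : Type*} [PseudoMetricSpace X] (x : X) (r : ℝ) :
    ediam (closedBall x r) ≤ ENNReal.ofReal (2 * r) :=
  ediam_le fun a ha b hb => by
    rw [edist_dist]
    have := dist_triangle_right a b x
    rw [mem_closedBall] at ha hb
    exact ENNReal.ofReal_le_ofReal (by linarith)

lemma rpow_le_ofReal_div_mul_of_le {a b : ℝ≥0∞} {d r w c : ℝ} (hd : 0 ≤ d) (hr : 0 ≤ r)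
    (hw : 0 ≤ w) (hc : 0 < c) (ha : a ≤ ENNReal.ofReal (r * w))
    (hb : ENNReal.ofReal (c * r ^ d) ≤ b) : a ^ d ≤ ENNReal.ofReal (w ^ d / c) * b :=
  calc a ^ d ≤ ENNReal.ofReal (r * w) ^ d := ENNReal.rpow_le_rpow ha hd
    _ = ENNReal.ofReal (w ^ d / c) * ENNReal.ofReal (c * r ^ d) := by
      rw [← ofReal_mul (by positivity), ofReal_rpow_of_nonneg (by positivity) hd,
        Real.mul_rpow hr hw]
      congr 1
      field_simp
    _ ≤ ENNReal.ofReal (w ^ d / c) * b := by gcongr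

section HausdorffCovering

variable {X : Type*} [MetricSpace X] [MeasurableSpace X] [BorelSpace X] {μ : Measure X} {d : ℝ}
  {A : Set X}

lemma hausdorffMeasure_le_mul_of_forall_exists_cover {ι : Type*} {c : ℝ≥0∞} {U : Set X}
    (h : ∀ ρ : ℝ, 0 < ρ → ∃ (u : Set ι) (B T : ι → Set X), u.Countable ∧ u.PairwiseDisjoint B ∧
      A ⊆ ⋃ a ∈ u, T a ∧ ∀ a ∈ u, MeasurableSet (B a) ∧ B a ⊆ U ∧
        ediam (T a) ≤ ENNReal.ofReal ρ ∧ ediam (T a) ^ d ≤ c * μ (B a)) :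
    μH[d] A ≤ c * μ U := by
  have hρ : ∀ k : ℕ, (0 : ℝ) < 1 / (k + 1) := fun k => Nat.one_div_pos_of_nat
  choose! u B T hu hdisj hcov hB hBU hTρ hT using fun k : ℕ => h _ (hρ k)
  have hcount : ∀ k, Countable (u k) := fun k => (hu k).to_subtype
  have hlim : Tendsto (fun k : ℕ => ENNReal.ofReal (1 / (k + 1))) atTop (𝓝 0) := by
    simpa using ENNReal.tendsto_ofReal (tendsto_one_div_add_atTop_nhds_zero_nat (𝕜 := ℝ))
  refine (Measure.hausdorffMeasure_le_liminf_tsum (ι := fun k => u k) d A _ hlim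
    (fun k a => T k a) (.of_forall fun k a => hTρ k a a.2) (.of_forall fun k => ?_)).trans
    (liminf_le_of_frequently_le' (Frequently.of_forall fun k => ?_))
  · simpa only [Set.biUnion_eq_iUnion] using hcov k
  calc ∑' a : u k, ediam (T k a) ^ d
      ≤ ∑' a : u k, c * μ (B k a) := ENNReal.tsum_le_tsum fun a => hT k a a.2
    _ = c * μ (⋃ a : u k, B k a) := by
      rw [ENNReal.tsum_mul_left, measure_iUnion ((hdisj k).subtype _ _) fun a => hB k a a.2]
    _ ≤ c * μ U := by
      gcongr
      exact Set.iUnion_subset fun a => hBU k a a.2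

variable [SecondCountableTopology X]

lemma hausdorffMeasure_le_mul_of_isOpen (hd : 0 ≤ d) {c : ℝ} (hc : 0 < c) {U : Set X}
    (hU : IsOpen U) (hAU : A ⊆ U)
    (h : ∀ x ∈ A, ∃ᶠ r in 𝓝[>] 0, ENNReal.ofReal (c * r ^ d) ≤ μ (closedBall x r)) :
    μH[d] A ≤ ENNReal.ofReal (10 ^ d / c) * μ U := by
  refine hausdorffMeasure_le_mul_of_forall_exists_cover (ι := X × ℝ) fun ρ hρ => ?_
  obtain ⟨u, hut, hdisj, hcov⟩ := Vitali.exists_disjoint_subfamily_covering_enlargement_closedBall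
    {p : X × ℝ | 0 < p.2 ∧ closedBall p.1 p.2 ⊆ U ∧ 10 * p.2 ≤ ρ ∧
      ENNReal.ofReal (c * p.2 ^ d) ≤ μ (closedBall p.1 p.2)}
    Prod.fst Prod.snd ρ (fun p hp => by linarith [hp.1, hp.2.2.1]) 5 (by norm_num)
  have hdiam : ∀ p : X × ℝ, ediam (closedBall p.1 (5 * p.2)) ≤ ENNReal.ofReal (10 * p.2) :=
    fun p => (ediam_closedBall_le_ofReal _ _).trans_eq (by ring_nf)
  refine ⟨u, fun p => closedBall p.1 p.2, fun p => closedBall p.1 (5 * p.2), ?_, hdisj, ?_,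
    fun p hp => ⟨measurableSet_closedBall, (hut hp).2.1,
      (hdiam p).trans (ENNReal.ofReal_le_ofReal (hut hp).2.2.1), ?_⟩⟩
  · exact hdisj.countable_of_nonempty_interior fun p hp =>
      ⟨p.1, ball_subset_interior_closedBall (mem_ball_self (hut hp).1)⟩
  · intro x hx
    obtain ⟨ε, hε, hεU⟩ := Metric.isOpen_iff.1 hU x (hAU hx)
    obtain ⟨r, hr, hr0, hr1⟩ := ((h x hx).and_eventually
      (Ioo_mem_nhdsGT (lt_min hε (div_pos hρ (by norm_num : (0 : ℝ) < 10))))).exists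
    obtain ⟨p, hp, hsub⟩ := hcov (x, r) ⟨hr0,
      (closedBall_subset_ball (hr1.trans_le (min_le_left _ _))).trans hεU,
      by linarith [hr1.trans_le (min_le_right _ _)], hr⟩
    exact Set.mem_biUnion hp (hsub (mem_closedBall_self hr0.le))
  · have hr := (hut hp).1
    refine rpow_le_ofReal_div_mul_of_le hd hr.le (by norm_num) hc ?_ (hut hp).2.2.2
    rw [mul_comm p.2]
    exact hdiam p

lemma hausdorffMeasure_le_mul_of_frequently_le [μ.OuterRegular] (hd : 0 ≤ d) {c : ℝ} (hc : 0 < c)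
    (h : ∀ x ∈ A, ∃ᶠ r in 𝓝[>] 0, ENNReal.ofReal (c * r ^ d) ≤ μ (closedBall x r)) :
    μH[d] A ≤ ENNReal.ofReal (10 ^ d / c) * μ A := by
  have hC0 : ENNReal.ofReal (10 ^ d / c) ≠ 0 := by
    simpa using (by positivity : (0 : ℝ) < 10 ^ d / c)
  refine ENNReal.le_of_forall_pos_le_add fun η hη _ => ?_
  obtain ⟨U, hAU, hUo, hU⟩ := A.exists_isOpen_le_add μ
    (ε := η / ENNReal.ofReal (10 ^ d / c))
    (ENNReal.div_ne_zero.2 ⟨by simpa using hη.ne', ofReal_ne_top⟩)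
  calc μH[d] A ≤ ENNReal.ofReal (10 ^ d / c) * μ U :=
        hausdorffMeasure_le_mul_of_isOpen hd hc hUo hAU h
    _ ≤ ENNReal.ofReal (10 ^ d / c) * (μ A + η / ENNReal.ofReal (10 ^ d / c)) := by gcongr
    _ = ENNReal.ofReal (10 ^ d / c) * μ A + η := by
        rw [mul_add, ENNReal.mul_div_cancel hC0 ofReal_ne_top]

lemma hausdorffMeasure_setOf_forall_frequently_le_eq_zero [IsFiniteMeasure μ] (hd : 0 ≤ d) :
    μH[d] {x : X | ∀ M : ℕ, ∃ᶠ r in 𝓝[>] 0,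
      ENNReal.ofReal ((M + 1) * r ^ d) ≤ μ (closedBall x r)} = 0 := by
  have hlim : Tendsto (fun M : ℕ => (10 : ℝ) ^ d / (M + 1)) atTop (𝓝 0) := by
    simpa [div_eq_mul_inv] using
      (tendsto_one_div_add_atTop_nhds_zero_nat (𝕜 := ℝ)).const_mul (10 ^ d)
  have hlim' := ENNReal.Tendsto.mul_const (ENNReal.tendsto_ofReal hlim)
    (Or.inr (measure_ne_top μ {x : X | ∀ M : ℕ, ∃ᶠ r in 𝓝[>] 0,
      ENNReal.ofReal ((M + 1) * r ^ d) ≤ μ (closedBall x r)}))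
  rw [ofReal_zero, zero_mul] at hlim'
  exact le_antisymm (ge_of_tendsto' hlim' fun M =>
    hausdorffMeasure_le_mul_of_frequently_le hd M.cast_add_one_pos fun x hx => hx M) zero_le

end HausdorffCovering

section IntermediateDensity

variable {n : ℕ} {E : Set (Eu n)} {x : Eu n}

lemma continuousOn_measureReal_inter_ball (E : Set (Eu n)) (x : Eu n) :
    ContinuousOn (fun r => volume.real (E ∩ ball x r)) (Set.Ioi 0) := fun r₀ hr₀ => by
  refine (ENNReal.tendsto_toReal (measure_inter_lt_top_of_right_ne_top
    measure_ball_lt_top.ne).ne).comp (Tendsto.mono_left ?_ nhdsWithin_le_nhds)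
  simp only [Set.inter_comm E, ← Measure.restrict_apply measurableSet_ball]
  refine tendsto_measure_of_ae_tendsto_indicator _ measurableSet_ball
    (fun r => measurableSet_ball) (measurableSet_ball (x := x) (ε := r₀ + 1))
    measure_ball_lt_top.ne ?_ ?_
  · filter_upwards [gt_mem_nhds (lt_add_one r₀)] with r hr using ball_subset_ball hr.le
  · have hsphere : volume (sphere x r₀) = 0 :=
      Measure.addHaar_sphere_of_ne_zero _ _ (Set.mem_Ioi.1 hr₀).ne'
    filter_upwards [ae_restrict_of_ae (measure_eq_zero_iff_ae_notMem.1 hsphere)] with y hy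
    rcases lt_or_gt_of_ne hy with hlt | hgt
    · filter_upwards [lt_mem_nhds hlt] with r hr using ⟨fun _ => hlt, fun _ => hr⟩
    · filter_upwards [gt_mem_nhds hgt] with r hr using
        ⟨fun h => absurd h hr.not_gt, fun h => absurd h hgt.not_gt⟩

lemma continuousOn_densityRatio (E : Set (Eu n)) (x : Eu n) :
    ContinuousOn (fun r => volume.real (E ∩ ball x r) / volume.real (ball x r)) (Set.Ioi 0) :=
  (continuousOn_measureReal_inter_ball E x).div
    (by simpa using continuousOn_measureReal_inter_ball Set.univ x)
    fun _ hr => (measureReal_ball_pos x hr).ne'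

lemma exists_frequently_densityRatio_mem_Icc (hx : x ∈ essBoundary E) :
    ∃ c ∈ Set.Ioo (0 : ℝ) 1, ∃ᶠ r in 𝓝[>] 0,
      volume.real (E ∩ ball x r) / volume.real (ball x r) ∈ Set.Icc c (1 - c) := by
  set f : ℝ → ℝ := fun r => volume.real (E ∩ ball x r) / volume.real (ball x r)
  have hf0 : ∀ r, 0 ≤ f r := fun r => by positivity
  have hf1 : ∀ r, f r ≤ 1 := fun r => div_le_one_of_le₀
    (measureReal_mono Set.inter_subset_right measure_ball_lt_top.ne) measureReal_nonneg
  have hfreq : ∀ d : ℝ, ¬ Tendsto f (𝓝[>] 0) (𝓝 d) →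
      ∃ η > 0, ∃ᶠ r in 𝓝[>] (0 : ℝ), η ≤ |f r - d| := fun d hd => by
    rw [Metric.tendsto_nhds] at hd
    push Not at hd
    simpa [Real.dist_eq] using hd
  obtain ⟨a, ha, hfa⟩ := hfreq 0 hx.1
  obtain ⟨b, hb, hfb⟩ := hfreq 1 hx.2
  obtain ⟨c, hc0, hc⟩ := exists_between (lt_min (lt_min ha hb) (one_half_pos (α := ℝ)))
  obtain ⟨⟨hca, hcb⟩, hc2⟩ := (lt_min_iff.1 hc).imp_left lt_min_iff.1
  refine ⟨c, ⟨hc0, by linarith⟩, (nhdsGT_basis 0).frequently_iff.2 fun ε hε => ?_⟩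
  have hI : ∀ᶠ r in 𝓝[>] (0 : ℝ), r ∈ Set.Ioo 0 ε := Ioo_mem_nhdsGT hε
  obtain ⟨p, hp, hpI⟩ := (hfa.and_eventually hI).exists
  obtain ⟨q, hq, hqI⟩ := (hfb.and_eventually hI).exists
  rw [sub_zero, abs_of_nonneg (hf0 p)] at hp
  rw [abs_of_nonpos (by linarith [hf1 q])] at hq
  by_cases hp1 : f p ≤ 1 - c
  · exact ⟨p, hpI, by linarith, hp1⟩
  by_cases hq1 : c ≤ f q
  · exact ⟨q, hqI, hq1, by linarith⟩
  obtain ⟨r, hr, hfr⟩ := isPreconnected_Ioo.intermediate_value hqI hpI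
    ((continuousOn_densityRatio E x).mono fun r hr => hr.1)
    (show (1 / 2 : ℝ) ∈ Set.Icc (f q) (f p) from ⟨by linarith, by linarith⟩)
  exact ⟨r, hr, by linarith, by linarith⟩

end IntermediateDensity

section RelativeIsoperimetry

variable {n : ℕ} {κ : ℝ≥0∞} {E : Set (Eu n)} {μ : Measure (Eu n)} {x : Eu n}

lemma measure_ball_sdiff_le_measure_setOf_mem_shiftDiff {y : Eu n} {r : ℝ} (hyE : y ∈ E)
    (hy : y ∈ ball x r) :
    volume (ball x r \ E) ≤ volume (ball 0 (2 * r) ∩ {h | y ∈ shiftDiff E h}) := by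
  rw [← measure_preimage_add volume y (ball x r \ E)]
  refine measure_mono fun h ⟨hh, hhE⟩ => ⟨?_, Or.inl ⟨hyE, hhE⟩⟩
  rw [mem_ball_zero_iff, ← dist_self_add_left h y]
  exact (dist_triangle_right _ _ x).trans_lt (by linarith [mem_ball.1 hh, mem_ball.1 hy])

lemma DominatesIncrements.volume_inter_ball_mul_le (hD : DominatesIncrements κ E μ)
    (hE : MeasurableSet E) (x : Eu n) (r : ℝ) :
    volume (E ∩ ball x r) * volume (ball x r \ E) ≤
      volume (ball (0 : Eu n) (2 * r)) *
        (κ * ENNReal.ofReal (2 * r) * μ (closedBall x (3 * r))) := by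
  calc volume (E ∩ ball x r) * volume (ball x r \ E)
      = ∫⁻ _ in E ∩ ball x r, volume (ball x r \ E) := by rw [setLIntegral_const, mul_comm]
    _ ≤ ∫⁻ y in E ∩ ball x r, volume (ball 0 (2 * r) ∩ {h | y ∈ shiftDiff E h}) :=
      setLIntegral_mono' (hE.inter measurableSet_ball) fun y hy =>
        measure_ball_sdiff_le_measure_setOf_mem_shiftDiff hy.1 hy.2
    _ ≤ ∫⁻ y in ball x r, volume (ball 0 (2 * r) ∩ {h | y ∈ shiftDiff E h}) :=
      lintegral_mono_set Set.inter_subset_right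
    _ = ∫⁻ h in ball 0 (2 * r), volume (ball x r ∩ shiftDiff E h) :=
      setLIntegral_measure_shiftDiff hE
    _ ≤ ∫⁻ _ in ball (0 : Eu n) (2 * r),
          κ * ENNReal.ofReal (2 * r) * μ (closedBall x (3 * r)) := by
      refine setLIntegral_mono' measurableSet_ball fun h hh => ?_
      rw [mem_ball_zero_iff] at hh
      refine (measure_mono (Set.inter_subset_inter_left _ ball_subset_closedBall)).trans
        ((hD _ (isCompact_closedBall _ _) h).trans ?_)
      gcongr
      refine (sweep_subset_cthickening _ _).trans ?_
      rcases le_or_gt 0 r with hr | hr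
      · rw [cthickening_closedBall (norm_nonneg h) hr]
        exact closedBall_subset_closedBall (by linarith)
      · linarith [norm_nonneg h]
    _ = _ := by rw [setLIntegral_const, mul_comm]

lemma DominatesIncrements.mul_rpow_le_measureReal_closedBall [IsFiniteMeasure μ]
    (hD : DominatesIncrements κ E μ) (hκ : κ ≠ ∞) (hE : MeasurableSet E) {c r : ℝ} (hc : 0 ≤ c)
    (hr : 0 < r)
    (hcr : volume.real (E ∩ ball x r) / volume.real (ball x r) ∈ Set.Icc c (1 - c)) :
    c ^ 2 * volume.real (ball (0 : Eu n) 1) / (2 ^ (n + 1) * (κ.toReal + 1)) *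
      r ^ ((n : ℝ) - 1) ≤ μ.real (closedBall x (3 * r)) := by
  set ω := volume.real (ball (0 : Eu n) 1)
  have hω0 : 0 < ω := measureReal_ball_pos 0 one_pos
  have hvol : ∀ (y : Eu n) {ρ : ℝ}, 0 < ρ → volume.real (ball y ρ) = ρ ^ n * ω :=
    fun y ρ hρ => by
      rw [measureReal_def, volume_ball_eq_ofReal_pow_mul y hρ, toReal_mul,
        toReal_ofReal (by positivity)]
      rfl
  have hsplit := measureReal_inter_ball_add_compl hE x r
  rw [Set.inter_comm Eᶜ, ← Set.sdiff_eq] at hsplit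
  obtain ⟨hin, hout⟩ := hcr
  rw [le_div_iff₀ (measureReal_ball_pos x hr)] at hin
  rw [div_le_iff₀ (measureReal_ball_pos x hr)] at hout
  have hiso : volume.real (E ∩ ball x r) * volume.real (ball x r \ E) ≤
      volume.real (ball (0 : Eu n) (2 * r)) *
        (κ.toReal * (2 * r) * μ.real (closedBall x (3 * r))) := by
    have := ENNReal.toReal_mono (by finiteness) (hD.volume_inter_ball_mul_le hE x r)
    simpa only [toReal_mul, toReal_ofReal (by positivity : 0 ≤ 2 * r), measureReal_def] using this
  rw [hvol x hr] at hin hout hsplit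
  rw [hvol 0 (by positivity)] at hiso
  have hmul := (mul_le_mul hin (by linarith : c * (r ^ n * ω) ≤ volume.real (ball x r \ E))
    (by positivity) measureReal_nonneg).trans hiso
  rw [Real.rpow_sub_one hr.ne', Real.rpow_natCast, div_mul_div_comm, div_le_iff₀ (by positivity)]
  refine le_of_mul_le_mul_left ?_ (by positivity : 0 < r ^ n * ω)
  calc r ^ n * ω * (c ^ 2 * ω * r ^ n) = c * (r ^ n * ω) * (c * (r ^ n * ω)) := by ring
    _ ≤ (2 * r) ^ n * ω * (κ.toReal * (2 * r) * μ.real (closedBall x (3 * r))) := hmul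
    _ ≤ (2 * r) ^ n * ω * ((κ.toReal + 1) * (2 * r) * μ.real (closedBall x (3 * r))) := by
      gcongr
      linarith
    _ = r ^ n * ω * (μ.real (closedBall x (3 * r)) * (2 ^ (n + 1) * (κ.toReal + 1) * r)) := by
      ring

lemma tendsto_const_mul_nhdsGT_zero {c : ℝ} (hc : 0 < c) :
    Tendsto (c * ·) (𝓝[>] 0) (𝓝[>] 0) :=
  tendsto_iff_comap.2 (comap_mulLeft_nhdsGT_zero hc).ge

lemma DominatesIncrements.exists_frequently_mul_rpow_le [IsFiniteMeasure μ]
    (hD : DominatesIncrements κ E μ) (hκ : κ ≠ ∞) (hE : MeasurableSet E)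
    (hx : x ∈ essBoundary E) :
    ∃ c > 0, ∃ᶠ r in 𝓝[>] 0, ENNReal.ofReal (c * r ^ ((n : ℝ) - 1)) ≤ μ (closedBall x r) := by
  obtain ⟨c, ⟨hc0, -⟩, hc⟩ := exists_frequently_densityRatio_mem_Icc hx
  have hω0 : 0 < volume.real (ball (0 : Eu n) 1) := measureReal_ball_pos 0 one_pos
  refine ⟨c ^ 2 * volume.real (ball (0 : Eu n) 1) / (2 ^ (n + 1) * (κ.toReal + 1)) /
    3 ^ ((n : ℝ) - 1), by positivity, (tendsto_const_mul_nhdsGT_zero three_pos).frequently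
    ((hc.and_eventually self_mem_nhdsWithin).mono fun r ⟨hcr, hr⟩ =>
      ENNReal.ofReal_le_of_le_toReal ((le_of_eq ?_).trans
        (hD.mul_rpow_le_measureReal_closedBall hκ hE hc0.le hr hcr)))⟩
  rw [Real.mul_rpow (by norm_num) (Set.mem_Ioi.1 hr).le]
  field_simp

lemma DominatesIncrements.hausdorffMeasure_eq_zero [IsFiniteMeasure μ]
    (hD : DominatesIncrements κ E μ) (hn : 1 ≤ n) (hκ : κ ≠ ∞) (hE : MeasurableSet E)
    {A : Set (Eu n)} (hA : A ⊆ essBoundary E) (hμA : μ A = 0) : μH[(n : ℝ) - 1] A = 0 := by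
  have hd : (0 : ℝ) ≤ n - 1 := sub_nonneg.2 (by exact_mod_cast hn)
  let S : ℕ → Set (Eu n) := fun m => {x ∈ A | ∃ᶠ r in 𝓝[>] 0,
    ENNReal.ofReal (1 / (m + 1) * r ^ ((n : ℝ) - 1)) ≤ μ (closedBall x r)}
  have hsub : A ⊆ ⋃ m, S m := fun x hx => by
    obtain ⟨c, hc, hfreq⟩ := hD.exists_frequently_mul_rpow_le hκ hE (hA hx)
    obtain ⟨m, hm⟩ := exists_nat_one_div_lt hc
    refine Set.mem_iUnion.2 ⟨m, hx, (hfreq.and_eventually self_mem_nhdsWithin).mono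
      fun r ⟨hr, hr0⟩ => le_trans ?_ hr⟩
    have : 0 ≤ r := (Set.mem_Ioi.1 hr0).le
    gcongr
  refine measure_mono_null hsub (measure_iUnion_null fun m => le_antisymm ?_ zero_le)
  calc μH[(n : ℝ) - 1] (S m) ≤ _ * μ (S m) :=
        hausdorffMeasure_le_mul_of_frequently_le hd Nat.one_div_pos_of_nat fun x hx => hx.2
    _ = 0 := by rw [measure_mono_null (Set.sep_subset _ _) hμA, mul_zero]

end RelativeIsoperimetry

/-! ### Blow-ups are half-spaces -/

section Mollify

open scoped Convolution

variable {V : Type*} [NormedAddCommGroup V] [InnerProductSpace ℝ V]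

variable (V) in
/-- The bump functions, shrinking to the origin, used as mollifiers. -/
def mollifier (k : ℕ) : ContDiffBump (0 : V) where
  rIn := 1 / ((k : ℝ) + 1)
  rOut := 2 / ((k : ℝ) + 1)
  rIn_pos := by positivity
  rIn_lt_rOut := by gcongr; norm_num

variable [FiniteDimensional ℝ V] [MeasurableSpace V] [BorelSpace V] {F : Set V}

/-- The indicator function of `F` smoothed at scale `1 / k`. -/
def mollify (F : Set V) (k : ℕ) : V → ℝ :=
  F.indicator (1 : V → ℝ) ⋆[ContinuousLinearMap.lsmul ℝ ℝ, volume]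
    (mollifier V k).normed volume

lemma locallyIntegrable_indicator_one (hF : MeasurableSet F) :
    LocallyIntegrable (F.indicator (1 : V → ℝ)) :=
  (locallyIntegrable_const (1 : ℝ)).indicator hF

lemma mollify_le_one (hF : MeasurableSet F) (k : ℕ) (w : V) : mollify F k w ≤ 1 := by
  calc mollify F k w = ∫ y in F, (mollifier V k).normed volume (w - y) := by
        rw [mollify, convolution_def, ← integral_indicator hF]
        refine integral_congr_ae (.of_forall fun y => ?_)
        by_cases hy : y ∈ F <;> simp [hy]
    _ ≤ ∫ y, (mollifier V k).normed volume (w - y) :=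
        setIntegral_le_integral ((mollifier V k).integrable_normed.comp_sub_left w)
          (.of_forall fun y => (mollifier V k).nonneg_normed _)
    _ = 1 := by
        rw [integral_sub_left_eq_self ((mollifier V k).normed volume) volume w]
        exact (mollifier V k).integral_normed

lemma ae_tendsto_mollify (hF : MeasurableSet F) :
    ∀ᵐ w, Tendsto (fun k => mollify F k w) atTop (𝓝 (F.indicator (1 : V → ℝ) w)) := by
  have hrOut : Tendsto (fun k => (mollifier V k).rOut) atTop (𝓝 0) := by
    have hlim := (tendsto_one_div_add_atTop_nhds_zero_nat (𝕜 := ℝ)).const_mul 2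
    rw [mul_zero] at hlim
    refine hlim.congr fun k => ?_
    simp only [mollifier]
    ring
  have hratio : ∀ k, (mollifier V k).rOut ≤ 2 * (mollifier V k).rIn := fun k =>
    le_of_eq (by simp only [mollifier]; ring)
  filter_upwards [ContDiffBump.ae_convolution_tendsto_right_of_locallyIntegrable (μ := volume)
    (φ := mollifier V) hrOut (.of_forall hratio) (locallyIntegrable_indicator_one hF)] with w hw
  refine hw.congr fun k => ?_
  rw [mollify, convolution_lsmul_swap, convolution_def]
  simp [mul_comm]

lemma exists_hasFDerivAt_mollify (hF : MeasurableSet F) (k : ℕ) (w : V) :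
    ∃ φ : V → ℝ, ContDiff ℝ 1 φ ∧ HasCompactSupport φ ∧ (∀ y, 0 ≤ φ y) ∧
      ∃ D : V →L[ℝ] ℝ, HasFDerivAt (mollify F k) D w ∧ ∀ v, D v = -∫ y in F, fderiv ℝ φ y v := by
  set ψ := (mollifier V k).normed volume
  have hψ : ContDiff ℝ 1 ψ := (mollifier V k).contDiff_normed
  have hψc : HasCompactSupport ψ := (mollifier V k).hasCompactSupport_normed
  refine ⟨fun y => ψ (w - y), hψ.comp (contDiff_const.sub contDiff_id),
    hψc.comp_homeomorph (Homeomorph.subLeft w), fun y => (mollifier V k).nonneg_normed _, _,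
    hψc.hasFDerivAt_convolution_right (ContinuousLinearMap.lsmul ℝ ℝ)
      (locallyIntegrable_indicator_one hF) hψ w, fun v => ?_⟩
  rw [convolution_precompR_apply _ (locallyIntegrable_indicator_one hF) (hψc.fderiv ℝ)
    (hψ.continuous_fderiv one_ne_zero), convolution_def, ← integral_neg, ← integral_indicator hF]
  refine integral_congr_ae (.of_forall fun y => ?_)
  have hreflect : HasFDerivAt (fun y => ψ (w - y))
      ((fderiv ℝ ψ (w - y)).comp (-(ContinuousLinearMap.id ℝ V))) y :=
    (hψ.differentiable one_ne_zero).differentiableAt.hasFDerivAt.comp y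
      ((hasFDerivAt_id y).const_sub w)
  by_cases hy : y ∈ F <;> simp [hy, hreflect.fderiv]

/-- The indicator function of `F` has nonpositive distributional derivative in direction `v`. -/
def IsDecreasingAlong (F : Set V) (v : V) : Prop :=
  ∀ φ : V → ℝ, ContDiff ℝ 1 φ → HasCompactSupport φ → (∀ y, 0 ≤ φ y) →
    0 ≤ ∫ x in F, fderiv ℝ φ x v

lemma IsDecreasingAlong.antitone_mollify {v : V} (hv : IsDecreasingAlong F v)
    (hF : MeasurableSet F) (k : ℕ) (w : V) : Antitone fun s : ℝ => mollify F k (w + s • v) := by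
  have hderiv : ∀ s : ℝ, ∃ d ≤ 0, HasDerivAt (fun s : ℝ => mollify F k (w + s • v)) d s := by
    intro s
    obtain ⟨φ, hφ, hφc, hφ0, D, hD, hDv⟩ := exists_hasFDerivAt_mollify hF k (w + s • v)
    have hline : HasDerivAt (fun s : ℝ => w + s • v) v s := by
      simpa using ((hasDerivAt_id s).smul_const v).const_add w
    refine ⟨D v, ?_, hD.comp_hasDerivAt s hline⟩
    rw [hDv]
    exact neg_nonpos.2 (hv φ hφ hφc hφ0)
  choose d hd0 hd using hderiv
  exact antitone_of_deriv_nonpos (fun s => (hd s).differentiableAt) fun s =>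
    (hd s).deriv.trans_le (hd0 s)

end Mollify

section HalfSpace

lemma exists_threshold {X : Type*} {f : X → ℝ} {P : X → Prop}
    (hP : ∀ w w', P w → f w' ≤ f w → P w') {a b : X} (ha : P a) (hb : ¬P b) :
    ∃ t ∈ Set.Icc (f a) (f b), ∀ y, (f y < t → P y) ∧ (t < f y → ¬P y) := by
  have hbound : ∀ s ∈ f '' {w | P w}, s ≤ f b := by
    rintro _ ⟨w, hw, rfl⟩
    exact (not_le.1 fun hle => hb (hP w b hw hle)).le
  refine ⟨sSup (f '' {w | P w}), ⟨le_csSup ⟨_, hbound⟩ ⟨a, ha, rfl⟩,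
    csSup_le ⟨_, a, ha, rfl⟩ hbound⟩, fun y => ⟨fun hy => ?_, fun hy hPy => ?_⟩⟩
  · obtain ⟨_, ⟨w, hw, rfl⟩, hlt⟩ := exists_lt_of_lt_csSup (Set.Nonempty.image f ⟨a, ha⟩) hy
    exact hP w y hw hlt.le
  · exact hy.not_ge (le_csSup ⟨_, hbound⟩ ⟨y, hPy, rfl⟩)

variable {V : Type*} [NormedAddCommGroup V] [InnerProductSpace ℝ V] [FiniteDimensional ℝ V]
  [MeasurableSpace V] [BorelSpace V] {F : Set V} {ν : V}

lemma volume_hyperplane_eq_zero (hν : ν ≠ 0) (a : ℝ) : volume {y : V | inner ℝ y ν = a} = 0 := by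
  rcases Set.eq_empty_or_nonempty {y : V | inner ℝ y ν = a} with hempty | ⟨y₀, hy₀ : _ = a⟩
  · rw [hempty, measure_empty]
  have hker : (innerSL ℝ ν).ker ≠ ⊤ := fun htop => by
    have hmem : ν ∈ (innerSL ℝ ν).ker := htop ▸ Submodule.mem_top
    exact hν (inner_self_eq_zero.1 hmem)
  rw [← measure_preimage_add_right volume y₀]
  refine measure_mono_null (fun y hy => ?_) (Measure.addHaar_submodule volume _ hker)
  rw [Set.mem_preimage, Set.mem_ofPred_eq, inner_add_left, hy₀, add_eq_right] at hy
  exact (real_inner_comm _ _).trans hy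

lemma exists_ae_eq_halfSpace (hF : MeasurableSet F) (hν : ‖ν‖ = 1)
    (hdec : ∀ v, 0 ≤ (inner ℝ v ν : ℝ) → IsDecreasingAlong F v)
    (hin : volume (F ∩ ball 0 1) ≠ 0) (hout : volume (ball 0 1 \ F) ≠ 0) :
    ∃ t : ℝ, |t| ≤ 1 ∧ F =ᵐ[volume] {y | inner ℝ y ν < t} := by
  let P : V → Prop := fun w => Tendsto (fun k => mollify F k w) atTop (𝓝 1)
  have hPF : ∀ᵐ w, w ∈ F ↔ P w := by
    filter_upwards [ae_tendsto_mollify hF] with w hw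
    by_cases hwF : w ∈ F
    · simpa [hwF, P] using hw
    · simp only [Set.indicator_of_notMem hwF] at hw
      simpa [hwF, P] using fun hw' => zero_ne_one (tendsto_nhds_unique hw hw')
  have hP : ∀ w w', P w → (inner ℝ w' ν : ℝ) ≤ inner ℝ w ν → P w' := fun w w' hw hle => by
    refine tendsto_of_tendsto_of_tendsto_of_le_of_le hw tendsto_const_nhds (fun k => ?_)
      fun k => mollify_le_one hF k w'
    have hv : 0 ≤ (inner ℝ (w - w') ν : ℝ) := by rwa [inner_sub_left, sub_nonneg]
    simpa using (hdec _ hv).antitone_mollify hF k w' zero_le_one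
  have hmeet : ∀ S : Set V, volume S ≠ 0 → ∃ w ∈ S, w ∈ F ↔ P w := fun S hS =>
    ((frequently_ae_iff.2 hS).and_eventually hPF).exists
  have hunit : ∀ w ∈ ball (0 : V) 1, |(inner ℝ w ν : ℝ)| ≤ 1 := fun w hw =>
    (abs_inner_le_norm_of_unit hν w).trans (mem_ball_zero_iff.1 hw).le
  obtain ⟨a, ⟨haF, ha⟩, haP⟩ := hmeet _ hin
  obtain ⟨b, ⟨hb, hbF⟩, hbP⟩ := hmeet _ hout
  obtain ⟨t, ht, htP⟩ := exists_threshold hP (haP.1 haF) (mt hbP.2 hbF)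
  refine ⟨t, abs_le.2 ⟨(abs_le.1 (hunit a ha)).1.trans ht.1,
    ht.2.trans (abs_le.1 (hunit b hb)).2⟩, ?_⟩
  have hν0 : ν ≠ 0 := norm_ne_zero_iff.1 (hν ▸ one_ne_zero)
  filter_upwards [hPF, measure_eq_zero_iff_ae_notMem.1 (volume_hyperplane_eq_zero hν0 t)]
    with y hy hyt
  refine propext (hy.trans ⟨fun hPy => ?_, (htP y).1⟩)
  exact lt_of_le_of_ne (not_lt.1 fun hlt => (htP y).2 hlt hPy) hyt

end HalfSpace

section Zoom

variable {V : Type*} [NormedAddCommGroup V] [NormedSpace ℝ V] {x : V} {r : ℝ}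

/-- The affine map sending the unit ball around the origin to the ball of radius `r` around `x`. -/
def zoom (x : V) (r : ℝ) (y : V) : V :=
  x + r • y

/-- The set `E` seen from `x` at scale `r`, that is `(E - x) / r`. -/
def blowup (E : Set V) (x : V) (r : ℝ) : Set V :=
  zoom x r ⁻¹' E

lemma isHomeomorph_zoom (x : V) (hr : r ≠ 0) : IsHomeomorph (zoom x r) :=
  ((Homeomorph.smulOfNeZero r hr).trans (Homeomorph.addLeft x)).isHomeomorph

lemma measurableEmbedding_zoom [MeasurableSpace V] [BorelSpace V] (x : V) (hr : r ≠ 0) :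
    MeasurableEmbedding (zoom x r) :=
  (isHomeomorph_zoom x hr).isClosedEmbedding.measurableEmbedding

lemma image_zoom (x : V) (r : ℝ) (S : Set V) : zoom x r '' S = x +ᵥ r • S :=
  (Set.image_image (x + ·) (r • ·) S).symm

lemma image_zoom_closedBall (x : V) (hr : 0 < r) (R : ℝ) :
    zoom x r '' closedBall 0 R = closedBall x (r * R) := by
  rw [image_zoom, smul_closedBall' hr.ne', vadd_closedBall, smul_zero, vadd_eq_add, add_zero,
    Real.norm_of_nonneg hr.le]

lemma image_zoom_ball (x : V) (hr : 0 < r) (R : ℝ) : zoom x r '' ball 0 R = ball x (r * R) := by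
  rw [image_zoom, _root_.smul_ball hr.ne', vadd_ball, smul_zero, vadd_eq_add, add_zero,
    Real.norm_of_nonneg hr.le]

lemma ediam_image_zoom (x : V) (hr : 0 ≤ r) (S : Set V) :
    ediam (zoom x r '' S) = ENNReal.ofReal r * ediam S := by
  rw [image_zoom, ediam_vadd, ediam_smul₀, ENNReal.smul_def, smul_eq_mul, ENNReal.ofReal,
    Real.nnnorm_of_nonneg hr, Real.toNNReal_of_nonneg hr]

lemma nonempty_interior_image_zoom (x : V) (hr : r ≠ 0) {S : Set V} (hS : (interior S).Nonempty) :
    (interior (zoom x r '' S)).Nonempty :=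
  (hS.image (zoom x r)).mono ((isHomeomorph_zoom x hr).isOpenMap.image_interior_subset S)

lemma sweep_image_zoom (x : V) (r : ℝ) (K : Set V) (h : V) :
    sweep (zoom x r '' K) (r • h) = zoom x r '' sweep K h := by
  have hcomm : ∀ y (s : ℝ), zoom x r y + s • r • h = zoom x r (y + s • h) := fun y s => by
    simp only [zoom]
    module
  ext z
  constructor
  · rintro ⟨_, ⟨y, hy, rfl⟩, s, hs, rfl⟩
    exact ⟨_, ⟨y, hy, s, hs, rfl⟩, (hcomm y s).symm⟩
  · rintro ⟨_, ⟨y, hy, s, hs, rfl⟩, rfl⟩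
    exact ⟨_, ⟨y, hy, rfl⟩, s, hs, (hcomm y s).symm⟩

lemma shiftDiff_blowup (E : Set V) (x : V) (r : ℝ) (h : V) :
    shiftDiff (blowup E x r) h = zoom x r ⁻¹' shiftDiff E (r • h) := by
  have hcomm : ∀ y, zoom x r (y + h) = zoom x r y + r • h := fun y => by
    simp only [zoom]
    module
  ext y
  simp only [shiftDiff, blowup, Set.mem_symmDiff, Set.mem_preimage, hcomm]

lemma measurableSet_blowup [MeasurableSpace V] [BorelSpace V] {E : Set V} (hE : MeasurableSet E)
    (x : V) (r : ℝ) : MeasurableSet (blowup E x r) :=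
  hE.preimage (continuous_const.add (continuous_const_smul r)).measurable

end Zoom

section BlowupMeasure

variable {n : ℕ} {κ : ℝ≥0∞} {E : Set (Eu n)} {μ : Measure (Eu n)} {g : Eu n → Eu n} {r : ℝ}

lemma map_zoom_volume (x : Eu n) (hr : 0 < r) :
    Measure.map (zoom x r) volume = ENNReal.ofReal (r ^ n)⁻¹ • (volume : Measure (Eu n)) := by
  have hcomp : zoom x r = (x + ·) ∘ (r • · : Eu n → Eu n) := rfl
  rw [hcomp, ← Measure.map_map (by fun_prop) (by fun_prop), Measure.map_addHaar_smul _ hr.ne',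
    Measure.map_smul, map_add_left_eq_self, finrank_euclideanSpace_fin, abs_of_pos (by positivity)]

lemma volume_preimage_zoom (x : Eu n) (hr : 0 < r) (S : Set (Eu n)) :
    volume (zoom x r ⁻¹' S) = ENNReal.ofReal (r ^ n)⁻¹ * volume S := by
  rw [← (measurableEmbedding_zoom x hr.ne').map_apply, map_zoom_volume x hr, Measure.smul_apply,
    smul_eq_mul]

/-- The surface measure `μ` seen from `x` at scale `r`, normalized as `(n - 1)`-dimensional
measures scale. -/
def blowupMeasure (μ : Measure (Eu n)) (x : Eu n) (r : ℝ) : Measure (Eu n) :=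
  ENNReal.ofReal (r ^ (1 - n : ℝ)) • μ.comap (zoom x r)

lemma blowupMeasure_apply (μ : Measure (Eu n)) (x : Eu n) (hr : r ≠ 0) (S : Set (Eu n)) :
    blowupMeasure μ x r S = ENNReal.ofReal (r ^ (1 - n : ℝ)) * μ (zoom x r '' S) := by
  rw [blowupMeasure, Measure.smul_apply, smul_eq_mul,
    (measurableEmbedding_zoom x hr).comap_apply]

instance [IsFiniteMeasure μ] (x : Eu n) (r : ℝ) : IsFiniteMeasure (blowupMeasure μ x r) :=
  (μ.comap (zoom x r)).smul_finite ofReal_ne_top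

lemma setIntegral_comp_zoom_blowupMeasure (μ : Measure (Eu n)) (x : Eu n) (hr : 0 < r)
    (f : Eu n → ℝ) (S : Set (Eu n)) :
    ∫ y in S, f (zoom x r y) ∂blowupMeasure μ x r =
      r ^ (1 - n : ℝ) * ∫ z in zoom x r '' S, f z ∂μ := by
  have hzoom := measurableEmbedding_zoom x hr.ne'
  have hmap := hzoom.setIntegral_map (μ := μ.comap (zoom x r)) f (zoom x r '' S)
  rw [hzoom.map_comap, (isHomeomorph_zoom x hr.ne').surjective.range_eq, Measure.restrict_univ,
    Set.preimage_image_eq S hzoom.injective] at hmap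
  rw [blowupMeasure, Measure.restrict_smul, integral_smul_measure, hmap,
    toReal_ofReal (by positivity), smul_eq_mul]

lemma inv_pow_mul_self (hr : 0 < r) (n : ℕ) : (r ^ n)⁻¹ * r = r ^ (1 - n : ℝ) := by
  rw [Real.rpow_sub hr, Real.rpow_one, Real.rpow_natCast]
  ring

lemma DominatesIncrements.blowup (hD : DominatesIncrements κ E μ) (x : Eu n) (hr : 0 < r) :
    DominatesIncrements κ (blowup E x r) (blowupMeasure μ x r) := fun K hK h => by
  have hzoom := isHomeomorph_zoom x hr.ne'
  calc volume (K ∩ shiftDiff (_root_.blowup E x r) h)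
      = volume (zoom x r ⁻¹' (zoom x r '' K ∩ shiftDiff E (r • h))) := by
        rw [Set.preimage_inter, Set.preimage_image_eq K hzoom.injective, shiftDiff_blowup]
    _ = ENNReal.ofReal (r ^ n)⁻¹ * volume (zoom x r '' K ∩ shiftDiff E (r • h)) :=
        volume_preimage_zoom x hr _
    _ ≤ ENNReal.ofReal (r ^ n)⁻¹ *
          (κ * ENNReal.ofReal ‖r • h‖ * μ (sweep (zoom x r '' K) (r • h))) := by
        gcongr
        exact hD _ (hK.image hzoom.continuous) _
    _ = κ * ENNReal.ofReal ‖h‖ *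
          (ENNReal.ofReal ((r ^ n)⁻¹ * r) * μ (zoom x r '' sweep K h)) := by
        rw [sweep_image_zoom, norm_smul, Real.norm_of_nonneg hr.le, ofReal_mul hr.le,
          ofReal_mul (by positivity)]
        ring
    _ = κ * ENNReal.ofReal ‖h‖ * blowupMeasure μ x r (sweep K h) := by
        rw [blowupMeasure_apply μ x hr.ne', inv_pow_mul_self hr]

lemma GaussGreen.blowup (hE : GaussGreen E μ g) (x : Eu n) (hr : 0 < r) :
    GaussGreen (blowup E x r) (blowupMeasure μ x r) (g ∘ zoom x r) := fun φ hφ hc v => by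
  let e : Eu n ≃ₜ Eu n := (isHomeomorph_zoom x hr.ne').homeomorph
  have he : ∀ z, e.symm z = r⁻¹ • (z - x) := fun z => by
    rw [e.symm_apply_eq]
    change z = x + r • r⁻¹ • (z - x)
    rw [smul_inv_smul₀ hr.ne', add_sub_cancel]
  have hφe : ContDiff ℝ 1 (φ ∘ e.symm) := by
    rw [funext he]
    fun_prop
  have hderiv : ∀ y, fderiv ℝ φ y v = r * fderiv ℝ (φ ∘ e.symm) (zoom x r y) v := fun y => by
    have hz : HasFDerivAt (zoom x r) (r • ContinuousLinearMap.id ℝ (Eu n)) y :=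
      ((hasFDerivAt_id y).const_smul r).const_add x
    have hcomp := (hφe.differentiable one_ne_zero).differentiableAt.hasFDerivAt.comp y hz
    have hφy : (φ ∘ e.symm) ∘ zoom x r = φ := funext fun y => congrArg φ (e.symm_apply_apply y)
    rw [hφy] at hcomp
    simp [hcomp.fderiv]
  have hgreen := hE _ hφe (hc.comp_homeomorph e.symm) v
  have hzoom := measurableEmbedding_zoom x hr.ne'
  have hvol := hzoom.setIntegral_map (μ := volume) (fun z => fderiv ℝ (φ ∘ e.symm) z v) E
  have hbdry := setIntegral_comp_zoom_blowupMeasure μ x hr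
    (fun z => inner ℝ (g z) v * (φ ∘ e.symm) z) Set.univ
  rw [map_zoom_volume x hr, Measure.restrict_smul, integral_smul_measure,
    toReal_ofReal (by positivity), smul_eq_mul, hgreen] at hvol
  rw [Set.image_univ, (isHomeomorph_zoom x hr.ne').surjective.range_eq, setIntegral_univ,
    setIntegral_univ, ← inv_pow_mul_self hr, mul_comm _ r, mul_assoc, hvol] at hbdry
  simp only [hderiv, integral_const_mul]
  refine hbdry.symm.trans (integral_congr_ae (.of_forall fun y => ?_))
  exact congrArg (fun w => inner ℝ (g (zoom x r y)) v * φ w) (e.symm_apply_apply y)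

end BlowupMeasure

section RegularPoint

variable {n : ℕ} {κ : ℝ≥0∞} {E : Set (Eu n)} {μ : Measure (Eu n)} {g : Eu n → Eu n} {M R : ℝ}
  {x : Eu n}

/-- `μ` has `(n - 1)`-dimensional upper density at most `M` at `x`, and `x` is a Lebesgue point of
`g`. Blow-ups at such points converge along subsequences. -/
def IsRegularPoint (μ : Measure (Eu n)) (g : Eu n → Eu n) (M : ℝ) (x : Eu n) : Prop :=
  (∀ᶠ r in 𝓝[>] 0, μ (closedBall x r) ≤ ENNReal.ofReal (M * r ^ ((n : ℝ) - 1))) ∧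
    Tendsto (fun r => ⨍ y in closedBall x r, ‖g y - g x‖ ∂μ) (𝓝[>] 0) (𝓝 0)

lemma blowupMeasure_closedBall (μ : Measure (Eu n)) (x : Eu n) {r : ℝ} (hr : 0 < r) (R : ℝ) :
    blowupMeasure μ x r (closedBall 0 R) =
      ENNReal.ofReal (r ^ (1 - n : ℝ)) * μ (closedBall x (r * R)) := by
  rw [blowupMeasure_apply μ x hr.ne', image_zoom_closedBall x hr]

lemma IsRegularPoint.eventually_blowupMeasure_closedBall_le (hx : IsRegularPoint μ g M x)
    (hR : 0 < R) : ∀ᶠ r in 𝓝[>] 0,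
      blowupMeasure μ x r (closedBall 0 R) ≤ ENNReal.ofReal (M * R ^ ((n : ℝ) - 1)) := by
  filter_upwards [(tendsto_const_mul_nhdsGT_zero hR).eventually hx.1, self_mem_nhdsWithin]
    with r hμr (hr : 0 < r)
  have hpow : r ^ (1 - n : ℝ) * r ^ ((n : ℝ) - 1) = 1 := by
    rw [← Real.rpow_add hr, sub_add_sub_cancel', sub_self, Real.rpow_zero]
  rw [blowupMeasure_closedBall μ x hr, mul_comm r R]
  refine (mul_le_mul_right hμr _).trans_eq ?_
  rw [← ofReal_mul (by positivity), Real.mul_rpow hR.le hr.le]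
  congr 1
  linear_combination M * R ^ ((n : ℝ) - 1) * hpow

lemma IsRegularPoint.tendsto_setIntegral_blowupMeasure [IsFiniteMeasure μ]
    (hx : IsRegularPoint μ g M x) (hR : 0 < R) :
    Tendsto (fun r => ∫ y in closedBall 0 R, ‖g (zoom x r y) - g x‖ ∂blowupMeasure μ x r)
      (𝓝[>] 0) (𝓝 0) := by
  have hlim := ((hx.2.comp (tendsto_const_mul_nhdsGT_zero hR)).const_mul
    (ENNReal.ofReal (M * R ^ ((n : ℝ) - 1))).toReal)
  rw [mul_zero] at hlim
  refine squeeze_zero' (.of_forall fun r => by positivity) ?_ hlim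
  filter_upwards [hx.eventually_blowupMeasure_closedBall_le hR, self_mem_nhdsWithin]
    with r hmass hr
  have hint := setIntegral_comp_zoom_blowupMeasure μ x hr (fun z => ‖g z - g x‖) (closedBall 0 R)
  rw [image_zoom_closedBall x hr, ← measure_smul_setAverage _ (measure_ne_top μ _), smul_eq_mul,
    ← mul_assoc] at hint
  have hreal : r ^ (1 - n : ℝ) * μ.real (closedBall x (r * R)) =
      (blowupMeasure μ x r).real (closedBall 0 R) := by
    rw [measureReal_def, measureReal_def, blowupMeasure_closedBall μ x hr, toReal_mul,
      toReal_ofReal (Real.rpow_nonneg (le_of_lt hr) _)]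
  rw [hint, hreal, mul_comm r R]
  exact mul_le_mul_of_nonneg_right (toReal_mono ofReal_ne_top hmass)
    (integral_nonneg fun _ => norm_nonneg _)

lemma IsRegularPoint.eventually_volume_shiftDiff_blowup_le (hx : IsRegularPoint μ g M x)
    (hD : DominatesIncrements κ E μ) (R : ℝ) : ∀ᶠ r in 𝓝[>] 0, ∀ h : Eu n, ‖h‖ ≤ 1 →
      volume (closedBall 0 R ∩ shiftDiff (blowup E x r) h) ≤
        κ * ENNReal.ofReal (M * (1 + |R|) ^ ((n : ℝ) - 1)) * ENNReal.ofReal ‖h‖ := by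
  filter_upwards [hx.eventually_blowupMeasure_closedBall_le (R := 1 + |R|) (by positivity),
    self_mem_nhdsWithin] with r hmass hr h hh
  have hsweep : sweep (closedBall (0 : Eu n) R) h ⊆ closedBall 0 (1 + |R|) :=
    calc sweep (closedBall 0 R) h ⊆ cthickening ‖h‖ (closedBall 0 R) := sweep_subset_cthickening _ h
      _ ⊆ cthickening 1 (closedBall 0 |R|) := (cthickening_mono hh _).trans
          (cthickening_subset_of_subset 1 (closedBall_subset_closedBall (le_abs_self R)))
      _ = closedBall 0 (1 + |R|) := cthickening_closedBall zero_le_one (abs_nonneg R) 0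
  calc volume (closedBall 0 R ∩ shiftDiff (blowup E x r) h)
      ≤ κ * ENNReal.ofReal ‖h‖ * blowupMeasure μ x r (sweep (closedBall 0 R) h) :=
        hD.blowup x hr _ (isCompact_closedBall 0 R) h
    _ ≤ κ * ENNReal.ofReal ‖h‖ * ENNReal.ofReal (M * (1 + |R|) ^ ((n : ℝ) - 1)) := by
        gcongr
        exact (measure_mono hsweep).trans hmass
    _ = κ * ENNReal.ofReal (M * (1 + |R|) ^ ((n : ℝ) - 1)) * ENNReal.ofReal ‖h‖ := by ring

end RegularPoint

section BlowupLimit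

variable {n : ℕ} {κ : ℝ≥0∞} {E F : Set (Eu n)} {μ : Measure (Eu n)} {g : Eu n → Eu n} {M : ℝ}
  {x : Eu n}

lemma GaussGreen.neg_le_setIntegral_fderiv [IsFiniteMeasure μ] (hE : GaussGreen E μ g)
    (hg : Integrable g μ) {φ : Eu n → ℝ} (hφ : ContDiff ℝ 1 φ) (hc : HasCompactSupport φ)
    (hφ0 : ∀ y, 0 ≤ φ y) {C R : ℝ} (hφC : ∀ y, φ y ≤ C) (hφR : tsupport φ ⊆ closedBall 0 R)
    {a v : Eu n} (hav : 0 ≤ (inner ℝ a v : ℝ)) :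
    -(‖v‖ * C * ∫ y in closedBall 0 R, ‖g y - a‖ ∂μ) ≤ ∫ y in E, fderiv ℝ φ y v := by
  have hint : Integrable (fun y => ‖g y - a‖) μ := (hg.sub (integrable_const a)).norm
  rw [hE φ hφ hc v, ← integral_const_mul, ← integral_indicator measurableSet_closedBall,
    ← integral_neg]
  refine integral_mono ((hint.const_mul _).indicator measurableSet_closedBall).neg
    ((hg.inner_const v).mul_bdd hφ.continuous.aestronglyMeasurable
      (.of_forall fun y => (Real.norm_of_nonneg (hφ0 y)).trans_le (hφC y))) fun y => ?_
  by_cases hy : y ∈ closedBall 0 R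
  · have hinner : -(‖v‖ * ‖g y - a‖) ≤ inner ℝ (g y) v := by
      rw [← sub_add_cancel (g y) a, inner_add_left, add_sub_cancel_right]
      linarith [neg_le_of_abs_le (abs_real_inner_le_norm (g y - a) v)]
    have hmono := mul_le_mul_of_nonneg_left (hφC y)
      (mul_nonneg (norm_nonneg v) (norm_nonneg (g y - a)))
    simp only [Set.indicator_of_mem hy]
    linarith [mul_le_mul_of_nonneg_right hinner (hφ0 y)]
  · simp [Set.indicator_of_notMem hy, image_eq_zero_of_notMem_tsupport fun h => hy (hφR h)]

lemma tendsto_setIntegral_of_ae_eventually_mem_iff {X ι : Type*} [MeasurableSpace X]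
    {m : Measure X} {l : Filter ι} [l.IsCountablyGenerated] {S : ι → Set X} {T : Set X}
    (hS : ∀ i, MeasurableSet (S i)) (hT : MeasurableSet T)
    (hST : ∀ᵐ x ∂m, ∀ᶠ i in l, x ∈ S i ↔ x ∈ T) {f : X → ℝ} (hf : Integrable f m) :
    Tendsto (fun i => ∫ x in S i, f x ∂m) l (𝓝 (∫ x in T, f x ∂m)) := by
  simp_rw [← integral_indicator (hS _), ← integral_indicator hT]
  refine tendsto_integral_filter_of_dominated_convergence (fun x => ‖f x‖)
    (.of_forall fun i => (hf.indicator (hS i)).aestronglyMeasurable)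
    (.of_forall fun i => .of_forall fun x => norm_indicator_le_norm_self f x) hf.norm ?_
  filter_upwards [hST] with x hx
  refine tendsto_const_nhds.congr' ?_
  filter_upwards [hx] with i hi
  exact (Set.indicator_eq_indicator hi rfl).symm

lemma integrable_comp_zoom_blowupMeasure (hg : Integrable g μ) (x : Eu n) {r : ℝ} (hr : r ≠ 0) :
    Integrable (g ∘ zoom x r) (blowupMeasure μ x r) := by
  have hzoom := measurableEmbedding_zoom x hr
  refine Integrable.smul_measure ?_ ofReal_ne_top
  rw [← hzoom.integrable_map_iff, hzoom.map_comap]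
  exact hg.restrict

lemma IsRegularPoint.isDecreasingAlong_of_tendsto [IsFiniteMeasure μ] (hx : IsRegularPoint μ g M x)
    (hE : MeasurableSet E) (hEμ : GaussGreen E μ g) (hg : Integrable g μ) {r : ℕ → ℝ}
    (hr : Tendsto r atTop (𝓝[>] 0)) (hF : MeasurableSet F)
    (hEF : ∀ᵐ y, ∀ᶠ j in atTop, y ∈ blowup E x (r j) ↔ y ∈ F) {v : Eu n}
    (hv : 0 ≤ (inner ℝ (g x) v : ℝ)) : IsDecreasingAlong F v := fun φ hφ hc hφ0 => by
  obtain ⟨C, hC⟩ := hc.exists_bound_of_continuous hφ.continuous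
  obtain ⟨R, hR, hφR⟩ := hc.isCompact.isBounded.subset_closedBall_lt 0 (0 : Eu n)
  have hlim := tendsto_setIntegral_of_ae_eventually_mem_iff
    (fun j => measurableSet_blowup hE x (r j)) hF hEF
    (((hφ.continuous_fderiv one_ne_zero).clm_apply continuous_const).integrable_of_hasCompactSupport
      (hc.fderiv_apply ℝ v))
  have hlow := (((hx.tendsto_setIntegral_blowupMeasure hR).comp hr).const_mul (‖v‖ * C)).neg
  rw [mul_zero, neg_zero] at hlow
  refine le_of_tendsto_of_tendsto hlow hlim ?_
  filter_upwards [hr.eventually self_mem_nhdsWithin] with j hj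
  exact (hEμ.blowup x hj).neg_le_setIntegral_fderiv
    (integrable_comp_zoom_blowupMeasure hg x (ne_of_gt hj)) hφ hc hφ0
    (fun y => (le_abs_self _).trans (hC y)) hφR hv

lemma densityRatio_blowup (E : Set (Eu n)) (x : Eu n) {r : ℝ} (hr : 0 < r) :
    volume.real (blowup E x r ∩ ball 0 1) / volume.real (ball (0 : Eu n) 1) =
      volume.real (E ∩ ball x r) / volume.real (ball x r) := by
  have hball : zoom x r ⁻¹' ball x r = ball 0 1 := by
    rw [← mul_one r, ← image_zoom_ball x hr, mul_one,
      Set.preimage_image_eq _ (isHomeomorph_zoom x hr.ne').injective]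
  have hscale : ∀ S, volume.real (zoom x r ⁻¹' S) = (r ^ n)⁻¹ * volume.real S := fun S => by
    rw [measureReal_def, volume_preimage_zoom x hr, toReal_mul, toReal_ofReal (by positivity),
      measureReal_def]
  rw [← hball, blowup, ← Set.preimage_inter, hscale, hscale,
    mul_div_mul_left _ _ (by positivity)]

lemma exists_blowup_limit_of_mem_essBoundary (hx : x ∈ essBoundary E) (hE : MeasurableSet E)
    (hC : ∀ R : ℝ, ∃ C : ℝ≥0∞, C ≠ ∞ ∧ ∀ᶠ r in 𝓝[>] 0, ∀ h : Eu n, ‖h‖ ≤ 1 →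
      volume (closedBall 0 R ∩ shiftDiff (blowup E x r) h) ≤ C * ENNReal.ofReal ‖h‖) :
    ∃ (F : Set (Eu n)) (r : ℕ → ℝ), MeasurableSet F ∧ Tendsto r atTop (𝓝[>] 0) ∧
      volume (F ∩ ball 0 1) ≠ 0 ∧ volume (ball 0 1 \ F) ≠ 0 ∧
      (∀ᵐ y, ∀ᶠ j in atTop, y ∈ blowup E x (r j) ↔ y ∈ F) ∧
      ∀ R : ℝ, Tendsto (fun j => volume (closedBall 0 R ∩ blowup E x (r j) ∆ F)) atTop (𝓝 0) := by
  obtain ⟨c, ⟨hc0, -⟩, hfreq⟩ := exists_frequently_densityRatio_mem_Icc hx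
  obtain ⟨r, hr, hrc⟩ := exists_seq_forall_of_frequently (hfreq.and_eventually self_mem_nhdsWithin)
  obtain ⟨F, s, hF, hs, hae, hL⟩ := exists_subseq_tendsto_of_measure_shiftDiff_le (μ := volume)
    (fun j => measurableSet_blowup hE x (r j))
    (fun R => (hC R).imp fun C hC => ⟨hC.1, hr.eventually hC.2⟩)
  have hrs : Tendsto (r ∘ s) atTop (𝓝[>] 0) := hr.comp hs.tendsto_atTop
  have hball : Tendsto (fun j => volume (blowup E x (r (s j)) ∩ ball 0 1)) atTop
      (𝓝 (volume (F ∩ ball 0 1))) :=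
    tendsto_measure_of_ae_tendsto_indicator atTop (hF.inter measurableSet_ball)
      (fun j => (measurableSet_blowup hE x _).inter measurableSet_ball) measurableSet_ball
      measure_ball_lt_top.ne (.of_forall fun j => Set.inter_subset_right)
      (hae.mono fun y hy => hy.mono fun j hj => by simp only [Set.mem_inter_iff, hj])
  have hω : 0 < volume.real (ball (0 : Eu n) 1) := measureReal_ball_pos 0 one_pos
  have hratio : volume.real (F ∩ ball 0 1) / volume.real (ball (0 : Eu n) 1) ∈ Set.Icc c (1 - c) :=
    isClosed_Icc.mem_of_tendsto (((tendsto_toReal (measure_inter_ne_top_of_right_ne_top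
      measure_ball_lt_top.ne)).comp hball).div_const _) (.of_forall fun j =>
        (densityRatio_blowup E x (hrc (s j)).2).symm ▸ (hrc (s j)).1)
  rw [Set.mem_Icc, le_div_iff₀ hω, div_le_iff₀ hω] at hratio
  have hcω := mul_pos hc0 hω
  refine ⟨F, r ∘ s, hF, hrs, fun h0 => ?_, fun h0 => ?_, hae, hL⟩
  · have hin : volume.real (F ∩ ball 0 1) = 0 := by rw [measureReal_def, h0, toReal_zero]
    linarith
  · have hsplit := measureReal_inter_ball_add_compl hF 0 1
    have hout : volume.real (Fᶜ ∩ ball 0 1) = 0 := by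
      rw [measureReal_def, Set.inter_comm, ← Set.sdiff_eq, h0, toReal_zero]
    linarith

lemma IsRegularPoint.exists_tendsto_blowup_halfSpace [IsFiniteMeasure μ]
    (hx : IsRegularPoint μ g M x) (hn : 1 ≤ n) (hκ : κ ≠ ∞) (hE : MeasurableSet E)
    (hD : DominatesIncrements κ E μ) (hEμ : GaussGreen E μ g) (hg : Integrable g μ)
    (hxE : x ∈ essBoundary E) :
    ∃ (r : ℕ → ℝ) (ν : Eu n) (t : ℝ), Tendsto r atTop (𝓝[>] 0) ∧ ‖ν‖ = 1 ∧ |t| ≤ 1 ∧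
      ∀ R : ℝ, Tendsto (fun j => volume
        (closedBall 0 R ∩ blowup E x (r j) ∆ {y | inner ℝ y ν < t})) atTop (𝓝 0) := by
  obtain ⟨F, r, hF, hr, hin, hout, hae, hL⟩ := exists_blowup_limit_of_mem_essBoundary hxE hE
    fun R => ⟨_, mul_ne_top hκ ofReal_ne_top, hx.eventually_volume_shiftDiff_blowup_le hD R⟩
  obtain ⟨ν, a, hν, ha, hga⟩ : ∃ (ν : Eu n) (a : ℝ), ‖ν‖ = 1 ∧ 0 ≤ a ∧ g x = a • ν := by
    by_cases hgx : g x = 0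
    · exact ⟨EuclideanSpace.single ⟨0, hn⟩ 1, 0, by simp, le_rfl, by simp [hgx]⟩
    · obtain ⟨ν, hν, hgν⟩ := exists_unit_eq_norm_smul hgx
      exact ⟨ν, _, hν, norm_nonneg _, hgν⟩
  obtain ⟨t, ht, hFt⟩ := exists_ae_eq_halfSpace hF hν (fun v hv =>
    hx.isDecreasingAlong_of_tendsto hE hEμ hg hr hF hae (by
      rw [hga, real_inner_smul_left, real_inner_comm]
      exact mul_nonneg ha hv)) hin hout
  refine ⟨r, ν, t, hr, hν, ht, fun R => (hL R).congr fun j => measure_congr ?_⟩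
  exact (ae_eq_refl _).inter ((ae_eq_refl _).symmDiff hFt)

end BlowupLimit

section LocalBox

lemma ae_mem_shiftDiff_halfSpace {V : Type*} [NormedAddCommGroup V] [InnerProductSpace ℝ V]
    [FiniteDimensional ℝ V] [MeasurableSpace V] [BorelSpace V] {ν : V} (hν : ‖ν‖ = 1) (t τ : ℝ) :
    ∀ᵐ y : V, inner ℝ y ν ∈ Set.Icc (t - τ) t → y ∈ shiftDiff {y | inner ℝ y ν < t} (τ • ν) := by
  have hne : ∀ᵐ y : V, inner ℝ y ν ≠ t := by
    simpa [ae_iff] using volume_hyperplane_eq_zero (norm_pos_iff.1 (hν ▸ one_pos)) t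
  filter_upwards [hne] with y ht hy
  have hin : inner ℝ y ν < t := hy.2.lt_of_ne ht
  have hout : ¬ inner ℝ y ν + τ < t := by linarith [hy.1]
  simp [shiftDiff, Set.mem_symmDiff, inner_add_smul_unit hν, hin, hout]

variable {n : ℕ} {κ : ℝ≥0∞} {E : Set (Eu n)} {μ : Measure (Eu n)} {g : Eu n → Eu n} {ε : ℝ}

lemma exists_box_halfSpace (hε : 0 < ε) :
    ∃ R : ℝ, 0 < R ∧ ∀ (ν : Eu n) (t : ℝ), ‖ν‖ = 1 → |t| ≤ 1 → ∃ K : Set (Eu n), IsCompact K ∧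
      ENNReal.ofReal ε * (ENNReal.ofReal (1 - ε) * shadowConst n) ≤
        volume (K ∩ shiftDiff {y | inner ℝ y ν < t} (ε • ν)) ∧
      sweep K (ε • ν) ⊆ closedBall 0 R ∧
      ediam (sweep K (ε • ν)) ≤ ENNReal.ofReal (1 + 3 * ε) ∧
      (interior (sweep K (ε • ν))).Nonempty := by
  obtain ⟨R, hR, hbox⟩ := exists_box (n := n) hε hε
  refine ⟨1 + R, by positivity, fun ν t hν ht => ?_⟩
  obtain ⟨K, hK, hheight, hvol, hsub, hdiam, hint⟩ := hbox ν hν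
  have hsweep : sweep (zoom (t • ν) 1 '' K) (ε • ν) = zoom (t • ν) 1 '' sweep K (ε • ν) := by
    rw [← sweep_image_zoom, one_smul]
  have hvol' : volume (zoom (t • ν) 1 '' K) = volume K := by
    rw [image_zoom, one_smul, measure_vadd]
  refine ⟨_, hK.image (isHomeomorph_zoom (t • ν) one_ne_zero).continuous, ?_, ?_, ?_, ?_⟩
  · refine (hvol.trans_eq hvol'.symm).trans (measure_mono_ae ?_)
    filter_upwards [ae_mem_shiftDiff_halfSpace hν t ε] with y hy hyK
    refine ⟨hyK, hy ?_⟩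
    obtain ⟨w, hw, rfl⟩ := hyK
    obtain ⟨hlow, hhigh⟩ := hheight w hw
    rw [zoom, one_smul, add_comm, inner_add_smul_unit hν]
    exact ⟨by linarith, by linarith⟩
  · rw [hsweep]
    refine (Set.image_mono hsub).trans ?_
    rw [image_zoom_closedBall _ one_pos, one_mul]
    refine closedBall_subset_closedBall' ?_
    rw [dist_zero_right, norm_smul, hν, mul_one, Real.norm_eq_abs]
    linarith
  · rw [hsweep, ediam_image_zoom _ zero_le_one, ofReal_one, one_mul]
    convert hdiam using 2
    ring
  · rw [hsweep]
    exact nonempty_interior_image_zoom _ one_ne_zero hint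

lemma eventually_lt_measure_sweep {ι : Type*} {l : Filter ι} {A : ι → Set (Eu n)}
    {F : Set (Eu n)} {ν : ι → Measure (Eu n)} (hD : ∀ᶠ i in l, DominatesIncrements κ (A i) (ν i))
    (hAF : ∀ R : ℝ, Tendsto (fun i => volume (closedBall 0 R ∩ A i ∆ F)) l (𝓝 0))
    {K : Set (Eu n)} (hK : IsCompact K) {h : Eu n} {c : ℝ≥0∞}
    (hc : κ * ENNReal.ofReal ‖h‖ * c < volume (K ∩ shiftDiff F h)) :
    ∀ᶠ i in l, c < ν i (sweep K h) := by
  obtain ⟨R, hR⟩ := hK.isBounded.subset_closedBall 0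
  have herr : Tendsto (fun i => 2 * volume (closedBall 0 (R + ‖h‖) ∩ A i ∆ F)) l (𝓝 0) := by
    simpa using ENNReal.Tendsto.const_mul (hAF (R + ‖h‖)) (Or.inr ofNat_ne_top)
  filter_upwards [hD, herr.eventually (gt_mem_nhds (tsub_pos_of_lt hc))] with i hDi hi
  by_contra! hle
  refine (lt_tsub_iff_left.1 hi).not_ge ?_
  calc volume (K ∩ shiftDiff F h)
      ≤ volume (K ∩ shiftDiff (A i) h) + 2 * volume (closedBall 0 (R + ‖h‖) ∩ A i ∆ F) :=
        measure_inter_shiftDiff_le_add volume (A i) F hR h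
    _ ≤ κ * ENNReal.ofReal ‖h‖ * c + _ := by
        gcongr
        exact (hDi K hK h).trans (by gcongr)

lemma ofReal_mul_le_measure_image_zoom (x : Eu n) {r c : ℝ} (hr : 0 < r) {S : Set (Eu n)}
    (hS : ENNReal.ofReal c ≤ blowupMeasure μ x r S) :
    ENNReal.ofReal (c * r ^ ((n : ℝ) - 1)) ≤ μ (zoom x r '' S) := by
  rw [blowupMeasure_apply μ x hr.ne'] at hS
  calc ENNReal.ofReal (c * r ^ ((n : ℝ) - 1))
      = ENNReal.ofReal (r ^ ((n : ℝ) - 1)) * ENNReal.ofReal c := by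
        rw [← ofReal_mul (by positivity), mul_comm]
    _ ≤ ENNReal.ofReal (r ^ ((n : ℝ) - 1)) *
          (ENNReal.ofReal (r ^ (1 - n : ℝ)) * μ (zoom x r '' S)) := by gcongr
    _ = μ (zoom x r '' S) := by
        rw [← mul_assoc, ← ofReal_mul (by positivity), ← Real.rpow_add hr]
        simp

lemma IsRegularPoint.exists_frequently_box [IsFiniteMeasure μ] (hn : 1 ≤ n)
    (hE : MeasurableSet E) (hD : DominatesIncrements (shadowConst n) E μ)
    (hEμ : GaussGreen E μ g) (hg : Integrable g μ) (hε : 0 < ε) (hε' : ε < 1 / 2) :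
    ∃ R : ℝ, 0 < R ∧ ∀ M x, x ∈ essBoundary E → IsRegularPoint μ g M x →
      ∃ᶠ r in 𝓝[>] 0, ∃ B : Set (Eu n), IsCompact B ∧ (interior B).Nonempty ∧
        B ⊆ closedBall x (r * R) ∧ ediam B ≤ ENNReal.ofReal (r * (1 + 3 * ε)) ∧
        ENNReal.ofReal ((1 - 2 * ε) * r ^ ((n : ℝ) - 1)) ≤ μ B := by
  obtain ⟨R, hR, hbox⟩ := exists_box_halfSpace (n := n) hε
  refine ⟨R, hR, fun M x hxE hx => ?_⟩
  obtain ⟨r, ν, t, hr, hν, ht, hL⟩ :=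
    hx.exists_tendsto_blowup_halfSpace hn (shadowConst_lt_top n).ne hE hD hEμ hg hxE
  obtain ⟨K, hK, hvol, hsub, hdiam, hint⟩ := hbox ν t hν ht
  have hr0 : ∀ᶠ j in atTop, 0 < r j := hr.eventually self_mem_nhdsWithin
  have hstrict : shadowConst n * ENNReal.ofReal ‖ε • ν‖ * ENNReal.ofReal (1 - 2 * ε) <
      volume (K ∩ shiftDiff {y | inner ℝ y ν < t} (ε • ν)) := by
    refine lt_of_lt_of_le ?_ hvol
    rw [norm_smul, hν, mul_one, Real.norm_of_nonneg hε.le, mul_comm (shadowConst n),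
      mul_comm (ENNReal.ofReal (1 - ε)), ← mul_assoc]
    refine ENNReal.mul_lt_mul_right
      (mul_ne_zero (ofReal_pos.2 hε).ne' (shadowConst_pos hν).ne')
      (mul_ne_top ofReal_ne_top (shadowConst_lt_top n).ne) ?_
    exact (ofReal_lt_ofReal_iff (by linarith)).2 (by linarith)
  refine hr.frequently (Eventually.frequently ?_)
  filter_upwards [hr0, eventually_lt_measure_sweep (hr0.mono fun j hj => hD.blowup x hj) hL hK
    hstrict] with j hj hmass
  refine ⟨zoom x (r j) '' sweep K (ε • ν),
    (isCompact_sweep hK _).image (isHomeomorph_zoom x hj.ne').continuous,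
    nonempty_interior_image_zoom x hj.ne' hint, ?_, ?_,
    ofReal_mul_le_measure_image_zoom x hj hmass.le⟩
  · rw [← image_zoom_closedBall x hj]
    exact Set.image_mono hsub
  · rw [ediam_image_zoom x hj.le, ofReal_mul hj.le]
    gcongr

end LocalBox

section BoxCovering

variable {X : Type*} [MetricSpace X] [SecondCountableTopology X] [MeasurableSpace X] [BorelSpace X]
  {μ : Measure X} {A : Set X} {d R c w : ℝ}

lemma exists_disjoint_cover_ae_of_frequently [IsLocallyFiniteMeasure μ] (hR : 0 < R) (hc : 0 < c)
    (hw : 0 < w) (hd : 0 ≤ d) {M : ℝ}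
    (hM : ∀ x ∈ A, ∀ᶠ r in 𝓝[>] 0, μ (closedBall x r) ≤ ENNReal.ofReal (M * r ^ d))
    (hA : ∀ x ∈ A, ∃ᶠ r in 𝓝[>] 0, ∃ B : Set X, IsCompact B ∧ (interior B).Nonempty ∧
      B ⊆ closedBall x (r * R) ∧ ediam B ≤ ENNReal.ofReal (r * w) ∧
      ENNReal.ofReal (c * r ^ d) ≤ μ B) {ρ : ℝ} (hρ : 0 < ρ) :
    ∃ u : Set (X × ℝ × Set X), u.Countable ∧ u.PairwiseDisjoint (fun p => p.2.2) ∧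
      μ (A \ ⋃ p ∈ u, p.2.2) = 0 ∧ ∀ p ∈ u, IsCompact p.2.2 ∧
        ediam p.2.2 ≤ ENNReal.ofReal ρ ∧
        ediam p.2.2 ^ d ≤ ENNReal.ofReal (w ^ d / c) * μ p.2.2 := by
  set t : Set (X × ℝ × Set X) := {p | 0 < p.2.1 ∧ p.2.1 * w ≤ ρ ∧
    μ (closedBall p.1 (3 * (p.2.1 * R))) ≤ ENNReal.ofReal (M * (3 * (p.2.1 * R)) ^ d) ∧
    IsCompact p.2.2 ∧ (interior p.2.2).Nonempty ∧ p.2.2 ⊆ closedBall p.1 (p.2.1 * R) ∧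
    ediam p.2.2 ≤ ENNReal.ofReal (p.2.1 * w) ∧ ENNReal.ofReal (c * p.2.1 ^ d) ≤ μ p.2.2}
  have hdoubling : ∀ p ∈ t, μ (closedBall p.1 (3 * (p.2.1 * R))) ≤
      (M * (3 * R) ^ d / c).toNNReal * μ p.2.2 := fun p ⟨hr, _, hball, _, _, _, _, hmass⟩ =>
    calc μ (closedBall p.1 (3 * (p.2.1 * R)))
        ≤ ENNReal.ofReal (M * (3 * (p.2.1 * R)) ^ d) := hball
      _ = ENNReal.ofReal (M * (3 * R) ^ d / c) * ENNReal.ofReal (c * p.2.1 ^ d) := by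
        rw [← ofReal_mul' (by positivity), mul_left_comm 3, Real.mul_rpow hr.le (by positivity)]
        congr 1
        field_simp
      _ ≤ _ := mul_le_mul_right hmass _
  have hfine : ∀ x ∈ A, ∀ δ > 0, ∃ p ∈ t, p.2.1 * R ≤ δ ∧ p.1 = x := fun x hx δ hδ => by
    have hscale : ∀ a {b : ℝ}, 0 < b → ∀ᶠ r in 𝓝[>] 0, r * a < b := fun a _ hb =>
      (((continuous_mul_const a).tendsto' 0 0 (zero_mul a)).mono_left
        nhdsWithin_le_nhds).eventually (gt_mem_nhds hb)
    have hball := (tendsto_const_mul_nhdsGT_zero (mul_pos three_pos hR)).eventually (hM x hx)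
    obtain ⟨r, ⟨B, hB⟩, hr, hrw, hrR, hrM⟩ := ((hA x hx).and_eventually
      (eventually_mem_nhdsWithin.and ((hscale w hρ).and ((hscale R hδ).and hball)))).exists
    rw [mul_assoc, mul_comm R] at hrM
    exact ⟨(x, r, B), ⟨hr, hrw.le, hrM, hB⟩, hrR.le, rfl⟩
  obtain ⟨u, hut, hu, hdisj, hnull⟩ := Vitali.exists_disjoint_covering_ae μ A t _ _ _ _
    (fun p ⟨_, _, _, _, _, hsub, _⟩ => hsub) hdoubling (fun p ⟨_, _, _, _, hint, _⟩ => hint)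
    (fun p ⟨_, _, _, hB, _⟩ => hB.isClosed) hfine
  refine ⟨u, hu, hdisj, hnull, fun p hp => ?_⟩
  obtain ⟨hr, hrρ, -, hB, -, -, hdiam, hmass⟩ := hut hp
  exact ⟨hB, hdiam.trans (ENNReal.ofReal_le_ofReal hrρ),
    rpow_le_ofReal_div_mul_of_le hd hr.le hw.le hc hdiam hmass⟩

lemma hausdorffMeasure_le_mul_of_frequently_box [IsLocallyFiniteMeasure μ] (hR : 0 < R)
    (hc : 0 < c) (hw : 0 < w) (hd : 0 ≤ d) {M : ℝ} (hnull : ∀ N ⊆ A, μ N = 0 → μH[d] N = 0)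
    (hM : ∀ x ∈ A, ∀ᶠ r in 𝓝[>] 0, μ (closedBall x r) ≤ ENNReal.ofReal (M * r ^ d))
    (hA : ∀ x ∈ A, ∃ᶠ r in 𝓝[>] 0, ∃ B : Set X, IsCompact B ∧ (interior B).Nonempty ∧
      B ⊆ closedBall x (r * R) ∧ ediam B ≤ ENNReal.ofReal (r * w) ∧
      ENNReal.ofReal (c * r ^ d) ≤ μ B) :
    μH[d] A ≤ ENNReal.ofReal (w ^ d / c) * μ Set.univ := by
  have hρ : ∀ k : ℕ, (0 : ℝ) < 1 / (k + 1) := fun k => Nat.one_div_pos_of_nat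
  choose u hu hdisj hcov hbox using fun k =>
    exists_disjoint_cover_ae_of_frequently hR hc hw hd hM hA (hρ k)
  set N : Set X := ⋃ k, A \ ⋃ p ∈ u k, p.2.2
  have hN : μH[d] N = 0 := measure_iUnion_null fun k => hnull _ Set.sdiff_subset (hcov k)
  calc μH[d] A ≤ μH[d] (A \ N) := by
        simpa only [hN, tsub_zero] using le_measure_sdiff (μ := μH[d]) (s₁ := A) (s₂ := N)
    _ ≤ ENNReal.ofReal (w ^ d / c) * μ Set.univ := by
      refine hausdorffMeasure_le_mul_of_forall_exists_cover (ι := X × ℝ × Set X) fun ρ hρ => ?_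
      obtain ⟨k, hk⟩ := exists_nat_one_div_lt hρ
      refine ⟨u k, fun p => p.2.2, fun p => p.2.2, hu k, hdisj k, fun x hx => ?_, fun p hp => ?_⟩
      · by_contra hout
        exact hx.2 (Set.mem_iUnion.2 ⟨k, hx.1, hout⟩)
      · obtain ⟨hB, hdiam, hmass⟩ := hbox k p hp
        exact ⟨hB.measurableSet, Set.subset_univ _,
          hdiam.trans (ENNReal.ofReal_le_ofReal hk.le), hmass⟩

end BoxCovering

section LowerSemicontinuity

variable {n : ℕ} {E : Set (Eu n)} {μ : Measure (Eu n)} [IsFiniteMeasure μ] {g : Eu n → Eu n}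

lemma DominatesIncrements.hausdorffMeasure_isRegularPoint_le
    (hD : DominatesIncrements (shadowConst n) E μ) (hn : 1 ≤ n) (hE : MeasurableSet E)
    (hEμ : GaussGreen E μ g) (hg : Integrable g μ) (M : ℝ) :
    μH[(n : ℝ) - 1] {x ∈ essBoundary E | IsRegularPoint μ g M x} ≤ μ Set.univ := by
  have hd : (0 : ℝ) ≤ n - 1 := sub_nonneg.2 (by exact_mod_cast hn)
  have hcont : ContinuousAt
      (fun ε : ℝ => (1 + 3 * ε) ^ ((n : ℝ) - 1) / (1 - 2 * ε)) 0 :=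
    ((by fun_prop : ContinuousAt (fun ε : ℝ => 1 + 3 * ε) 0).rpow_const
      (Or.inr hd)).div (by fun_prop) (by norm_num)
  have hlim := ENNReal.Tendsto.mul_const (b := μ Set.univ) (ENNReal.tendsto_ofReal
    (hcont.tendsto.mono_left (nhdsWithin_le_nhds (s := Set.Ioi 0)))) (Or.inr (measure_ne_top _ _))
  simp only [mul_zero, add_zero, sub_zero, Real.one_rpow, div_one, ofReal_one, one_mul] at hlim
  refine ge_of_tendsto hlim ?_
  filter_upwards [Ioo_mem_nhdsGT (by norm_num : (0 : ℝ) < 1 / 2)] with ε ⟨hε, hε'⟩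
  obtain ⟨R, hR, hbox⟩ := IsRegularPoint.exists_frequently_box hn hE hD hEμ hg hε hε'
  exact hausdorffMeasure_le_mul_of_frequently_box hR (by linarith) (by positivity) hd
    (fun N hN hμN => hD.hausdorffMeasure_eq_zero hn (shadowConst_lt_top n).ne hE
      (fun x hx => (hN hx).1) hμN)
    (fun x hx => hx.2.1) (fun x hx => hbox M x hx.1 hx.2)

lemma ae_tendsto_average_norm_sub_closedBall (hg : Integrable g μ) :
    ∀ᵐ x ∂μ, Tendsto (fun r => ⨍ y in closedBall x r, ‖g y - g x‖ ∂μ) (𝓝[>] 0) (𝓝 0) := by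
  filter_upwards [(Besicovitch.vitaliFamily μ).ae_tendsto_average_norm_sub
    hg.locallyIntegrable] with x hx using hx.comp (Besicovitch.tendsto_filterAt μ x)

theorem DominatesIncrements.hausdorffMeasure_essBoundary_le
    (hD : DominatesIncrements (shadowConst n) E μ) (hn : 1 ≤ n) (hE : MeasurableSet E) :
    μH[(n : ℝ) - 1] (essBoundary E) ≤ μ Set.univ := by
  have hd : (0 : ℝ) ≤ n - 1 := sub_nonneg.2 (by exact_mod_cast hn)
  obtain ⟨g, hg, hEμ⟩ := hD.exists_gaussGreen (shadowConst_lt_top n).ne hE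
  set S : ℕ → Set (Eu n) := fun M => {x ∈ essBoundary E | IsRegularPoint μ g (M + 1) x}
  set Z : Set (Eu n) := {x | ∀ M : ℕ, ∃ᶠ r in 𝓝[>] 0,
    ENNReal.ofReal ((M + 1) * r ^ ((n : ℝ) - 1)) ≤ μ (closedBall x r)}
  set L : Set (Eu n) :=
    {x | ¬ Tendsto (fun r => ⨍ y in closedBall x r, ‖g y - g x‖ ∂μ) (𝓝[>] 0) (𝓝 0)}
  have hL : μH[(n : ℝ) - 1] (essBoundary E ∩ L) = 0 :=
    hD.hausdorffMeasure_eq_zero hn (shadowConst_lt_top n).ne hE Set.inter_subset_left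
      (measure_mono_null Set.inter_subset_right (ae_tendsto_average_norm_sub_closedBall hg))
  have hmono : Monotone S := fun M M' hMM' x ⟨hx, hball, hleb⟩ => by
    refine ⟨hx, ?_, hleb⟩
    filter_upwards [hball, self_mem_nhdsWithin] with r hr hr0
    have : 0 < r := hr0
    exact hr.trans (by gcongr)
  have hcover : essBoundary E ⊆ (⋃ M, S M) ∪ (Z ∪ (essBoundary E ∩ L)) := fun x hx => by
    by_cases hxL : x ∈ L
    · exact Or.inr (Or.inr ⟨hx, hxL⟩)
    by_cases hxZ : x ∈ Z
    · exact Or.inr (Or.inl hxZ)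
    obtain ⟨M, hM⟩ := not_forall.1 hxZ
    exact Or.inl (Set.mem_iUnion.2 ⟨M, hx,
      (not_frequently.1 hM).mono fun r hr => (not_le.1 hr).le, not_not.1 hxL⟩)
  calc μH[(n : ℝ) - 1] (essBoundary E)
      ≤ μH[(n : ℝ) - 1] (⋃ M, S M) + μH[(n : ℝ) - 1] (Z ∪ (essBoundary E ∩ L)) :=
        (measure_mono hcover).trans (measure_union_le _ _)
    _ = ⨆ M, μH[(n : ℝ) - 1] (S M) := by
        rw [measure_union_null (hausdorffMeasure_setOf_forall_frequently_le_eq_zero hd) hL,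
          add_zero, hmono.measure_iUnion]
    _ ≤ μ Set.univ := iSup_le fun M => hD.hausdorffMeasure_isRegularPoint_le hn hE hEμ hg _

theorem perimeter_le_of_tendsto {E : ℕ → Set (Eu n)} {F : Set (Eu n)} (hn : 1 ≤ n)
    (hE : ∀ j, MeasurableSet (E j)) (hF : MeasurableSet F)
    (hEF : ∀ R : ℝ, Tendsto (fun j => volume (closedBall 0 R ∩ E j ∆ F)) atTop (𝓝 0))
    {P : ℝ≥0∞} (hP : P ≠ ∞) (hEP : ∀ j, perimeter (E j) ≤ P) : perimeter F ≤ P := by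
  have hmass : ∀ j, (μH[(n : ℝ) - 1].restrict (essBoundary (E j))) Set.univ ≤ P := fun j => by
    rw [Measure.restrict_apply_univ]
    exact hEP j
  obtain ⟨μ, hμ, hV⟩ := exists_tendstoVaguely (Ultrafilter.of atTop) hP hmass
  have : IsFiniteMeasure μ := ⟨hμ.trans_lt hP.lt_top⟩
  have : ∀ j, IsFiniteMeasure (μH[(n : ℝ) - 1].restrict (essBoundary (E j))) :=
    fun j => ⟨(hmass j).trans_lt hP.lt_top⟩
  have hD : DominatesIncrements (shadowConst n) F μ :=
    dominatesIncrements_of_tendstoVaguely (shadowConst_lt_top n).ne hV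
      (fun j => dominatesIncrements_hausdorffMeasure (hE j))
      fun R => (hEF R).mono_left (Ultrafilter.of_le _)
  exact (hD.hausdorffMeasure_essBoundary_le hn hF).trans hμ

end LowerSemicontinuity

/-! ### The direct method -/

section Fatou

variable {X : Type*} [MeasurableSpace X] {μ : Measure X} {E : ℕ → Set X} {F : Set X}

lemma setLIntegral_le_liminf_of_ae_eventually_mem_iff (hE : ∀ j, MeasurableSet (E j))
    (hF : MeasurableSet F) (hEF : ∀ᵐ x ∂μ, ∀ᶠ j in atTop, x ∈ E j ↔ x ∈ F) {f : X → ℝ≥0∞}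
    {g : ℕ → X → ℝ≥0∞} (hg : ∀ j, Measurable (g j))
    (hfg : ∀ x, f x ≤ liminf (fun j => g j x) atTop) :
    ∫⁻ x in F, f x ∂μ ≤ liminf (fun j => ∫⁻ x in E j, g j x ∂μ) atTop := by
  simp_rw [← lintegral_indicator (hE _), ← lintegral_indicator hF]
  refine (lintegral_mono_ae ?_).trans (lintegral_liminf_le fun j => (hg j).indicator (hE j))
  filter_upwards [hEF] with x hx
  by_cases hxF : x ∈ F
  · rw [Set.indicator_of_mem hxF]
    refine (hfg x).trans_eq (liminf_congr ?_)
    filter_upwards [hx] with j hj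
    rw [Set.indicator_of_mem (hj.2 hxF)]
  · rw [Set.indicator_of_notMem hxF]
    exact zero_le

lemma setLIntegral_le_liminf_setLIntegral (hE : ∀ j, MeasurableSet (E j)) (hF : MeasurableSet F)
    (hEF : ∀ᵐ x ∂μ, ∀ᶠ j in atTop, x ∈ E j ↔ x ∈ F) {f : X → ℝ≥0∞} (hf : Measurable f) :
    ∫⁻ x in F, f x ∂μ ≤ liminf (fun j => ∫⁻ x in E j, f x ∂μ) atTop :=
  setLIntegral_le_liminf_of_ae_eventually_mem_iff hE hF hEF (fun _ => hf) fun x => by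
    rw [liminf_const]

lemma setLIntegral_setLIntegral_le_liminf [SFinite μ] (hE : ∀ j, MeasurableSet (E j))
    (hF : MeasurableSet F) (hEF : ∀ᵐ x ∂μ, ∀ᶠ j in atTop, x ∈ E j ↔ x ∈ F) {K : X → X → ℝ≥0∞}
    (hK : Measurable (Function.uncurry K)) :
    ∫⁻ x in F, ∫⁻ y in F, K x y ∂μ ∂μ ≤
      liminf (fun j => ∫⁻ x in E j, ∫⁻ y in E j, K x y ∂μ ∂μ) atTop :=
  setLIntegral_le_liminf_of_ae_eventually_mem_iff hE hF hEF
    (fun _ => hK.lintegral_prod_right')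
    fun _ => setLIntegral_le_liminf_setLIntegral hE hF hEF hK.of_uncurry_left

lemma liminf_add_liminf_le (u v : ℕ → ℝ≥0∞) :
    liminf u atTop + liminf v atTop ≤ liminf (fun j => u j + v j) atTop := by
  have hmono : ∀ w : ℕ → ℝ≥0∞, Monotone fun k => ⨅ i ≥ k, w i :=
    fun w _ _ hab => biInf_mono fun _ hi => hab.trans hi
  simp only [liminf_eq_iSup_iInf_of_nat]
  rw [ENNReal.iSup_add_iSup_of_monotone (hmono u) (hmono v)]
  exact iSup_mono fun k => le_iInf₂ fun i hi => add_le_add (iInf₂_le i hi) (iInf₂_le i hi)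

end Fatou

lemma measure_le_of_tendsto_of_lintegral_le {X : Type*} [PseudoMetricSpace X] [MeasurableSpace X]
    {μ : Measure X} {E : ℕ → Set X} {F : Set X} {W : X → ℝ≥0∞} (hW : Measurable W)
    (hWtop : Tendsto W (cocompact X) (𝓝 ∞)) {o : X}
    (hEF : ∀ R : ℝ, Tendsto (fun j => μ (closedBall o R ∩ E j ∆ F)) atTop (𝓝 0)) {v C : ℝ≥0∞}
    (hv : ∀ j, v ≤ μ (E j)) (hC : C ≠ ∞) (hEW : ∀ j, ∫⁻ x in E j, W x ∂μ ≤ C) :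
    v ≤ μ F := by
  have htail : ∀ ℓ : ℕ, ℓ ≠ 0 → v ≤ μ F + C / ℓ := fun ℓ hℓ => by
    obtain ⟨R, hR⟩ := closedBall_compl_subset_of_mem_cocompact
      (tendsto_nhds_top_iff_nat.1 hWtop ℓ) o
    have hsub : ∀ j, E j ⊆ F ∪ closedBall o R ∩ E j ∆ F ∪ {x | ℓ ≤ W x} ∩ E j := fun j x hx => by
      by_cases hxR : x ∈ closedBall o R
      · by_cases hxF : x ∈ F
        · exact Or.inl (Or.inl hxF)
        · exact Or.inl (Or.inr ⟨hxR, Or.inl ⟨hx, hxF⟩⟩)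
      · exact Or.inr ⟨le_of_lt (a := (ℓ : ℝ≥0∞)) (hR hxR), hx⟩
    have hmarkov : ∀ j, μ ({x | ℓ ≤ W x} ∩ E j) ≤ C / ℓ := fun j => by
      rw [← Measure.restrict_apply (measurableSet_le measurable_const hW)]
      exact (meas_ge_le_lintegral_div hW.aemeasurable (Nat.cast_ne_zero.2 hℓ)
        (natCast_ne_top ℓ)).trans (ENNReal.div_le_div_right (hEW j) _)
    have hlim := (tendsto_const_nhds (x := μ F)).add (hEF R) |>.add_const (C / ℓ)
    rw [add_zero] at hlim
    exact ge_of_tendsto' hlim fun j => (hv j).trans <| (measure_mono (hsub j)).trans <|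
      (measure_union_le _ _).trans (add_le_add (measure_union_le _ _) (hmarkov j))
  have hlim := (ENNReal.Tendsto.const_div ENNReal.tendsto_nat_nhds_top (Or.inr hC)).const_add (μ F)
  rw [ENNReal.div_top, add_zero] at hlim
  exact ge_of_tendsto hlim ((eventually_ne_atTop 0).mono htail)

lemma exists_forall_le_of_forall_le_liminf {X : Type*} {J : X → ℝ≥0∞} {S : Set X}
    (hS : S.Nonempty)
    (hJ : ∀ E : ℕ → X, (∀ j, E j ∈ S) → ∀ C ≠ ∞, (∀ j, J (E j) ≤ C) →
      ∃ F ∈ S, ∃ s : ℕ → ℕ, StrictMono s ∧ J F ≤ liminf (fun j => J (E (s j))) atTop) :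
    ∃ E ∈ S, ∀ F ∈ S, J E ≤ J F := by
  by_cases hfin : ∃ E ∈ S, J E ≠ ∞
  · obtain ⟨E₀, hE₀, hJE₀⟩ := hfin
    obtain ⟨u, hanti, hlim, hu⟩ := exists_seq_tendsto_sInf (hS.image J) (OrderBot.bddBelow _)
    choose E hES hJE using hu
    have hinf : sInf (J '' S) < ∞ := (sInf_le (Set.mem_image_of_mem J hE₀)).trans_lt hJE₀.lt_top
    obtain ⟨N, hN⟩ := (hlim.eventually (gt_mem_nhds hinf)).exists
    obtain ⟨F, hFS, s, hs, hF⟩ := hJ (fun j => E (N + j)) (fun j => hES _) (u N) hN.ne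
      fun j => (hJE _).trans_le (hanti (Nat.le_add_right N j))
    have hsub : Tendsto (fun j => N + s j) atTop atTop :=
      tendsto_atTop_mono (fun j => Nat.le_add_left (s j) N) hs.tendsto_atTop
    simp only [hJE] at hF
    exact ⟨F, hFS, fun G hG => (hF.trans_eq (hlim.comp hsub).liminf_eq).trans
      (sInf_le (Set.mem_image_of_mem J hG))⟩
  · push Not at hfin
    obtain ⟨E, hE⟩ := hS
    exact ⟨E, hE, fun F hF => (hfin F hF).symm ▸ le_top⟩

section Euclidean

variable {n : ℕ}

lemma exists_measurableSet_volume_eq_ofReal (hn : 1 ≤ n) {m : ℝ} (hm : 0 < m) :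
    ∃ E : Set (Eu n), MeasurableSet E ∧ volume E = ENNReal.ofReal m := by
  set ω := volume.real (ball (0 : Eu n) 1)
  have hω : 0 < ω := measureReal_ball_pos 0 one_pos
  have hr : 0 < (m / ω) ^ (n : ℝ)⁻¹ := by positivity
  refine ⟨ball 0 ((m / ω) ^ (n : ℝ)⁻¹), measurableSet_ball, ?_⟩
  rw [volume_ball_eq_ofReal_pow_mul 0 hr, Real.rpow_inv_natCast_pow (by positivity) (by omega),
    ← ofReal_measureReal measure_ball_lt_top.ne, ← ENNReal.ofReal_mul (by positivity),
    div_mul_cancel₀ m hω.ne']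

variable {E : ℕ → Set (Eu n)} {F : Set (Eu n)}

lemma perimeter_le_liminf (hn : 1 ≤ n) (hE : ∀ j, MeasurableSet (E j)) (hF : MeasurableSet F)
    (hEF : ∀ R : ℝ, Tendsto (fun j => volume (closedBall 0 R ∩ E j ∆ F)) atTop (𝓝 0)) :
    perimeter F ≤ liminf (fun j => perimeter (E j)) atTop := by
  refine le_of_forall_gt_imp_ge_of_dense fun P hP => ?_
  rcases eq_or_ne P ∞ with rfl | hPtop
  · exact le_top
  obtain ⟨s, hs, hsP⟩ := extraction_of_frequently_atTop (frequently_lt_of_liminf_lt (h := hP))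
  exact perimeter_le_of_tendsto hn (fun j => hE (s j)) hF (fun R => (hEF R).comp hs.tendsto_atTop)
    hPtop fun j => (hsP j).le

lemma exists_subseq_tendsto_of_perimeter_le (hE : ∀ j, MeasurableSet (E j)) {P : ℝ≥0∞}
    (hP : P ≠ ∞) (hEP : ∀ j, perimeter (E j) ≤ P) :
    ∃ (F : Set (Eu n)) (s : ℕ → ℕ), MeasurableSet F ∧ StrictMono s ∧
      (∀ᵐ x, ∀ᶠ j in atTop, x ∈ E (s j) ↔ x ∈ F) ∧
      ∀ R : ℝ, Tendsto (fun j => volume (closedBall 0 R ∩ E (s j) ∆ F)) atTop (𝓝 0) := by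
  refine exists_subseq_tendsto_of_measure_shiftDiff_le hE fun R =>
    ⟨shadowConst n * P, mul_ne_top (shadowConst_lt_top n).ne hP, .of_forall fun j h _ => ?_⟩
  calc volume (closedBall 0 R ∩ shiftDiff (E j) h)
      ≤ shadowConst n * ENNReal.ofReal ‖h‖ *
          μH[(n : ℝ) - 1].restrict (essBoundary (E j)) (sweep (closedBall 0 R) h) :=
        dominatesIncrements_hausdorffMeasure (hE j) _ (isCompact_closedBall 0 R) h
    _ ≤ shadowConst n * ENNReal.ofReal ‖h‖ * P := by
        gcongr
        exact (measure_mono (Set.subset_univ _)).trans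
          (Measure.restrict_apply_univ _ |>.trans_le (hEP j))
    _ = shadowConst n * P * ENNReal.ofReal ‖h‖ := mul_right_comm _ _ _

lemma measurable_uncurry_ofReal_norm_sub_rpow (γ : ℝ) :
    Measurable (Function.uncurry fun x y : Eu n => ENNReal.ofReal (‖x - y‖ ^ γ)) :=
  ((measurable_fst.sub measurable_snd).norm.pow_const γ).ennreal_ofReal

lemma tendsto_ofReal_mul_norm_rpow_cocompact {β A : ℝ} (hβ : 0 < β) (hA : 0 < A) :
    Tendsto (fun x : Eu n => ENNReal.ofReal (A * ‖x‖ ^ β)) (cocompact (Eu n)) (𝓝 ∞) :=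
  ENNReal.tendsto_ofReal_nhds_top.2 <|
    ((tendsto_rpow_atTop hβ).comp tendsto_norm_cocompact_atTop).const_mul_atTop hA

end Euclidean

theorem statement0_general (n : ℕ) (hn : 1 ≤ n) {m : ℝ} (hm : 0 < m)
    {K : Eu n → Eu n → ℝ≥0∞} (hK : Measurable (Function.uncurry K)) {W : Eu n → ℝ≥0∞}
    (hW : Measurable W) (hWtop : Tendsto W (cocompact (Eu n)) (𝓝 ∞)) :
    ∃ E : Set (Eu n), MeasurableSet E ∧ volume E = ENNReal.ofReal m ∧
      ∀ F : Set (Eu n), MeasurableSet F → volume F = ENNReal.ofReal m →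
        perimeter E + (∫⁻ x in E, ∫⁻ y in E, K x y) + ∫⁻ x in E, W x ≤
          perimeter F + (∫⁻ x in F, ∫⁻ y in F, K x y) + ∫⁻ x in F, W x := by
  suffices h : ∃ E ∈ {E : Set (Eu n) | MeasurableSet E ∧ volume E = ENNReal.ofReal m},
      ∀ F ∈ {F : Set (Eu n) | MeasurableSet F ∧ volume F = ENNReal.ofReal m},
        perimeter E + (∫⁻ x in E, ∫⁻ y in E, K x y) + ∫⁻ x in E, W x ≤
          perimeter F + (∫⁻ x in F, ∫⁻ y in F, K x y) + ∫⁻ x in F, W x by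
    simpa only [Set.mem_ofPred_eq, and_imp, and_assoc] using h
  refine exists_forall_le_of_forall_le_liminf (exists_measurableSet_volume_eq_ofReal hn hm)
    fun E hE C hC hEC => ?_
  obtain ⟨F, s, hF, hs, hmem, hloc⟩ := exists_subseq_tendsto_of_perimeter_le (fun j => (hE j).1) hC
    fun j => (le_self_add.trans le_self_add).trans (hEC j)
  have hEs : ∀ j, MeasurableSet (E (s j)) := fun j => (hE (s j)).1
  have hFm : volume F = ENNReal.ofReal m := by
    refine le_antisymm ?_ ?_
    · simpa [(hE _).2] using
        setLIntegral_le_liminf_setLIntegral hEs hF hmem (measurable_const (a := 1))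
    · exact measure_le_of_tendsto_of_lintegral_le hW hWtop hloc (fun j => (hE (s j)).2.ge) hC
        fun j => le_add_self.trans (hEC (s j))
  refine ⟨F, ⟨hF, hFm⟩, s, hs, ?_⟩
  refine le_trans ?_ (liminf_add_liminf_le _ _)
  refine add_le_add (le_trans ?_ (liminf_add_liminf_le _ _))
    (setLIntegral_le_liminf_setLIntegral hEs hF hmem hW)
  exact add_le_add (perimeter_le_liminf hn hEs hF hloc)
    (setLIntegral_setLIntegral_le_liminf hEs hF hmem hK)

/-- The variational problem `inf {E_{α,β,A}(E) : |E| = m}` admits a minimizer for every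
mass `m > 0`. -/
theorem statement0 (n : ℕ) (hn : 1 ≤ n) (α β A m : ℝ)
    (hα0 : 0 < α) (hαn : α < n) (hβ : 0 < β) (hA : 0 < A) (hm : 0 < m) :
    ∃ E : Set (EuclideanSpace ℝ (Fin n)), IsMinimizer α β A m E := by
  exact statement0_general n hn hm (measurable_uncurry_ofReal_norm_sub_rpow (α - n))
    ((measurable_norm.pow_const β).const_mul A).ennreal_ofReal
    (tendsto_ofReal_mul_norm_rpow_cocompact hβ hA)
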